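/- arXiv:1102.5229 — 6 statements merged into one kernel-verified Lean document; each statement's English description precedes it below -/
import Mathlib

section
/- Let F be a graph with chromatic number χ(F) = r ≥ 3 and let c be a real number with 0 < c < (r−2)/(r−1). Then the limit as n → ∞ of log₂|Forb_n(F,c)| / C(n,2) exists and equals ((r−2)/(r−1))·H( c·(r−1)/(r−2) ), where C(n,2) = n(n−1)/2. -/
/-!
Write `k = r - 1`, `a = (k - 1) / k`, `p = c / a` and `N = C(n,2)`. The claim is that
`log |Forb_n(F,c)| / N` tends to `a · H(p)`, computed below with natural logarithms.

*Lower bound.* The Turán graph with `k` parts is `k`-colourable while `F` is not, so each of its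
subgraphs is `F`-free (`choose_le_card_forb`). It has `(a + o(1)) N` edges, so there are at least
`C((a + o(1)) N, ⌊c N⌋)` graphs in `Forb_n(F,c)`, and Stirling's estimate gives the exponent
(`exists_lower`).

*Upper bound.* By the regularity lemma and a greedy embedding of the `(k+1)`-colourable graph `F`
(`exists_partial_embedding`), the reduced graph of an `F`-free graph `G` has no `(k+1)`-clique.
Hence all but `O(d n²)` edges of `G` lie in one of `exp (O(n))` blow-ups, each of which is
`K_{k+1}`-free (`exists_container`) and so has at most `a n² / 2` edges by Turán's theorem. The
graphs with `⌊c N⌋` edges covered by one blow-up are counted by giving each of them its probability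
under independent edges of density `p` inside the blow-up and density `d` outside
(`card_le_exp_of_split`); this probability is at least `exp (-(a H(p) + g(d) + o(1)) N)` with
`g(d) → 0` as `d → 0` (`log_card_forb_le`).
-/

open Finset SimpleGraph
open scoped Classical

/-- Binary entropy with base-2 logarithm. -/
noncomputable def binEnt (x : ℝ) : ℝ := -(x * Real.logb 2 x) - (1 - x) * Real.logb 2 (1 - x)

/-- The function `h(c)` from the paper. -/
noncomputable def hfun (c : ℝ) : ℝ :=
  if c < 1/4 then binEnt (2*c) / 2
  else if c ≤ 3/4 then 1/2
  else binEnt (2*c - 1) / 2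
/-- Number of edges of a graph. -/
noncomputable def edgeCount {V : Type} (G : SimpleGraph V) : ℕ := Nat.card G.edgeSet

/-- `G` contains a (not necessarily induced) subgraph isomorphic to `F`. -/
def ContainsCopy {α V : Type} (F : SimpleGraph α) (G : SimpleGraph V) : Prop :=
  ∃ f : α ↪ V, ∀ a b, F.Adj a b → G.Adj (f a) (f b)

/-- `Forb_n(F,c)`: the graphs on vertex set `{1,…,n}` with exactly `⌊c·C(n,2)⌋` edges containing
no subgraph isomorphic to `F`. -/
noncomputable def ForbSub {α : Type} (F : SimpleGraph α) (n : ℕ) (c : ℝ) :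
    Finset (SimpleGraph (Fin n)) :=
  univ.filter fun G => ¬ ContainsCopy F G ∧ edgeCount G = ⌊c * (n.choose 2 : ℝ)⌋₊

/-! ### Embedding `F` into a family of dense pairs -/

/-- Greedy embedding. Suppose that for every edge `ab` of `F` any two not too small subsets of
`W a`, `W b` span density at least `d`. Then the vertices of `S` can be embedded one at a time, with
`A a` the set of candidates still available for `a`. Placing `v` at `x` shrinks the candidate set of
each remaining vertex to no less than a `d`-fraction, provided that `x` avoids the few vertices of `A v`
having low degree into the candidate set of some neighbour of `v`; the hypothesis on `#(A a)` leaves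
room for `#S` such shrinkings. -/
theorem exists_partial_embedding {α V : Type} [Fintype α] (F : SimpleGraph α)
    (G : SimpleGraph V) (W : α → Finset V) (d ε : ℝ) (hd0 : 0 < d) (hd : d ≤ 1 / 2) (hε : 0 < ε)
    (hW : ∀ a, 2 ≤ (Fintype.card α + 1) * ε * #(W a))
    (hreg : ∀ a b, F.Adj a b → ∀ X ⊆ W a, ∀ Y ⊆ W b, #(W a) * ε ≤ #X → #(W b) * ε ≤ #Y →
      d * (#X * #Y) ≤ #(G.interedges X Y))
    (S : Finset α) : ∀ A : α → Finset V, (∀ a ∈ S, A a ⊆ W a) →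
      (∀ a ∈ S, (Fintype.card α + 1) * ε * #(W a) ≤ d ^ #S * #(A a)) →
      ∃ g : α → V, (∀ a ∈ S, g a ∈ A a) ∧ Set.InjOn g S ∧
        ∀ a ∈ S, ∀ b ∈ S, F.Adj a b → G.Adj (g a) (g b) := by
  have hWpos : ∀ a, 0 < (#(W a) : ℝ) := by
    intro a
    by_contra h
    have h0 : (#(W a) : ℝ) = 0 := le_antisymm (not_lt.1 h) (by positivity)
    have := hW a
    rw [h0] at this
    norm_num at this
  induction S using Finset.induction_on with
  | empty =>
    intro A _ _
    have hne : ∀ a, (W a).Nonempty := fun a => by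
      have := hWpos a
      rw [← Finset.card_pos]
      exact_mod_cast this
    exact ⟨fun a => (hne a).choose, by simp, by simp, by simp⟩
  | insert v S hv ih =>
    intro A hAW hA
    have hcard : #(insert v S) = #S + 1 := Finset.card_insert_of_notMem hv
    -- each candidate set is large in absolute terms
    have hbig : ∀ a ∈ insert v S, (Fintype.card α + 1) * ε * #(W a) ≤ #(A a) := by
      intro a ha
      refine (hA a ha).trans ?_
      have : d ^ #(insert v S) ≤ 1 := pow_le_one₀ hd0.le (by linarith)
      nlinarith [(Nat.cast_nonneg (#(A a)) : (0 : ℝ) ≤ _)]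
    have hbig' : ∀ a ∈ insert v S, #(W a) * ε ≤ #(A a) := by
      intro a ha
      refine le_trans ?_ (hbig a ha)
      have : 0 ≤ (Fintype.card α : ℝ) * ε * #(W a) := by positivity
      linarith
    let Bad : α → Finset V := fun b =>
      (A v).filter fun x => (#((A b).filter fun y => G.Adj x y) : ℝ) < d * #(A b)
    have hBad : ∀ b ∈ S, F.Adj v b → (#(Bad b) : ℝ) ≤ ε * #(W v) := by
      intro b hb hvb
      by_contra hcon
      push Not at hcon
      have hpos : (0 : ℝ) < #(Bad b) := lt_trans (mul_pos hε (hWpos v)) hcon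
      have hsub : Bad b ⊆ W v := (Finset.filter_subset _ _).trans (hAW v (mem_insert_self _ _))
      have h1 := hreg v b hvb (Bad b) hsub (A b) (hAW b (mem_insert_of_mem hb))
        (by linarith) (hbig' b (mem_insert_of_mem hb))
      have h2 : #(G.interedges (Bad b) (A b))
          = ∑ x ∈ Bad b, #((A b).filter fun y => G.Adj x y) := by
        rw [SimpleGraph.interedges_def, Finset.card_filter, Finset.sum_product]
        simp_rw [Finset.card_filter]
      have h3 : (#(G.interedges (Bad b) (A b)) : ℝ) < ∑ x ∈ Bad b, d * (#(A b) : ℝ) := by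
        rw [h2]
        push_cast
        refine Finset.sum_lt_sum_of_nonempty ?_ ?_
        · rw [← Finset.card_pos]; exact_mod_cast hpos
        · intro x hx
          exact (Finset.mem_filter.1 hx).2
      rw [Finset.sum_const, nsmul_eq_mul] at h3
      nlinarith
    obtain ⟨x, hxA, hx⟩ : ∃ x ∈ A v, x ∉ (S.filter fun b => F.Adj v b).biUnion Bad := by
      by_contra hcon
      push Not at hcon
      have h1 : #(A v) ≤ #((S.filter fun b => F.Adj v b).biUnion Bad) := card_le_card hcon
      have h2 : (#((S.filter fun b => F.Adj v b).biUnion Bad) : ℝ)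
          ≤ ∑ b ∈ S.filter fun b => F.Adj v b, (#(Bad b) : ℝ) := by
        exact_mod_cast Finset.card_biUnion_le
      have h3 : ∑ b ∈ S.filter fun b => F.Adj v b, (#(Bad b) : ℝ)
          ≤ #(S.filter fun b => F.Adj v b) * (ε * #(W v)) := by
        rw [← nsmul_eq_mul]
        refine Finset.sum_le_card_nsmul _ _ _ ?_
        intro b hb
        rw [Finset.mem_filter] at hb
        exact hBad b hb.1 hb.2
      have h4 : (#(S.filter fun b => F.Adj v b) : ℝ) ≤ Fintype.card α := by
        exact_mod_cast Finset.card_le_univ _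
      have h5 := hbig v (mem_insert_self _ _)
      have h6 : (#(A v) : ℝ) ≤ #((S.filter fun b => F.Adj v b).biUnion Bad) := by
        exact_mod_cast h1
      have h7 := mul_pos hε (hWpos v)
      nlinarith
    -- candidates for the remaining vertices after placing `v` at `x`
    let A' : α → Finset V := fun b =>
      if F.Adj v b then (A b).filter fun y => G.Adj x y else (A b).erase x
    have hA'A : ∀ b, A' b ⊆ A b := by
      intro b
      by_cases h : F.Adj v b
      · simp only [A', h, if_true]; exact filter_subset _ _
      · simp only [A', h, if_false]; exact erase_subset _ _
    have hxA' : ∀ b, x ∉ A' b := by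
      intro b
      by_cases h : F.Adj v b <;> simp [A', h]
    have hA'card : ∀ b ∈ S, d * #(A b) ≤ #(A' b) := by
      intro b hb
      by_cases h : F.Adj v b
      · simp only [A', h, if_true]
        by_contra hcon
        push Not at hcon
        exact hx (mem_biUnion.2 ⟨b, mem_filter.2 ⟨hb, h⟩, mem_filter.2 ⟨hxA, hcon⟩⟩)
      · simp only [A', h, if_false]
        have h1 : (2 : ℝ) ≤ #(A b) := (hW b).trans (hbig b (mem_insert_of_mem hb))
        have h2 : (#(A b) : ℝ) - 1 ≤ #((A b).erase x) := by
          have := Finset.pred_card_le_card_erase (s := A b) (a := x)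
          have h3 : #(A b) ≤ #((A b).erase x) + 1 := by omega
          have : (#(A b) : ℝ) ≤ #((A b).erase x) + 1 := by exact_mod_cast h3
          linarith
        nlinarith
    obtain ⟨g, hg1, hg2, hg3⟩ := ih A'
      (fun a ha => (hA'A a).trans (hAW a (mem_insert_of_mem ha)))
      (fun a ha => by
        refine (hA a (mem_insert_of_mem ha)).trans ?_
        rw [hcard, pow_succ, mul_assoc]
        exact mul_le_mul_of_nonneg_left (hA'card a ha) (by positivity))
    have hne : ∀ a ∈ S, a ≠ v := fun a ha h => hv (h ▸ ha)
    have hadj : ∀ b ∈ S, F.Adj v b → G.Adj x (g b) := by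
      intro b hb h
      have := hg1 b hb
      simp only [A', h, if_true, mem_filter] at this
      exact this.2
    refine ⟨Function.update g v x, ?_, ?_, ?_⟩
    · intro a ha
      rcases mem_insert.1 ha with rfl | ha
      · simpa using hxA
      · rw [Function.update_of_ne (hne a ha)]
        exact hA'A a (hg1 a ha)
    · intro a ha b hb hab
      rw [mem_coe, mem_insert] at ha hb
      rcases ha with rfl | ha <;> rcases hb with rfl | hb
      · rfl
      · rw [Function.update_self, Function.update_of_ne (hne b hb)] at hab
        exact absurd (hab ▸ hg1 b hb) (hxA' b)
      · rw [Function.update_self, Function.update_of_ne (hne a ha)] at hab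
        exact absurd (hab ▸ hg1 a ha) (hxA' a)
      · rw [Function.update_of_ne (hne a ha), Function.update_of_ne (hne b hb)] at hab
        exact hg2 ha hb hab
    · intro a ha b hb hab
      rw [mem_insert] at ha hb
      rcases ha with rfl | ha <;> rcases hb with rfl | hb
      · exact absurd hab (F.irrefl)
      · rw [Function.update_self, Function.update_of_ne (hne b hb)]
        exact hadj b hb hab
      · rw [Function.update_self, Function.update_of_ne (hne a ha)]
        exact (hadj a ha hab.symm).symm
      · rw [Function.update_of_ne (hne a ha), Function.update_of_ne (hne b hb)]
        exact hg3 a ha b hb hab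

/-! ### Containers from the regularity lemma -/

/-- Every `F`-free graph `G` on `n` vertices has all but `7 d n²` of its edges inside a
`K_{k+1}`-free graph that is a blow-up of a graph on a bounded number `M` of vertices: the reduced
graph of a regular partition, whose edges are the uniform pairs of density at least `2 d`. As
`(p, R)` takes at most `Mⁿ · 2^{M²}` values, there are few such blow-ups. -/
theorem exists_container {α : Type} [Fintype α] (F : SimpleGraph α) (k : ℕ)
    (hF : F.Colorable (k + 1)) (d : ℝ) (hd0 : 0 < d) (hd : d ≤ 1 / 2) :
    ∃ M n₀ : ℕ, 0 < M ∧ ∀ n, n₀ ≤ n → ∀ G : SimpleGraph (Fin n), ¬ ContainsCopy F G →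
      ∃ (p : Fin n → Fin M) (R : SimpleGraph (Fin M)), (R.comap p).CliqueFree (k + 1) ∧
        (#(G.edgeFinset \ (R.comap p).edgeFinset) : ℝ) ≤ 7 * d * (n : ℝ) ^ 2 := by
  set f := Fintype.card α with hf
  -- small enough for `#α` successive shrinkings by `d` to leave more than `f * ε * #(W a)` vertices
  set ε : ℝ := d ^ (f + 1) / (f + 1) with hεdef
  have hε0 : 0 < ε := by positivity
  have hfε : (f + 1) * ε = d ^ (f + 1) := by rw [hεdef]; field_simp
  have hpow : d ^ f ≤ 1 := pow_le_one₀ hd0.le (by linarith)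
  have hεd : ε ≤ d := by
    have h1 : d ^ (f + 1) ≤ d := by rw [pow_succ]; nlinarith
    have h2 : (0 : ℝ) ≤ f * ε := by positivity
    linarith
  set l := ⌈4 / d⌉₊ with hl
  set M := SzemerediRegularity.bound ε l with hM
  have hM0 : 0 < M := SzemerediRegularity.bound_pos _ _
  -- lower bound for the size of the parts, giving `2 ≤ (f + 1) * ε * #(W a)`
  set K := ⌈2 / d ^ (f + 1)⌉₊ with hK
  refine ⟨M, max (max l 1) (M * K), hM0, ?_⟩
  intro n hn G hG
  have hln : l ≤ n := le_trans (le_trans (le_max_left _ _) (le_max_left _ _)) hn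
  have hn1 : 1 ≤ n := le_trans (le_trans (le_max_right _ _) (le_max_left _ _)) hn
  have hnK : M * K ≤ n := le_trans (le_max_right _ _) hn
  have : Nonempty (Fin n) := ⟨⟨0, hn1⟩⟩
  obtain ⟨P, hP1, hP2, hP3, hP4⟩ := szemeredi_regularity G hε0 (l := l) (by simpa using hln)
  have hsize : ∀ s ∈ P.parts, (K : ℝ) ≤ #s := by
    intro s hs
    have h1 := hP1.average_le_card_part hs
    rw [Finset.card_univ, Fintype.card_fin] at h1
    have hpos : 0 < #P.parts := card_pos.2 ⟨s, hs⟩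
    have h2 : K ≤ n / #P.parts := by
      rw [Nat.le_div_iff_mul_le hpos]
      calc K * #P.parts ≤ K * M := Nat.mul_le_mul_left _ hP3
        _ ≤ n := by rw [mul_comm]; exact hnK
    exact_mod_cast h2.trans h1
  obtain ⟨e⟩ : Nonempty (P.parts ↪ Fin M) :=
    Function.Embedding.nonempty_of_card_le (by simpa using hP3)
  let Q : SimpleGraph P.parts := SimpleGraph.fromRel fun U V =>
    G.IsUniform ε U.1 V.1 ∧ 2 * d ≤ G.edgeDensity U.1 V.1
  have hQ : ∀ U V : P.parts, Q.Adj U V ↔ U.1 ≠ V.1 ∧ G.IsUniform ε U.1 V.1 ∧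
      2 * d ≤ G.edgeDensity U.1 V.1 := by
    intro U V
    simp only [Q, SimpleGraph.fromRel_adj]
    rw [G.isUniform_comm (s := V.1), G.edgeDensity_comm V.1, or_self, ne_eq, ne_eq, Subtype.ext_iff]
  let pt : Fin n → P.parts := fun x => ⟨P.part x, P.part_mem.2 (mem_univ x)⟩
  let p : Fin n → Fin M := fun x => e (pt x)
  have hH : ∀ x y, ((Q.map e).comap p).Adj x y ↔ P.part x ≠ P.part y ∧
      G.IsUniform ε (P.part x) (P.part y) ∧ 2 * d ≤ G.edgeDensity (P.part x) (P.part y) := by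
    intro x y
    rw [SimpleGraph.comap_adj]
    simp only [p, SimpleGraph.map_adj_apply]
    exact hQ _ _
  refine ⟨p, Q.map e, ?_, ?_⟩
  · -- a `(k+1)`-clique of the reduced graph, together with a `(k+1)`-colouring of `F`, would
    -- yield a copy of `F`
    by_contra hcl
    rw [SimpleGraph.not_cliqueFree_iff_top_isContained] at hcl
    obtain ⟨t⟩ := hcl
    obtain ⟨C⟩ := hF
    apply hG
    let W : α → Finset (Fin n) := fun a => P.part (t (C a))
    have hWK : ∀ a, (K : ℝ) ≤ #(W a) := fun a => hsize _ (P.part_mem.2 (mem_univ _))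
    have hW : ∀ a, 2 ≤ (Fintype.card α + 1) * ε * #(W a) := by
      intro a
      rw [← hf, hfε]
      have h1 : 2 / d ^ (f + 1) ≤ #(W a) := (Nat.le_ceil _).trans (hWK a)
      rwa [div_le_iff₀' (by positivity)] at h1
    have hreg : ∀ a b, F.Adj a b → ∀ X ⊆ W a, ∀ Y ⊆ W b, #(W a) * ε ≤ #X → #(W b) * ε ≤ #Y →
        d * (#X * #Y) ≤ #(G.interedges X Y) := by
      intro a b hab X hX Y hY hXc hYc
      have hadj : ((Q.map e).comap p).Adj (t (C a)) (t (C b)) :=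
        t.toHom.map_adj (by simpa using C.valid hab)
      obtain ⟨-, hu, hden⟩ := (hH _ _).1 hadj
      have h1 := hu hX hY hXc hYc
      rw [abs_lt] at h1
      have h2 : d ≤ (G.edgeDensity X Y : ℝ) := by
        have := h1.1
        linarith
      rw [← SimpleGraph.card_interedges_div_card] at h2
      push_cast at h2
      have hpos : ∀ a (X : Finset (Fin n)), #(W a) * ε ≤ #X → (0 : ℝ) < #X := by
        intro a X h
        have h3 := hW a
        have h4 : (0 : ℝ) < #(W a) := by
          by_contra hc
          have h0 : (#(W a) : ℝ) = 0 := le_antisymm (not_lt.1 hc) (by positivity)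
          rw [h0] at h3
          norm_num at h3
        exact lt_of_lt_of_le (mul_pos h4 hε0) h
      have hXY := mul_pos (hpos a X hXc) (hpos b Y hYc)
      rwa [le_div_iff₀ hXY] at h2
    obtain ⟨g, -, hg2, hg3⟩ := exists_partial_embedding F G W d ε hd0 hd hε0 hW hreg univ W
      (fun _ _ => Subset.rfl) (fun a _ => by
        rw [← hf, hfε, Finset.card_univ, ← hf, pow_succ]
        have : 0 ≤ d ^ f * (#(W a) : ℝ) := by positivity
        nlinarith)
    refine ⟨⟨g, ?_⟩, fun a b hab => hg3 a (mem_univ _) b (mem_univ _) hab⟩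
    intro a b hab
    exact hg2 (by simp) (by simp) hab
  · -- edges outside the blow-up lie in irregular pairs, inside parts, or in sparse pairs
    set H := (Q.map e).comap p with hHdef
    have h2 : 2 * #(G.edgeFinset \ H.edgeFinset)
        = #(univ.filter fun xy : Fin n × Fin n => G.Adj xy.1 xy.2 ∧ ¬ H.Adj xy.1 xy.2) := by
      have h := SimpleGraph.two_mul_card_edgeFinset (G := G \ H)
      simp only [SimpleGraph.sdiff_adj] at h
      rw [← SimpleGraph.edgeFinset_sdiff]
      convert h
    have hsub : (univ.filter fun xy : Fin n × Fin n => G.Adj xy.1 xy.2 ∧ ¬ H.Adj xy.1 xy.2) ⊆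
        ((P.nonUniforms G ε).biUnion fun UV => UV.1 ×ˢ UV.2) ∪ P.parts.biUnion offDiag ∪
        ((P.sparsePairs G (2 * d)).biUnion fun UV => G.interedges UV.1 UV.2) := by
      rintro ⟨x, y⟩ hxy
      rw [mem_filter] at hxy
      obtain ⟨-, hG', hH'⟩ := hxy
      dsimp only at hG' hH'
      have hx := P.mem_part (mem_univ x)
      have hy := P.mem_part (mem_univ y)
      have hxP : P.part x ∈ P.parts := P.part_mem.2 (mem_univ x)
      have hyP : P.part y ∈ P.parts := P.part_mem.2 (mem_univ y)
      rw [mem_union, mem_union, mem_biUnion, mem_biUnion, mem_biUnion]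
      by_cases h1 : P.part x = P.part y
      · left; right
        refine ⟨P.part x, hxP, mem_offDiag.2 ⟨hx, h1 ▸ hy, hG'.ne⟩⟩
      by_cases h3 : G.IsUniform ε (P.part x) (P.part y)
      · right
        refine ⟨(P.part x, P.part y), ?_, ?_⟩
        · rw [Finpartition.mk_mem_sparsePairs]
          refine ⟨hxP, hyP, h1, ?_⟩
          by_contra hc
          exact hH' ((hH x y).2 ⟨h1, h3, not_lt.1 hc⟩)
        · rw [SimpleGraph.mem_interedges_iff]
          exact ⟨hx, hy, hG'⟩
      · left; left
        exact ⟨(P.part x, P.part y), (Finpartition.mk_mem_nonUniforms ..).2 ⟨hxP, hyP, h1, h3⟩,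
          mem_product.2 ⟨hx, hy⟩⟩
    have hc1 : (#((P.nonUniforms G ε).biUnion fun UV => UV.1 ×ˢ UV.2) : ℝ)
        < 4 * ε * #(univ : Finset (Fin n)) ^ 2 :=
      hP1.sum_nonUniforms_lt univ_nonempty hε0 hP4
    have hc2 := hP1.card_biUnion_offDiag_le (𝕜 := ℝ) hd0
      ((Nat.le_ceil (4 / d)).trans (by exact_mod_cast hP2))
    have hc3 : (#((P.sparsePairs G (2 * d)).biUnion fun UV => G.interedges UV.1 UV.2) : ℝ)
        ≤ 4 * (2 * d) * #(univ : Finset (Fin n)) ^ 2 :=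
      hP1.card_interedges_sparsePairs_le (G := G) (ε := 2 * d) (by positivity)
    have hc4 : (#(univ.filter fun xy : Fin n × Fin n => G.Adj xy.1 xy.2 ∧ ¬ H.Adj xy.1 xy.2) : ℝ)
        ≤ #((P.nonUniforms G ε).biUnion fun UV => UV.1 ×ˢ UV.2) + #(P.parts.biUnion offDiag) +
        #((P.sparsePairs G (2 * d)).biUnion fun UV => G.interedges UV.1 UV.2) := by
      have := (card_le_card hsub).trans
        ((card_union_le _ _).trans (Nat.add_le_add_right (card_union_le _ _) _))
      exact_mod_cast this
    rw [Finset.card_univ, Fintype.card_fin] at hc1 hc2 hc3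
    have h5 : (2 : ℝ) * #(G.edgeFinset \ H.edgeFinset)
        = #(univ.filter fun xy : Fin n × Fin n => G.Adj xy.1 xy.2 ∧ ¬ H.Adj xy.1 xy.2) := by
      exact_mod_cast h2
    have h6 : (0 : ℝ) ≤ (n : ℝ) ^ 2 := by positivity
    have h7 := mul_le_mul_of_nonneg_right hεd h6
    have h8 : 0 ≤ d * (n : ℝ) ^ 2 := by positivity
    have h9 : (#(G.edgeFinset \ H.edgeFinset) : ℝ) ≤ 7 * d * (n : ℝ) ^ 2 := by linarith
    convert h9

/-! ### The upper bound -/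

/-- If each member of a family of subsets of `U` has probability at least `exp (-B)` as a `q`-random
subset of `U`, the family has at most `exp B` members. -/
theorem card_le_exp_of_weight {ι : Type} (U : Finset ι) (𝓕 : Finset (Finset ι)) (q B : ℝ)
    (hq0 : 0 < q) (hq1 : q < 1)
    (h : ∀ S ∈ 𝓕, S ⊆ U ∧ #S * -Real.log q + ((#U : ℝ) - #S) * -Real.log (1 - q) ≤ B) :
    (#𝓕 : ℝ) ≤ Real.exp B := by
  have hq1' : 0 < 1 - q := by linarith
  have h1 : ∑ S ∈ 𝓕, Real.exp (-B) ≤ ∑ S ∈ 𝓕, q ^ #S * (1 - q) ^ (#U - #S) := by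
    refine Finset.sum_le_sum fun S hS => ?_
    obtain ⟨hSU, hB⟩ := h S hS
    have hle : #S ≤ #U := card_le_card hSU
    calc Real.exp (-B) ≤ Real.exp (#S * Real.log q + ((#U - #S : ℕ) : ℝ) * Real.log (1 - q)) := by
          rw [Nat.cast_sub hle]
          exact Real.exp_le_exp.2 (by linarith)
      _ = q ^ #S * (1 - q) ^ (#U - #S) := by
          rw [Real.exp_add, Real.exp_nat_mul, Real.exp_nat_mul, Real.exp_log hq0,
            Real.exp_log hq1']
  have h2 : ∑ S ∈ 𝓕, q ^ #S * (1 - q) ^ (#U - #S)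
      ≤ ∑ S ∈ U.powerset, q ^ #S * (1 - q) ^ (#U - #S) := by
    refine Finset.sum_le_sum_of_subset_of_nonneg ?_ ?_
    · intro S hS
      exact mem_powerset.2 (h S hS).1
    · intros; positivity
  rw [Finset.sum_pow_mul_eq_add_pow, add_sub_cancel, one_pow] at h2
  rw [Finset.sum_const, nsmul_eq_mul] at h1
  have h3 : (#𝓕 : ℝ) * Real.exp (-B) ≤ 1 := h1.trans h2
  rwa [Real.exp_neg, ← div_eq_mul_inv, div_le_one (Real.exp_pos _)] at h3

/-- Two-part version of `card_le_exp_of_weight`, with a `p`-random set inside `T` and a `q`-random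
set outside `T`. -/
theorem card_le_exp_of_split {ι : Type} [DecidableEq ι] (T U : Finset ι) (𝓕 : Finset (Finset ι))
    (p q B₁ B₂ : ℝ) (hp0 : 0 < p) (hp1 : p < 1) (hq0 : 0 < q) (hq1 : q < 1)
    (h : ∀ S ∈ 𝓕, S ⊆ U ∧
      #(S ∩ T) * -Real.log p + ((#T : ℝ) - #(S ∩ T)) * -Real.log (1 - p) ≤ B₁ ∧
      #(S \ T) * -Real.log q + ((#(U \ T) : ℝ) - #(S \ T)) * -Real.log (1 - q) ≤ B₂) :
    (#𝓕 : ℝ) ≤ Real.exp (B₁ + B₂) := by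
  have h1 : (#(𝓕.image fun S => S ∩ T) : ℝ) ≤ Real.exp B₁ := by
    refine card_le_exp_of_weight T _ p B₁ hp0 hp1 ?_
    intro S hS
    obtain ⟨S', hS', rfl⟩ := mem_image.1 hS
    exact ⟨inter_subset_right, (h S' hS').2.1⟩
  have h2 : (#(𝓕.image fun S => S \ T) : ℝ) ≤ Real.exp B₂ := by
    refine card_le_exp_of_weight (U \ T) _ q B₂ hq0 hq1 ?_
    intro S hS
    obtain ⟨S', hS', rfl⟩ := mem_image.1 hS
    exact ⟨sdiff_subset_sdiff (h S' hS').1 Subset.rfl, (h S' hS').2.2⟩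
  have h3 : #𝓕 ≤ #((𝓕.image fun S => S ∩ T) ×ˢ (𝓕.image fun S => S \ T)) := by
    refine Finset.card_le_card_of_injOn (fun S => (S ∩ T, S \ T)) ?_ ?_
    · intro S hS
      exact mem_product.2 ⟨mem_image_of_mem _ hS, mem_image_of_mem _ hS⟩
    · intro S _ S' _ hSS
      simp only [Prod.mk.injEq] at hSS
      rw [← sdiff_union_inter S T, ← sdiff_union_inter S' T, hSS.1, hSS.2]
  rw [card_product] at h3
  rw [Real.exp_add]
  calc (#𝓕 : ℝ) ≤ #(𝓕.image fun S => S ∩ T) * #(𝓕.image fun S => S \ T) := by exact_mod_cast h3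
    _ ≤ _ := mul_le_mul h1 h2 (by positivity) (Real.exp_pos _).le

theorem edgeCount_eq {n : ℕ} (G : SimpleGraph (Fin n)) : edgeCount G = #G.edgeFinset := by
  rw [edgeCount, Nat.card_eq_fintype_card, SimpleGraph.edgeFinset_card]

/-- Turán's theorem with a real bound. -/
theorem card_edgeFinset_le_of_cliqueFree {n k : ℕ} (hk : 0 < k) (H : SimpleGraph (Fin n))
    (hH : H.CliqueFree (k + 1)) :
    (#H.edgeFinset : ℝ) ≤ ((k : ℝ) - 1) / k * ((n : ℝ) ^ 2 / 2) := by
  have h1 : #H.edgeFinset ≤ #(SimpleGraph.turanGraph n k).edgeFinset := by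
    have := hH.card_edgeFinset_le
    simp only [Fintype.card_fin] at this
    rw [← SimpleGraph.card_edgeFinset_turanGraph] at this
    convert this
  have h2 := SimpleGraph.mul_card_edgeFinset_turanGraph_le (n := n) (r := k)
  have h3 : 2 * k * #H.edgeFinset ≤ (k - 1) * n ^ 2 := by
    refine le_trans (Nat.mul_le_mul_left _ h1) ?_
    convert h2
  have h4 : 2 * (k : ℝ) * #H.edgeFinset ≤ ((k : ℝ) - 1) * n ^ 2 := by
    have : ((2 * k * #H.edgeFinset : ℕ) : ℝ) ≤ (((k - 1) * n ^ 2 : ℕ) : ℝ) := by exact_mod_cast h3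
    push_cast [Nat.cast_sub (Nat.one_le_of_lt hk)] at this
    exact this
  have hk' : (0 : ℝ) < k := by exact_mod_cast hk
  rw [div_mul_div_comm, le_div_iff₀ (by positivity)]
  linarith

/-- The upper bound, up to an error which is linear in `n` and a relative error vanishing as
`d → 0`. For each container `T`, the members of `Forb_n(F,c)` it covers are counted by comparison with
the random graph of density `p` on `T` and `d` off `T`. -/
theorem log_card_forb_le {α : Type} [Fintype α] (F : SimpleGraph α) (k : ℕ) (hk : 2 ≤ k)
    (hF : F.Colorable (k + 1)) (c p d : ℝ) (hc0 : 0 < c) (hp0 : 0 < p) (hp1 : p < 1)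
    (hd0 : 0 < d) (hd : d ≤ 1 / 2) :
    ∃ K₁ K₂ : ℝ, ∀ᶠ n : ℕ in Filter.atTop, 0 < #(ForbSub F n c) →
      Real.log #(ForbSub F n c) ≤
        (c * -Real.log p + ((((k : ℝ) - 1) / k) - c) * -Real.log (1 - p) +
          (28 * d * -Real.log (1 - p) - 28 * (d * Real.log d) - Real.log (1 - d))) * n.choose 2
        + K₁ * n + K₂ := by
  obtain ⟨M, n₀, hM, hcont⟩ := exists_container F k hF d hd0 hd
  set a : ℝ := ((k : ℝ) - 1) / k with ha
  have hlp : 0 ≤ -Real.log p := by have := Real.log_neg hp0 hp1; linarith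
  have hlp' : 0 ≤ -Real.log (1 - p) := by
    have := Real.log_neg (x := 1 - p) (by linarith) (by linarith); linarith
  have hlq : 0 ≤ -Real.log d := by have := Real.log_neg hd0 (by linarith); linarith
  have hlq' : 0 ≤ -Real.log (1 - d) := by
    have := Real.log_neg (x := 1 - d) (by linarith) (by linarith); linarith
  refine ⟨Real.log M + a / 2 * -Real.log (1 - p),
    Real.log (Fintype.card (SimpleGraph (Fin M))) + -Real.log (1 - p), ?_⟩
  filter_upwards [Filter.eventually_ge_atTop n₀, Filter.eventually_ge_atTop 2] with n hn hn2 hpos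
  set N : ℝ := (n.choose 2 : ℝ) with hN
  have hNn : N = n * (n - 1) / 2 := by rw [hN, Nat.cast_choose_two]
  have hn2' : (2 : ℝ) ≤ n := by exact_mod_cast hn2
  have hn4 : (n : ℝ) ^ 2 ≤ 4 * N := by rw [hNn]; nlinarith
  have hN0 : 0 ≤ N := by positivity
  set m := ⌊c * N⌋₊ with hm
  have hm1 : (m : ℝ) ≤ c * N := Nat.floor_le (by positivity)
  have hm2 : c * N < m + 1 := Nat.lt_floor_add_one _
  set B₁ : ℝ := c * N * -Real.log p +
    (a * ((n : ℝ) ^ 2 / 2) - c * N + 1 + 28 * d * N) * -Real.log (1 - p) with hB₁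
  set B₂ : ℝ := 28 * d * N * -Real.log d + N * -Real.log (1 - d) with hB₂
  let 𝓖 : (Fin n → Fin M) × SimpleGraph (Fin M) → Finset (SimpleGraph (Fin n)) := fun pR =>
    (ForbSub F n c).filter fun G => (pR.2.comap pR.1).CliqueFree (k + 1) ∧
        (#(G.edgeFinset \ (pR.2.comap pR.1).edgeFinset) : ℝ) ≤ 7 * d * (n : ℝ) ^ 2
  have h𝓖 : ∀ pR, (#(𝓖 pR) : ℝ) ≤ Real.exp (B₁ + B₂) := by
    intro pR
    have himg : #((𝓖 pR).image fun G => G.edgeFinset) = #(𝓖 pR) := by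
      refine Finset.card_image_of_injOn ?_
      intro G _ G' _ h
      exact SimpleGraph.edgeFinset_inj.1 h
    rw [← himg]
    refine card_le_exp_of_split (pR.2.comap pR.1).edgeFinset
      (⊤ : SimpleGraph (Fin n)).edgeFinset _ p d B₁ B₂ hp0 hp1 hd0 (by linarith) ?_
    intro S hS
    obtain ⟨G, hG, rfl⟩ := mem_image.1 hS
    obtain ⟨hGF, hcl, hfew⟩ := mem_filter.1 hG
    have hGm : #G.edgeFinset = m := by
      have := (mem_filter.1 hGF).2.2
      rwa [edgeCount_eq] at this
    set T := (pR.2.comap pR.1).edgeFinset with hT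
    have hTcard : (#T : ℝ) ≤ a * ((n : ℝ) ^ 2 / 2) := by
      have := card_edgeFinset_le_of_cliqueFree (by omega : 0 < k) _ hcl
      convert this
    have hsplit : (#(G.edgeFinset ∩ T) : ℝ) + #(G.edgeFinset \ T) = m := by
      rw [← hGm]
      have := card_inter_add_card_sdiff G.edgeFinset T
      exact_mod_cast this
    have hfew' : (#(G.edgeFinset \ T) : ℝ) ≤ 28 * d * N := by
      have h1 := mul_le_mul_of_nonneg_left hn4 hd0.le
      linarith
    have hsd0 : (0 : ℝ) ≤ #(G.edgeFinset \ T) := by positivity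
    have hU : (#((⊤ : SimpleGraph (Fin n)).edgeFinset \ T) : ℝ) ≤ N := by
      have h1 : #((⊤ : SimpleGraph (Fin n)).edgeFinset \ T) ≤ n.choose 2 := by
        refine (card_le_card sdiff_subset).trans ?_
        have := SimpleGraph.card_edgeFinset_le_card_choose_two (G := (⊤ : SimpleGraph (Fin n)))
        rwa [Fintype.card_fin] at this
      rw [hN]
      exact_mod_cast h1
    refine ⟨SimpleGraph.edgeFinset_mono le_top, ?_, ?_⟩
    · exact add_le_add (mul_le_mul_of_nonneg_right (by linarith) hlp)
        (mul_le_mul_of_nonneg_right (by linarith) hlp')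
    · exact add_le_add (mul_le_mul_of_nonneg_right (by linarith) hlq)
        (mul_le_mul_of_nonneg_right (by linarith) hlq')
  have hcover : ForbSub F n c ⊆ univ.biUnion 𝓖 := by
    intro G hG
    obtain ⟨p, R, h1, h2⟩ := hcont n hn G (mem_filter.1 hG).2.1
    exact mem_biUnion.2 ⟨(p, R), mem_univ _, mem_filter.2 ⟨hG, h1, h2⟩⟩
  have hcard : (#(ForbSub F n c) : ℝ) ≤
      (M : ℝ) ^ n * Fintype.card (SimpleGraph (Fin M)) * Real.exp (B₁ + B₂) := by
    calc (#(ForbSub F n c) : ℝ) ≤ ∑ pR, (#(𝓖 pR) : ℝ) := by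
          exact_mod_cast (card_le_card hcover).trans card_biUnion_le
      _ ≤ ∑ pR : (Fin n → Fin M) × SimpleGraph (Fin M), Real.exp (B₁ + B₂) :=
          Finset.sum_le_sum fun pR _ => h𝓖 pR
      _ = _ := by
          rw [Finset.sum_const, nsmul_eq_mul, Finset.card_univ, Fintype.card_prod]
          simp
  have hM' : (0 : ℝ) < M := by exact_mod_cast hM
  have hC : (0 : ℝ) < Fintype.card (SimpleGraph (Fin M)) := by
    exact_mod_cast Fintype.card_pos
  have hlog := Real.log_le_log (by exact_mod_cast hpos) hcard
  rw [Real.log_mul (by positivity) (by positivity), Real.log_mul (by positivity) (by positivity),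
    Real.log_exp, Real.log_pow] at hlog
  refine hlog.trans (le_of_eq ?_)
  have hsq : (n : ℝ) ^ 2 / 2 = N + n / 2 := by rw [hNn]; ring
  rw [hB₁, hB₂, hsq]
  ring

/-! ### The lower bound -/

theorem le_log_factorial (n : ℕ) : (n : ℝ) * Real.log n - n ≤ Real.log (n.factorial : ℝ) := by
  induction n with
  | zero => simp
  | succ n ih =>
    rcases Nat.eq_zero_or_pos n with rfl | hn
    · simp
    have hn' : (0 : ℝ) < n := by exact_mod_cast hn
    rw [Nat.factorial_succ, Nat.cast_mul, Real.log_mul (by positivity) (by positivity)]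
    have h := Real.log_le_sub_one_of_pos (x := ((n : ℝ) + 1) / n) (by positivity)
    rw [Real.log_div (by positivity) (by positivity)] at h
    have h1 := mul_le_mul_of_nonneg_left h hn'.le
    have h2 : (n : ℝ) * (((n : ℝ) + 1) / n - 1) = 1 := by field_simp; ring
    push_cast
    linarith

theorem log_factorial_le (n : ℕ) :
    Real.log (n.factorial : ℝ) ≤ (n : ℝ) * Real.log n - n + Real.log n + 1 := by
  induction n with
  | zero => simp
  | succ n ih =>
    rcases Nat.eq_zero_or_pos n with rfl | hn
    · simp
    have hn' : (0 : ℝ) < n := by exact_mod_cast hn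
    rw [Nat.factorial_succ, Nat.cast_mul, Real.log_mul (by positivity) (by positivity)]
    have h := Real.log_le_sub_one_of_pos (x := (n : ℝ) / (n + 1)) (by positivity)
    rw [Real.log_div (by positivity) (by positivity)] at h
    have h1 := mul_le_mul_of_nonneg_left h (by positivity : (0 : ℝ) ≤ n + 1)
    have h2 : ((n : ℝ) + 1) * ((n : ℝ) / (n + 1) - 1) = -1 := by field_simp; ring
    push_cast
    linarith

/-- Entropy lower bound for a binomial coefficient, normalized by an arbitrary `N ≥ E`. It also holds
for `m = 0` and `m = E`, since `0 * log 0 = 0`. -/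
theorem le_log_choose (E m N : ℕ) (hN : 1 ≤ N) (hm : m ≤ E) (hE : E ≤ N) :
    (N : ℝ) * ((E / N : ℝ) * Real.log (E / N) - (m / N : ℝ) * Real.log (m / N)
      - (E / N - m / N : ℝ) * Real.log (E / N - m / N)) - 2 * Real.log N - 2
      ≤ Real.log (E.choose m : ℝ) := by
  have hN' : (0 : ℝ) < N := by exact_mod_cast hN
  have key : ∀ x : ℝ, (N : ℝ) * ((x / N) * Real.log (x / N)) = x * Real.log x - x * Real.log N := by
    intro x
    rcases eq_or_ne x 0 with rfl | hx
    · simp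
    rw [Real.log_div hx hN'.ne']
    field_simp
  have hlog : ∀ j : ℕ, j ≤ N → Real.log j ≤ Real.log N := by
    intro j hj
    rcases Nat.eq_zero_or_pos j with rfl | hj0
    · simpa using Real.log_natCast_nonneg N
    · exact Real.log_le_log (by exact_mod_cast hj0) (by exact_mod_cast hj)
  have h1 := le_log_factorial E
  have h2 := log_factorial_le m
  have h3 := log_factorial_le (E - m)
  have h4 := hlog m (hm.trans hE)
  have h5 := hlog (E - m) ((Nat.sub_le _ _).trans hE)
  have h6 : Real.log (E.choose m : ℝ) = Real.log (E.factorial : ℝ) - Real.log (m.factorial : ℝ)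
      - Real.log ((E - m).factorial : ℝ) := by
    rw [Nat.cast_choose ℝ hm, Real.log_div (by positivity) (by positivity),
      Real.log_mul (by positivity) (by positivity)]
    ring
  rw [Nat.cast_sub hm] at h3 h5
  rw [h6, ← sub_div, mul_sub, mul_sub, key, key, key]
  linarith

/-- Every subgraph of the Turán graph with `k` parts is `k`-colourable, hence contains no copy of a
graph that is not `k`-colourable. -/
theorem choose_le_card_forb {α : Type} (F : SimpleGraph α) (k n : ℕ) (hk : 0 < k)
    (hF : ¬ F.Colorable k) (c : ℝ) :
    (#(SimpleGraph.turanGraph n k).edgeFinset).choose ⌊c * (n.choose 2 : ℝ)⌋₊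
      ≤ #(ForbSub F n c) := by
  set T := SimpleGraph.turanGraph n k with hT
  set m := ⌊c * (n.choose 2 : ℝ)⌋₊ with hm
  rw [← card_powersetCard]
  have hedge : ∀ S : Finset (Sym2 (Fin n)), S ⊆ T.edgeFinset →
      (SimpleGraph.fromEdgeSet (S : Set (Sym2 (Fin n)))).edgeFinset = S := by
    intro S hS
    ext e
    rw [SimpleGraph.mem_edgeFinset, SimpleGraph.edgeSet_fromEdgeSet]
    constructor
    · exact fun h => h.1
    · intro h
      exact ⟨h, T.not_isDiag_of_mem_edgeSet (SimpleGraph.mem_edgeFinset.1 (hS h))⟩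
  refine Finset.card_le_card_of_injOn (fun S => SimpleGraph.fromEdgeSet (S : Set (Sym2 (Fin n))))
    ?_ ?_
  · intro S hS
    obtain ⟨hS1, hS2⟩ := mem_powersetCard.1 hS
    refine mem_filter.2 ⟨mem_univ _, ?_, ?_⟩
    · rintro ⟨g, hg⟩
      apply hF
      refine ⟨SimpleGraph.Coloring.mk (fun a => (⟨(g a : ℕ) % k, Nat.mod_lt _ hk⟩ : Fin k)) ?_⟩
      intro a b hab heq
      have h1 := (SimpleGraph.fromEdgeSet_adj _).1 (hg a b hab)
      have h2 : T.Adj (g a) (g b) := SimpleGraph.mem_edgeFinset.1 (hS1 h1.1)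
      exact h2 (Fin.mk.inj_iff.1 heq)
    · rw [edgeCount_eq, ← hm, ← hS2]
      congr 1
      convert hedge S hS1
  · intro S hS S' hS' h
    rw [← hedge S (mem_powersetCard.1 hS).1, ← hedge S' (mem_powersetCard.1 hS').1]
    exact SimpleGraph.edgeFinset_inj.2 h

theorem tendsto_choose_two : Filter.Tendsto (fun n : ℕ => (n.choose 2 : ℝ)) Filter.atTop
    Filter.atTop := by
  refine Filter.tendsto_atTop_mono' _ (f₁ := fun n : ℕ => (n : ℝ) / 2) ?_ ?_
  · filter_upwards [Filter.eventually_ge_atTop 2] with n hn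
    have : (2 : ℝ) ≤ n := by exact_mod_cast hn
    rw [Nat.cast_choose_two]
    nlinarith
  · exact tendsto_natCast_atTop_atTop.atTop_div_const (by norm_num)

theorem tendsto_div_choose_two :
    Filter.Tendsto (fun n : ℕ => (n : ℝ) / (n.choose 2 : ℝ)) Filter.atTop (nhds 0) := by
  have h : Filter.Tendsto (fun n : ℕ => 4 / (n : ℝ)) Filter.atTop (nhds 0) :=
    tendsto_const_div_atTop_nhds_zero_nat 4
  refine squeeze_zero' (Filter.Eventually.of_forall fun n => by positivity) ?_ h
  filter_upwards [Filter.eventually_ge_atTop 2] with n hn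
  have : (2 : ℝ) ≤ n := by exact_mod_cast hn
  rw [Nat.cast_choose_two, div_le_div_iff₀ (by nlinarith) (by linarith)]
  nlinarith

/-- The Turán graph with `k` parts has edge density tending to `(k - 1) / k`. -/
theorem tendsto_turan (k : ℕ) (hk : 0 < k) :
    Filter.Tendsto (fun n : ℕ => (#(SimpleGraph.turanGraph n k).edgeFinset : ℝ) / (n.choose 2 : ℝ))
      Filter.atTop (nhds (((k : ℝ) - 1) / k)) := by
  set a : ℝ := ((k : ℝ) - 1) / k with ha
  have hk1 : (1 : ℝ) ≤ k := by exact_mod_cast hk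
  have ha0 : 0 ≤ a := div_nonneg (by linarith) (by linarith)
  have hinv := tendsto_choose_two.inv_tendsto_atTop
  have hb : Filter.Tendsto (fun n : ℕ => a / 2 * ((n : ℝ) / (n.choose 2 : ℝ)) +
      (a * k ^ 2 / 2 + 1) * (n.choose 2 : ℝ)⁻¹) Filter.atTop (nhds 0) := by
    simpa using (tendsto_div_choose_two.const_mul (a / 2)).add
      (hinv.const_mul (a * k ^ 2 / 2 + 1))
  rw [tendsto_iff_dist_tendsto_zero]
  refine squeeze_zero' (Filter.Eventually.of_forall fun n => dist_nonneg) ?_ hb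
  filter_upwards [Filter.eventually_ge_atTop 2] with n hn
  have hn' : (2 : ℝ) ≤ n := by exact_mod_cast hn
  set E := #(SimpleGraph.turanGraph n k).edgeFinset with hE
  set N : ℝ := (n.choose 2 : ℝ) with hN
  have hNn : N = n * (n - 1) / 2 := by rw [hN, Nat.cast_choose_two]
  have hN0 : 0 < N := by rw [hNn]; nlinarith
  have hup : (E : ℝ) ≤ a * ((n : ℝ) ^ 2 / 2) := by
    have h := card_edgeFinset_le_of_cliqueFree hk _ (SimpleGraph.turanGraph_cliqueFree (n := n) hk)
    convert h
  have hlow : a * (((n : ℝ) ^ 2 - k ^ 2) / 2) - 1 ≤ E := by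
    have h1 : E = (n ^ 2 - (n % k) ^ 2) * (k - 1) / (2 * k) + (n % k).choose 2 := by
      rw [hE, ← SimpleGraph.card_edgeFinset_turanGraph]
    have h2 : (n ^ 2 - (n % k) ^ 2) * (k - 1) < (2 * k) * (E + 1) := by
      have := Nat.lt_mul_div_succ ((n ^ 2 - (n % k) ^ 2) * (k - 1)) (by omega : 0 < 2 * k)
      refine this.trans_le (Nat.mul_le_mul_left _ ?_)
      omega
    have h3 : (n % k) ^ 2 ≤ n ^ 2 := Nat.pow_le_pow_left (Nat.mod_le _ _) 2
    have h4 : (((n % k : ℕ) : ℝ)) ^ 2 ≤ (k : ℝ) ^ 2 := by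
      exact_mod_cast Nat.pow_le_pow_left (Nat.mod_lt n hk).le 2
    have h5 : (((n ^ 2 - (n % k) ^ 2) * (k - 1) : ℕ) : ℝ) ≤ ((2 * k * (E + 1) : ℕ) : ℝ) := by
      exact_mod_cast h2.le
    rw [Nat.cast_mul, Nat.cast_sub h3, Nat.cast_sub hk] at h5
    push_cast at h5
    rw [ha, sub_le_iff_le_add, div_mul_div_comm, div_le_iff₀ (by positivity)]
    nlinarith
  have hsq : (n : ℝ) ^ 2 / 2 = N + n / 2 := by rw [hNn]; ring
  have hd : (E : ℝ) / N - a = (E - a * N) / N := by field_simp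
  have hr : a / 2 * ((n : ℝ) / N) + (a * k ^ 2 / 2 + 1) * N⁻¹
      = (a / 2 * n + (a * k ^ 2 / 2 + 1)) / N := by field_simp
  have hak : 0 ≤ a * k ^ 2 := by positivity
  have han : 0 ≤ a * n := by positivity
  rw [Real.dist_eq, hd, hr, abs_div, abs_of_pos hN0]
  refine div_le_div_of_nonneg_right ?_ hN0.le
  rw [hsq] at hup
  have hlow' : a * (N + n / 2 - k ^ 2 / 2) - 1 ≤ E := by rw [← hsq]; linarith
  rw [abs_le]
  constructor <;> linarith

/-- The lower bound: `log |Forb_n(F,c)| / C(n,2)` is eventually bounded below by a sequence with the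
right limit, here written with `x log x` instead of the entropy. -/
theorem exists_lower {α : Type} (F : SimpleGraph α) (k : ℕ) (hk : 0 < k)
    (hF : ¬ F.Colorable k) (c : ℝ) (hc0 : 0 < c) (hc1 : c < ((k : ℝ) - 1) / k) :
    ∃ u : ℕ → ℝ, Filter.Tendsto u Filter.atTop
      (nhds (((k : ℝ) - 1) / k * Real.log (((k : ℝ) - 1) / k) - c * Real.log c
        - (((k : ℝ) - 1) / k - c) * Real.log (((k : ℝ) - 1) / k - c))) ∧
      ∀ᶠ n : ℕ in Filter.atTop, 0 < #(ForbSub F n c) ∧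
        u n ≤ Real.log #(ForbSub F n c) / n.choose 2 := by
  have hE := tendsto_turan k hk
  set a : ℝ := ((k : ℝ) - 1) / k with ha
  set e : ℕ → ℝ := fun n => (#(SimpleGraph.turanGraph n k).edgeFinset : ℝ) / (n.choose 2 : ℝ)
    with he
  set t : ℕ → ℝ := fun n => (⌊c * (n.choose 2 : ℝ)⌋₊ : ℝ) / (n.choose 2 : ℝ) with htdef
  have ht : Filter.Tendsto t Filter.atTop (nhds c) :=
    (tendsto_nat_floor_mul_div_atTop hc0.le).comp tendsto_choose_two
  have hφ := Real.continuous_mul_log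
  have h1 := (hφ.tendsto a).comp hE
  have h2 := (hφ.tendsto c).comp ht
  have h3 := (hφ.tendsto (a - c)).comp (hE.sub ht)
  have hl : Filter.Tendsto (fun n : ℕ => Real.log (n.choose 2 : ℝ) / (n.choose 2 : ℝ))
      Filter.atTop (nhds 0) := by
    have := (Real.isLittleO_log_id_atTop.tendsto_div_nhds_zero).comp tendsto_choose_two
    exact this
  have hinv := tendsto_choose_two.inv_tendsto_atTop
  refine ⟨fun n => e n * Real.log (e n) - t n * Real.log (t n) - (e n - t n) * Real.log (e n - t n)
    - 2 * (Real.log (n.choose 2 : ℝ) / (n.choose 2 : ℝ)) - 2 * (n.choose 2 : ℝ)⁻¹, ?_, ?_⟩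
  · have := (((h1.sub h2).sub h3).sub (hl.const_mul 2)).sub (hinv.const_mul 2)
    simpa using this
  · have hlt : ∀ᶠ n in Filter.atTop, t n < e n := ht.eventually_lt hE hc1
    filter_upwards [hlt, Filter.eventually_ge_atTop 2] with n hn hn2
    have hN1 : 1 ≤ n.choose 2 := Nat.choose_pos hn2
    have hN0 : (0 : ℝ) < n.choose 2 := by exact_mod_cast hN1
    have hm : ⌊c * (n.choose 2 : ℝ)⌋₊ ≤ #(SimpleGraph.turanGraph n k).edgeFinset := by
      have := (div_lt_div_iff_of_pos_right hN0).1 hn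
      exact_mod_cast this.le
    have hEN : #(SimpleGraph.turanGraph n k).edgeFinset ≤ n.choose 2 := by
      have := SimpleGraph.card_edgeFinset_le_card_choose_two (G := SimpleGraph.turanGraph n k)
      rwa [Fintype.card_fin] at this
    have hch := choose_le_card_forb F k n hk hF c
    have hcp := Nat.choose_pos hm
    refine ⟨hcp.trans_le hch, ?_⟩
    have hlog : Real.log ((#(SimpleGraph.turanGraph n k).edgeFinset).choose
        ⌊c * (n.choose 2 : ℝ)⌋₊ : ℝ) ≤ Real.log #(ForbSub F n c) :=
      Real.log_le_log (by exact_mod_cast hcp) (by exact_mod_cast hch)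
    have hfin := (le_log_choose _ _ _ hN1 hm hEN).trans hlog
    rw [le_div_iff₀ hN0]
    refine le_trans (le_of_eq ?_) hfin
    simp only [he, htdef]
    field_simp

/-! ### The limit -/

/-- The theorem with natural logarithms and `k = r - 1`. -/
theorem tendsto_log_card_forb {α : Type} [Fintype α] (F : SimpleGraph α) (k : ℕ) (hk : 2 ≤ k)
    (hF : F.Colorable (k + 1)) (hF' : ¬ F.Colorable k) (c : ℝ) (hc0 : 0 < c)
    (hc1 : c < ((k : ℝ) - 1) / k) :
    Filter.Tendsto (fun n : ℕ => Real.log #(ForbSub F n c) / n.choose 2) Filter.atTop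
      (nhds (c * -Real.log (c / (((k : ℝ) - 1) / k)) +
        (((k : ℝ) - 1) / k - c) * -Real.log (1 - c / (((k : ℝ) - 1) / k)))) := by
  obtain ⟨u, hu, hev⟩ := exists_lower F k (by omega) hF' c hc0 hc1
  have hup := fun d (hd0 : 0 < d) (hd : d ≤ 1 / 2) hp0 hp1 =>
    log_card_forb_le F k hk hF c (c / (((k : ℝ) - 1) / k)) d hc0 hp0 hp1 hd0 hd
  set a : ℝ := ((k : ℝ) - 1) / k with ha
  have ha0 : 0 < a := hc0.trans hc1
  have hac : 0 < a - c := sub_pos.2 hc1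
  have hp0 : 0 < c / a := by positivity
  have hp1 : c / a < 1 := (div_lt_one ha0).2 hc1
  have hLL : a * Real.log a - c * Real.log c - (a - c) * Real.log (a - c)
      = c * -Real.log (c / a) + (a - c) * -Real.log (1 - c / a) := by
    have h1 : 1 - c / a = (a - c) / a := by field_simp
    rw [h1, Real.log_div hc0.ne' ha0.ne', Real.log_div hac.ne' ha0.ne']
    ring
  rw [hLL] at hu
  set L : ℝ := c * -Real.log (c / a) + (a - c) * -Real.log (1 - c / a) with hL
  refine tendsto_order.2 ⟨fun x hx => ?_, fun y hy => ?_⟩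
  · filter_upwards [hev, hu.eventually_const_lt hx] with n h1 h2
    exact h2.trans_le h1.2
  · -- the error coming from the container density parameter `d` vanishes as `d → 0`
    have hg : Filter.Tendsto (fun d : ℝ => L + (28 * d * -Real.log (1 - c / a)
        - 28 * (d * Real.log d) - Real.log (1 - d))) (nhdsWithin 0 (Set.Ioi 0)) (nhds L) := by
      have h1 : ContinuousAt (fun d : ℝ => L + (28 * d * -Real.log (1 - c / a)
          - 28 * (d * Real.log d) - Real.log (1 - d))) 0 := by
        have h2 : ContinuousAt (fun d : ℝ => d * Real.log d) 0 :=
          Real.continuous_mul_log.continuousAt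
        have h3 : ContinuousAt (fun d : ℝ => Real.log (1 - d)) 0 :=
          ContinuousAt.log (by fun_prop) (by norm_num)
        fun_prop
      have h4 := h1.tendsto
      simp only [mul_zero, zero_mul, sub_zero, Real.log_one, add_zero] at h4
      exact h4.mono_left nhdsWithin_le_nhds
    have hex := ((hg.eventually_lt_const hy).and
      (Ioo_mem_nhdsGT (by norm_num : (0 : ℝ) < 1 / 2))).exists
    obtain ⟨d, hdy, hd0, hd⟩ := hex
    obtain ⟨K₁, K₂, hK⟩ := hup d hd0 hd.le hp0 hp1
    set B : ℝ := L + (28 * d * -Real.log (1 - c / a) - 28 * (d * Real.log d) - Real.log (1 - d))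
      with hB
    have hv : Filter.Tendsto (fun n : ℕ => B + K₁ * ((n : ℝ) / n.choose 2) +
        K₂ * (n.choose 2 : ℝ)⁻¹) Filter.atTop (nhds B) := by
      simpa using (tendsto_const_nhds.add (tendsto_div_choose_two.const_mul K₁)).add
        (tendsto_choose_two.inv_tendsto_atTop.const_mul K₂)
    filter_upwards [hev, hK, hv.eventually_lt_const hdy,
      tendsto_choose_two.eventually_gt_atTop 0] with n h1 h2 h3 hN0
    refine lt_of_le_of_lt ?_ h3
    rw [div_le_iff₀ hN0]
    refine (h2 h1.1).trans (le_of_eq ?_)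
    field_simp

/-- If `F` has chromatic number `r ≥ 3` and `0 < c < (r−2)/(r−1)`, then
`log₂|Forb_n(F,c)| / C(n,2)` converges to `((r−2)/(r−1))·H(c·(r−1)/(r−2))` as `n → ∞`. -/
theorem stmt4 {α : Type} [Fintype α] (F : SimpleGraph α) (r : ℕ) (hr : 3 ≤ r)
    (hchi : F.chromaticNumber = (r : ℕ∞)) (c : ℝ) (hc0 : 0 < c)
    (hc1 : c < ((r : ℝ) - 2) / ((r : ℝ) - 1)) :
    Filter.Tendsto
      (fun n : ℕ => Real.logb 2 ((ForbSub F n c).card : ℝ) / (n.choose 2 : ℝ))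
      Filter.atTop
      (nhds ((((r : ℝ) - 2) / ((r : ℝ) - 1)) * binEnt (c * ((r : ℝ) - 1) / ((r : ℝ) - 2)))) := by
  obtain ⟨k, rfl⟩ : ∃ k, r = k + 1 := ⟨r - 1, by omega⟩
  have hF : F.Colorable (k + 1) := SimpleGraph.chromaticNumber_le_iff_colorable.1 hchi.le
  have hF' : ¬ F.Colorable k := by
    intro h
    have h1 := SimpleGraph.chromaticNumber_le_iff_colorable.2 h
    rw [hchi] at h1
    have h2 : k + 1 ≤ k := by exact_mod_cast h1
    omega
  have e1 : ((k + 1 : ℕ) : ℝ) - 2 = (k : ℝ) - 1 := by push_cast; ring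
  have e2 : ((k + 1 : ℕ) : ℝ) - 1 = (k : ℝ) := by push_cast; ring
  rw [e1, e2] at hc1 ⊢
  have h := (tendsto_log_card_forb F k (by omega) hF hF' c hc0 hc1).div_const (Real.log 2)
  have hk : (2 : ℝ) ≤ k := by exact_mod_cast (by omega : 2 ≤ k)
  have hk0 : (k : ℝ) ≠ 0 := by positivity
  have hk1 : (k : ℝ) - 1 ≠ 0 := by linarith
  have hlog2 : Real.log 2 ≠ 0 := (Real.log_pos one_lt_two).ne'
  have hp : c * (k : ℝ) / ((k : ℝ) - 1) = c / (((k : ℝ) - 1) / k) := by field_simp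
  have hlim : ((k : ℝ) - 1) / k * binEnt (c * k / ((k : ℝ) - 1))
      = (c * -Real.log (c / (((k : ℝ) - 1) / k)) + (((k : ℝ) - 1) / k - c) *
        -Real.log (1 - c / (((k : ℝ) - 1) / k))) / Real.log 2 := by
    rw [hp, binEnt, Real.logb, Real.logb]
    generalize Real.log (c / (((k : ℝ) - 1) / k)) = x
    generalize Real.log (1 - c / (((k : ℝ) - 1) / k)) = y
    field_simp
    ring
  rw [hlim]
  refine h.congr fun n => ?_
  rw [Real.logb, div_right_comm]
end

section
/- For all reals c, γ ∈ (0,1) there is an n₀ such that for all n ≥ n₀ we have |𝒮(n,c)| ≥ 2^{(h(c) − γ)·C(n,2)}, where C(n,2) = n(n−1)/2. -/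
/-!
Split the vertex set into halves `A` and `B`, so that there are `M ≥ N / 2` crossing pairs, where
`N = C(n,2)`. Make `A` independent, make `B` complete multipartite with `s` singleton parts and one
further part, and let `k` crossing pairs be edges in an arbitrary way. The complement of any such
graph admits a generalised clique partition, so for each `s` there are `C(M, k)` generalised split
graphs with `k + t_s` edges, `t_s` being the number of edges inside `B`
(`choose_le_card_splitSet`).

For `c ≤ 1/2` put `p = min (2c) (1/2)`, so that `h(c) = H(p) / 2`. As `s` varies, `t_s` runs from
`0` to `C(|B|, 2) ≈ N / 4` in steps of at most `n`; hence `s` can be chosen such that a graph with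
`m ≈ c N` edges has `k = p M + O(n)` crossing edges (`exists_innerPairs`). The entropy bound
`C(M, k) ≥ 2 ^ (M H(k / M)) / poly(M)`, proved from elementary bounds on factorials
(`log_choose_lower`), and the continuity of `H` give the result (`log_choose_asymp`,
`card_splitSet_lower`).

For `c > 1/2` pass to complements, using `h(1 - c) = h(c)`.
-/

open Finset SimpleGraph
open scoped Classical

/-- `G` admits a generalised clique partition: a partition `V = V₁ ∪ … ∪ V_k` (here encoded by a
labelling `f` of the vertices, part `0` playing the role of `V₁`) such that every part induces a
clique and there are no edges between two distinct parts other than the first. -/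
def HasGenCliquePartition {V : Type} (G : SimpleGraph V) : Prop :=
  ∃ f : V → ℕ,
    (∀ u v, f u = f v → u ≠ v → G.Adj u v) ∧
    (∀ u v, f u ≠ f v → f u ≠ 0 → f v ≠ 0 → ¬ G.Adj u v)

/-- `G` is a generalised split graph: `G` or its complement admits a generalised clique
partition. -/
def IsGenSplit {V : Type} (G : SimpleGraph V) : Prop :=
  HasGenCliquePartition G ∨ HasGenCliquePartition Gᶜ

/-- `𝒮(n,c)`: the generalised split graphs on vertex set `{1,…,n}` with exactly `⌊c·C(n,2)⌋`
edges. -/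
noncomputable def Sset (n : ℕ) (c : ℝ) : Finset (SimpleGraph (Fin n)) :=
  univ.filter fun G => IsGenSplit G ∧ edgeCount G = ⌊c * (n.choose 2 : ℝ)⌋₊

/-! ### Binomial coefficients and entropy -/

lemma log_factorial_lower (k : ℕ) :
    (k : ℝ) * Real.log k - k ≤ Real.log (k.factorial : ℝ) := by
  rcases Nat.eq_zero_or_pos k with rfl | hk
  · simp
  have hk' : (0 : ℝ) < k := by exact_mod_cast hk
  have h1 : (k : ℝ) ^ k / k.factorial ≤ Real.exp k :=
    Real.pow_div_factorial_le_exp k hk'.le k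
  have hf : (0 : ℝ) < k.factorial := by exact_mod_cast k.factorial_pos
  have h2 := Real.log_le_log (by positivity) h1
  rw [Real.log_div (by positivity) (by positivity), Real.log_pow, Real.log_exp] at h2
  linarith

lemma log_factorial_upper (k : ℕ) (hk : 1 ≤ k) :
    Real.log (k.factorial : ℝ) ≤ (k : ℝ) * Real.log k - k + Real.log k + 1 := by
  induction k, hk using Nat.le_induction with
  | base => simp
  | succ k hk ih =>
    have hk' : (0 : ℝ) < k := by exact_mod_cast hk
    have hf : (0 : ℝ) < k.factorial := by exact_mod_cast k.factorial_pos
    rw [Nat.factorial_succ]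
    push_cast
    rw [Real.log_mul (by positivity) (by positivity)]
    -- `log (1 + 1/k) ≥ 1 / (k + 1)`, from `1 - 1/y ≤ log y` at `y = (k + 1) / k`
    have h1 := Real.one_sub_inv_le_log_of_pos (x := ((k : ℝ) + 1) / k) (by positivity)
    rw [Real.log_div (by positivity) (by positivity)] at h1
    have h2 : (1 : ℝ) - (((k : ℝ) + 1) / k)⁻¹ = 1 / (k + 1) := by field_simp; ring
    rw [h2, div_le_iff₀ (by positivity)] at h1
    linarith

/-- The entropy lower bound for binomial coefficients, up to a polynomial factor. -/
lemma log_choose_lower (M k : ℕ) (hk : 1 ≤ k) (hkM : k < M) :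
    (M : ℝ) * Real.binEntropy (k / M) - 2 * Real.log M - 2 ≤ Real.log (M.choose k : ℝ) := by
  obtain ⟨l, rfl⟩ := Nat.exists_eq_add_of_lt hkM
  obtain ⟨j, hj⟩ : ∃ j, j = l + 1 := ⟨_, rfl⟩
  have e : k + l + 1 = k + j := by omega
  rw [e]
  have hj1 : 1 ≤ j := by omega
  have hk' : (0 : ℝ) < k := by exact_mod_cast hk
  have hj' : (0 : ℝ) < j := by exact_mod_cast hj1
  have hc : ((k + j).choose k : ℝ) = (k + j).factorial / (k.factorial * j.factorial) := by
    rw [Nat.choose_symm_add, Nat.add_choose, Nat.cast_div (Nat.factorial_mul_factorial_dvd_factorial_add k j)]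
    · push_cast; rfl
    · have := k.factorial_pos; have := j.factorial_pos; positivity
  have f1 : (0 : ℝ) < k.factorial := by exact_mod_cast k.factorial_pos
  have f2 : (0 : ℝ) < j.factorial := by exact_mod_cast j.factorial_pos
  have f3 : (0 : ℝ) < (k + j).factorial := by exact_mod_cast (k + j).factorial_pos
  rw [hc, Real.log_div f3.ne' (by positivity), Real.log_mul f1.ne' f2.ne']
  have g1 := log_factorial_upper k hk
  have g2 := log_factorial_upper j hj1
  have g3 := log_factorial_lower (k + j)
  have l1 : Real.log k ≤ Real.log ((k : ℝ) + j) := Real.log_le_log hk' (by linarith)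
  have l2 : Real.log j ≤ Real.log ((k : ℝ) + j) := Real.log_le_log hj' (by linarith)
  push_cast at g3 ⊢
  have h1 : 1 - (k : ℝ) / (k + j) = j / (k + j) := by field_simp; ring
  have hb : ((k : ℝ) + j) * Real.binEntropy (k / (k + j)) =
      (k + j) * Real.log (k + j) - k * Real.log k - j * Real.log j := by
    rw [Real.binEntropy, h1, Real.log_inv, Real.log_inv,
      Real.log_div hk'.ne' (by positivity), Real.log_div hj'.ne' (by positivity)]
    field_simp
    ring
  rw [hb]
  linarith

/-- If `M` is at least half of `N = C(n,2)` and `k` differs from `p M` by `O(n)`, then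
`log C(M,k)` is at least `N H(p) / 2` up to `ε N` (entropy in nats). -/
lemma log_choose_asymp (p ε : ℝ) (hp0 : 0 < p) (hp1 : p ≤ 1 / 2) (hε : 0 < ε) :
    ∃ n₀ : ℕ, ∀ n ≥ n₀, ∀ M k : ℕ, (n.choose 2 : ℝ) / 2 ≤ M → (M : ℝ) ≤ (n : ℝ) ^ 2 →
      |(k : ℝ) - p * M| ≤ 2 * n →
      (n.choose 2 : ℝ) * (Real.binEntropy p / 2) - ε * n.choose 2
        ≤ Real.log (M.choose k : ℝ) := by
  obtain ⟨δ, hδ, hcont⟩ := Metric.continuous_iff.1 Real.binEntropy_continuous p ε hε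
  set d := min δ (p / 2) with hd
  have hd0 : 0 < d := lt_min hδ (by linarith)
  obtain ⟨n₁, hn₁⟩ := exists_nat_gt (8 / d + 20 / ε + 2)
  refine ⟨n₁, fun n hn M k hM hM2 hk => ?_⟩
  have hnr : 8 / d + 20 / ε + 2 < (n : ℝ) := hn₁.trans_le (by exact_mod_cast hn)
  have q1 : 0 < 8 / d := by positivity
  have q2 : 0 < 20 / ε := by positivity
  have hN : (n.choose 2 : ℝ) = n * (n - 1) / 2 := Nat.cast_choose_two ℝ n
  have hd8 : 8 < d * (n - 1) := by
    have : 8 / d < (n : ℝ) - 1 := by linarith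
    rw [div_lt_iff₀ hd0] at this
    linarith
  have he8 : 20 < ε * (n - 1) := by
    have : 20 / ε < (n : ℝ) - 1 := by linarith
    rw [div_lt_iff₀ hε] at this
    linarith
  have hn2 : (2 : ℝ) < n := by linarith
  rw [hN] at hM ⊢
  have hMpos : (0 : ℝ) < M := by nlinarith
  have hdist : |(k : ℝ) / M - p| < d := by
    have : (k : ℝ) / M - p = (k - p * M) / M := by field_simp
    rw [this, abs_div, abs_of_pos hMpos, div_lt_iff₀ hMpos]
    calc |(k : ℝ) - p * M| ≤ 2 * n := hk
      _ < d * (n * (n - 1) / 2 / 2) := by nlinarith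
      _ ≤ d * M := by gcongr
  have hent := hcont ((k : ℝ) / M) (by
    rw [Real.dist_eq]; exact hdist.trans_le (min_le_left _ _))
  rw [Real.dist_eq] at hent
  have hdp : d ≤ p / 2 := min_le_right _ _
  rw [abs_lt] at hdist hent
  have k0 : 0 < (k : ℝ) / M := by linarith
  have k1 : (k : ℝ) / M < 1 := by linarith
  have hk1 : 1 ≤ k := by
    rcases Nat.eq_zero_or_pos k with rfl | h
    · simp at k0
    · exact h
  have hkM : k < M := by
    rw [div_lt_one hMpos] at k1
    exact_mod_cast k1
  have hmain := log_choose_lower M k hk1 hkM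
  have hlog : Real.log M ≤ 2 * n := by
    calc Real.log M ≤ Real.log ((n : ℝ) ^ 2) := Real.log_le_log hMpos hM2
      _ = 2 * Real.log n := by rw [Real.log_pow]; norm_num
      _ ≤ 2 * n := by
        have := Real.log_le_self (x := (n : ℝ)) (by positivity)
        linarith
  have hb0 := Real.binEntropy_nonneg k0.le k1.le
  have hm2 : (n : ℝ) * (n - 1) / 2 / 2 * Real.binEntropy (k / M)
      ≤ M * Real.binEntropy (k / M) := by gcongr
  have hn0 : (0 : ℝ) ≤ n * (n - 1) / 2 / 2 := by
    have : (0 : ℝ) ≤ (n : ℝ) - 1 := by linarith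
    positivity
  have hm3 : (n : ℝ) * (n - 1) / 2 / 2 * (Real.binEntropy p - ε) ≤
      (n : ℝ) * (n - 1) / 2 / 2 * Real.binEntropy (k / M) := by
    gcongr; linarith
  nlinarith

/-! ### The construction -/

/-- The generalised split graphs on `Fin n` with exactly `m` edges. -/
noncomputable def splitSet (n m : ℕ) : Finset (SimpleGraph (Fin n)) :=
  univ.filter fun G => IsGenSplit G ∧ edgeCount G = m

/-- The pairs joining the first `a` vertices to the remaining ones. -/
noncomputable def crossPairs (n a : ℕ) : Finset (Sym2 (Fin n)) :=
  ((univ.filter fun v : Fin n => v.1 < a) ×ˢ (univ.filter fun v : Fin n => a ≤ v.1)).image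
    fun x => s(x.1, x.2)

/-- The pairs of distinct vertices `≥ a` that meet the interval `[a, a + s)`: the edges of the
complete multipartite graph on the vertices `≥ a` whose parts are `s` singletons and the rest. -/
noncomputable def innerPairs (n a s : ℕ) : Finset (Sym2 (Fin n)) :=
  (univ.filter fun x : Fin n × Fin n =>
    x.1 ≠ x.2 ∧ a ≤ x.1.1 ∧ a ≤ x.2.1 ∧ x.1.1 < a + s).image fun x => s(x.1, x.2)

lemma mem_crossPairs {n a : ℕ} (u v : Fin n) :
    s(u, v) ∈ crossPairs n a ↔ (u.1 < a ∧ a ≤ v.1) ∨ (v.1 < a ∧ a ≤ u.1) := by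
  simp only [crossPairs, mem_image, mem_product, mem_filter, mem_univ, true_and, Prod.exists,
    Sym2.eq_iff]
  constructor
  · rintro ⟨x, y, h, ⟨rfl, rfl⟩ | ⟨rfl, rfl⟩⟩
    · exact Or.inl h
    · exact Or.inr h
  · rintro (h | h)
    · exact ⟨u, v, h, Or.inl ⟨rfl, rfl⟩⟩
    · exact ⟨v, u, h, Or.inr ⟨rfl, rfl⟩⟩

lemma mem_innerPairs {n a s : ℕ} (u v : Fin n) :
    s(u, v) ∈ innerPairs n a s ↔ u ≠ v ∧ a ≤ u.1 ∧ a ≤ v.1 ∧ (u.1 < a + s ∨ v.1 < a + s) := by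
  simp only [innerPairs, mem_image, mem_filter, mem_univ, true_and, Prod.exists,
    Sym2.eq_iff]
  constructor
  · rintro ⟨x, y, h, ⟨rfl, rfl⟩ | ⟨rfl, rfl⟩⟩
    · tauto
    · exact ⟨h.1.symm, h.2.2.1, h.2.1, Or.inr h.2.2.2⟩
  · rintro ⟨h1, h2, h3, h | h⟩
    · exact ⟨u, v, ⟨h1, h2, h3, h⟩, Or.inl ⟨rfl, rfl⟩⟩
    · exact ⟨v, u, ⟨h1.symm, h3, h2, h⟩, Or.inr ⟨rfl, rfl⟩⟩

lemma card_low {n a : ℕ} (ha : a ≤ n) : #(univ.filter fun v : Fin n => v.1 < a) = a := by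
  rw [Fin.card_filter_val_lt, min_eq_right ha]

lemma card_high {n a : ℕ} (ha : a ≤ n) :
    #(univ.filter fun v : Fin n => a ≤ v.1) = n - a := by
  have h := card_filter_add_card_filter_not (s := (univ : Finset (Fin n))) (fun v => v.1 < a)
  simp only [not_lt, card_univ, Fintype.card_fin] at h
  rw [card_low ha] at h
  omega

lemma card_crossPairs {n a : ℕ} (ha : a ≤ n) : #(crossPairs n a) = a * (n - a) := by
  rw [crossPairs, card_image_of_injOn, card_product, card_low ha, card_high ha]
  rintro ⟨x, y⟩ hx ⟨x', y'⟩ hx' h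
  simp only [coe_product, Set.mem_prod, mem_coe, mem_filter, mem_univ, true_and] at hx hx'
  simp only [Sym2.eq_iff] at h
  rcases h with ⟨rfl, rfl⟩ | ⟨rfl, rfl⟩
  · rfl
  · omega

lemma innerPairs_zero (n a : ℕ) : innerPairs n a 0 = ∅ := by
  ext e
  induction e using Sym2.ind with
  | _ u v =>
    rw [mem_innerPairs]
    simp only [add_zero, notMem_empty, iff_false]
    omega

lemma card_innerPairs_succ (n a s : ℕ) :
    #(innerPairs n a (s + 1)) ≤ #(innerPairs n a s) + n := by
  by_cases h : a + s < n
  · have hsub : innerPairs n a (s + 1) ⊆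
        innerPairs n a s ∪ univ.image fun v : Fin n => s((⟨a + s, h⟩ : Fin n), v) := by
      intro e
      induction e using Sym2.ind with
      | _ u v =>
        intro he
        rw [mem_innerPairs] at he
        rw [mem_union, mem_innerPairs]
        by_cases hu : u.1 = a + s
        · right
          exact mem_image.2 ⟨v, mem_univ _, by rw [← Fin.ext (a := u) (b := ⟨a + s, h⟩) hu]⟩
        by_cases hv : v.1 = a + s
        · right
          refine mem_image.2 ⟨u, mem_univ _, ?_⟩
          rw [← Fin.ext (a := v) (b := ⟨a + s, h⟩) hv, Sym2.eq_swap]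
        · left
          refine ⟨he.1, he.2.1, he.2.2.1, ?_⟩
          omega
    calc _ ≤ _ := card_le_card hsub
      _ ≤ _ := card_union_le _ _
      _ ≤ _ := by
        gcongr
        exact card_image_le.trans (by simp)
  · have hsub : innerPairs n a (s + 1) ⊆ innerPairs n a s := by
      intro e
      induction e using Sym2.ind with
      | _ u v =>
        rw [mem_innerPairs, mem_innerPairs]
        rintro ⟨h1, h2, h3, h4⟩
        refine ⟨h1, h2, h3, ?_⟩
        have := u.2
        omega
    exact (card_le_card hsub).trans (by omega)

lemma card_innerPairs_full {n a : ℕ} (ha : a ≤ n) :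
    #(innerPairs n a n) = (n - a).choose 2 := by
  rw [← card_high ha, ← Sym2.card_image_offDiag]
  congr 1
  ext e
  induction e using Sym2.ind with
  | _ u v =>
    rw [mem_innerPairs]
    simp only [mem_image, mem_offDiag, mem_filter, mem_univ, true_and, Prod.exists]
    constructor
    · rintro ⟨h1, h2, h3, -⟩
      exact ⟨u, v, ⟨h2, h3, h1⟩, rfl⟩
    · rintro ⟨x, y, ⟨h1, h2, h3⟩, h⟩
      have hu := u.2
      rcases Sym2.eq_iff.1 h with ⟨rfl, rfl⟩ | ⟨rfl, rfl⟩
      · exact ⟨h3, h1, h2, by omega⟩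
      · exact ⟨h3.symm, h2, h1, by omega⟩

lemma not_isDiag_of_mem {n a s : ℕ} {E : Finset (Sym2 (Fin n))} (hE : E ⊆ crossPairs n a)
    {e : Sym2 (Fin n)} (he : e ∈ E ∪ innerPairs n a s) : ¬ e.IsDiag := by
  induction e using Sym2.ind with
  | _ u v =>
    rw [Sym2.mk_isDiag_iff]
    rintro rfl
    rcases mem_union.1 he with h | h
    · have := (mem_crossPairs _ _).1 (hE h)
      omega
    · exact ((mem_innerPairs _ _).1 h).1 rfl

lemma edgeSet_construct {n a s : ℕ} {E : Finset (Sym2 (Fin n))} (hE : E ⊆ crossPairs n a) :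
    (fromEdgeSet (↑(E ∪ innerPairs n a s) : Set (Sym2 (Fin n)))).edgeSet
      = ↑(E ∪ innerPairs n a s) := by
  rw [edgeSet_fromEdgeSet]
  refine sdiff_eq_left.2 (Set.disjoint_left.2 fun e he => ?_)
  exact not_isDiag_of_mem hE (by exact_mod_cast he)

lemma disjoint_cross_inner (n a s : ℕ) : Disjoint (crossPairs n a) (innerPairs n a s) := by
  rw [Finset.disjoint_left]
  intro e
  induction e using Sym2.ind with
  | _ u v =>
    rw [mem_crossPairs, mem_innerPairs]
    omega

/-- The complement of each constructed graph is partitioned into cliques: the first `a` vertices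
(label `0`), the vertices `≥ a + s` (label `1`), and `s` singletons. -/
lemma isGenSplit_construct {n a s : ℕ} {E : Finset (Sym2 (Fin n))} (hE : E ⊆ crossPairs n a) :
    IsGenSplit (fromEdgeSet (↑(E ∪ innerPairs n a s) : Set (Sym2 (Fin n)))) := by
  right
  refine ⟨fun v => if v.1 < a then 0 else if v.1 < a + s then v.1 + 2 else 1, ?_, ?_⟩
  · intro u v h huv
    have huv' : u.1 ≠ v.1 := fun h => huv (Fin.ext h)
    dsimp only at h
    simp only [compl_adj, fromEdgeSet_adj, coe_union, Set.mem_union, mem_coe]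
    refine ⟨huv, fun hh => ?_⟩
    rcases hh.1 with h1 | h1
    · have h2 := (mem_crossPairs _ _).1 (hE h1)
      split_ifs at h <;> omega
    · have h2 := (mem_innerPairs _ _).1 h1
      split_ifs at h <;> omega
  · intro u v h hu hv
    have huv : u ≠ v := by rintro rfl; exact h rfl
    simp only [compl_adj, fromEdgeSet_adj, coe_union, Set.mem_union, mem_coe, mem_innerPairs]
    rintro ⟨-, hh⟩
    refine hh ⟨Or.inr ⟨huv, ?_⟩, huv⟩
    dsimp only at h hu hv
    split_ifs at h hu hv <;> omega

lemma choose_le_card_splitSet {n a s k : ℕ} (ha : a ≤ n) :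
    (a * (n - a)).choose k ≤ #(splitSet n (k + #(innerPairs n a s))) := by
  rw [← card_crossPairs ha, ← card_powersetCard]
  refine card_le_card_of_injOn
    (fun E => fromEdgeSet (↑(E ∪ innerPairs n a s) : Set (Sym2 (Fin n)))) ?_ ?_
  · intro E hE
    obtain ⟨hE, hc⟩ := mem_powersetCard.1 (mem_coe.1 hE)
    simp only [splitSet, coe_filter, mem_univ, true_and, Set.mem_ofPred_eq]
    refine ⟨isGenSplit_construct hE, ?_⟩
    rw [edgeCount, edgeSet_construct hE, Nat.card_coe_set_eq, Set.ncard_coe_finset,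
      card_union_of_disjoint ((disjoint_cross_inner n a s).mono_left hE), hc]
  · intro E hE F hF h
    obtain ⟨hE, -⟩ := mem_powersetCard.1 (mem_coe.1 hE)
    obtain ⟨hF, -⟩ := mem_powersetCard.1 (mem_coe.1 hF)
    have h1 := congrArg SimpleGraph.edgeSet h
    simp only at h1
    rw [edgeSet_construct hE, edgeSet_construct hF, coe_inj] at h1
    have dE := (disjoint_cross_inner n a s).mono_left hE
    have dF := (disjoint_cross_inner n a s).mono_left hF
    rw [← union_sdiff_cancel_right dE, h1, union_sdiff_cancel_right dF]

/-- A discrete intermediate value property: `#(innerPairs n a s)` moves from `0` to `C(n-a,2)` in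
steps of at most `n`, so it can be brought within `2n` of any `τ` that exceeds this range by at
most `2n`, without overshooting `max τ 0`. -/
lemma exists_innerPairs {n a : ℕ} (ha : a ≤ n) (τ : ℝ) (h0 : -(2 * n) ≤ τ)
    (h1 : τ ≤ (n - a).choose 2 + 2 * n) :
    ∃ s, (#(innerPairs n a s) : ℝ) ≤ max τ 0 ∧ |τ - #(innerPairs n a s)| ≤ 2 * n := by
  have hn : (0 : ℝ) ≤ n := by positivity
  by_cases hneg : τ ≤ 0
  · refine ⟨0, ?_, ?_⟩
    · simp [innerPairs_zero]
    · rw [innerPairs_zero, abs_le]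
      simp only [card_empty, Nat.cast_zero]
      constructor <;> linarith
  push Not at hneg
  by_cases hfull : (#(innerPairs n a n) : ℝ) ≤ τ
  · refine ⟨n, hfull.trans (le_max_left _ _), ?_⟩
    rw [card_innerPairs_full ha] at hfull ⊢
    rw [abs_le]
    constructor <;> linarith
  push Not at hfull
  have hex : ∃ s, τ < (#(innerPairs n a s) : ℝ) := ⟨n, hfull⟩
  obtain ⟨s, hs⟩ : ∃ s, Nat.find hex = s + 1 := by
    refine Nat.exists_eq_succ_of_ne_zero fun hz => ?_
    have := Nat.find_spec hex
    rw [hz, innerPairs_zero] at this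
    simp at this
    linarith
  have hs1 := Nat.find_spec hex
  rw [hs] at hs1
  have hs2 := Nat.find_min hex (m := s) (by omega)
  push Not at hs2
  have hstep : (#(innerPairs n a (s + 1)) : ℝ) ≤ #(innerPairs n a s) + n := by
    exact_mod_cast card_innerPairs_succ n a s
  refine ⟨s, hs2.trans (le_max_left _ _), ?_⟩
  rw [abs_le]
  constructor <;> linarith

/-! ### The counting bound -/

lemma binEnt_eq (x : ℝ) : binEnt x = Real.binEntropy x / Real.log 2 := by
  rw [binEnt, Real.binEntropy, Real.logb, Real.logb, Real.log_inv, Real.log_inv]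
  ring

lemma binEnt_half : binEnt (1 / 2) = 1 := by
  rw [binEnt_eq, one_div, Real.binEntropy_two_inv, div_self (Real.log_pos (by norm_num)).ne']

lemma hfun_of_le_half {c : ℝ} (hc : c ≤ 1 / 2) : hfun c = binEnt (min (2 * c) (1 / 2)) / 2 := by
  rw [hfun]
  split_ifs with h1 h2
  · rw [min_eq_left (by linarith)]
  · rw [min_eq_right (by linarith), binEnt_half]
  · linarith

lemma hfun_one_sub (c : ℝ) : hfun (1 - c) = hfun c := by
  have key : ∀ x y : ℝ, y = 1 - x → binEnt y = binEnt x := by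
    rintro x y rfl
    rw [binEnt_eq, binEnt_eq, Real.binEntropy_one_sub]
  rw [hfun, hfun]
  split_ifs with h1 h2 h3 h4 h5 <;> try linarith
  · rw [key (2 * c - 1) (2 * (1 - c)) (by ring)]
  · rw [key (2 * c) (2 * (1 - c) - 1) (by ring)]

/-- The bound for densities at most `1/2`, with one unit of slack in the number `m` of edges so
that it can be transferred to complements. The vertex set is halved; with
`p = min (2c) (1/2)`, the number of edges inside the second half is chosen so that about a
proportion `p` of the crossing pairs has to be used. -/
lemma card_splitSet_lower (c γ : ℝ) (hc0 : 0 < c) (hc1 : c ≤ 1 / 2) (hγ0 : 0 < γ) :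
    ∃ n₀ : ℕ, ∀ n ≥ n₀, ∀ m : ℕ, |(m : ℝ) - c * n.choose 2| ≤ 1 →
      (2 : ℝ) ^ ((hfun c - γ) * (n.choose 2 : ℝ)) ≤ #(splitSet n m) := by
  have hl2 : 0 < Real.log 2 := Real.log_pos (by norm_num)
  set p := min (2 * c) (1 / 2) with hp
  have hp0 : 0 < p := lt_min (by linarith) (by norm_num)
  have hp1 : p ≤ 1 / 2 := min_le_right _ _
  obtain ⟨n₁, hn₁⟩ := log_choose_asymp p (γ * Real.log 2) hp0 hp1 (by positivity)
  refine ⟨max n₁ 26, fun n hn m hm => ?_⟩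
  have hnn₁ : n₁ ≤ n := (le_max_left _ _).trans hn
  have hnr : (26 : ℝ) ≤ n := by exact_mod_cast (le_max_right _ _).trans hn
  have hN : (n.choose 2 : ℝ) = n * (n - 1) / 2 := Nat.cast_choose_two ℝ n
  obtain ⟨a, ha⟩ : ∃ a, a = n / 2 := ⟨_, rfl⟩
  have han : a ≤ n := by omega
  obtain ⟨M, hMdef⟩ : ∃ M, M = a * (n - a) := ⟨_, rfl⟩
  obtain ⟨b, hb⟩ : ∃ b, b = n - a := ⟨_, rfl⟩
  have hab : (n : ℝ) = a + b := by exact_mod_cast (by omega : n = a + b)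
  have hab1 : (a : ℝ) ≤ b := by exact_mod_cast (by omega : a ≤ b)
  have hab2 : (b : ℝ) ≤ a + 1 := by exact_mod_cast (by omega : b ≤ a + 1)
  have hM : (M : ℝ) = a * b := by rw [hMdef, ← hb]; push_cast; rfl
  have hB : ((n - a).choose 2 : ℝ) = b * (b - 1) / 2 := by
    rw [← hb]; exact Nat.cast_choose_two ℝ b
  have hM1 : (n.choose 2 : ℝ) / 2 ≤ M := by rw [hN, hM, hab]; nlinarith
  have hM2 : (M : ℝ) ≤ n.choose 2 / 2 + n / 4 := by rw [hN, hM, hab]; nlinarith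
  have hB1 : (n.choose 2 : ℝ) / 4 ≤ (n - a).choose 2 + n := by
    rw [hN, hB, hab]; nlinarith
  have hN0 : (0 : ℝ) ≤ n.choose 2 := by positivity
  have hM3 : (M : ℝ) ≤ (n : ℝ) ^ 2 := by rw [hN] at hM2; nlinarith
  rw [abs_le] at hm
  obtain ⟨s, hs1, hs2⟩ := exists_innerPairs han ((m : ℝ) - p * M)
    (by
      have : p * M ≤ c * n.choose 2 + n / 4 := by
        have e1 : p * M ≤ p * (n.choose 2 / 2 + n / 4) := by gcongr
        have e2 : p ≤ 2 * c := min_le_left _ _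
        nlinarith
      linarith)
    (by
      rcases le_total (2 * c) (1 / 2) with h | h
      · have hpe : p = 2 * c := min_eq_left h
        have : p * (n.choose 2 / 2) ≤ p * M := by gcongr
        rw [hpe] at this ⊢
        have : (0 : ℝ) ≤ (n - a).choose 2 := by positivity
        linarith
      · have hpe : p = 1 / 2 := min_eq_right h
        rw [hpe]
        nlinarith)
  -- hence `k = m - #(innerPairs n a s)` is a genuine difference: the number of crossing edges
  have hle : #(innerPairs n a s) ≤ m := by
    have : (#(innerPairs n a s) : ℝ) ≤ m := by
      refine hs1.trans (max_le ?_ (by positivity))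
      have : 0 ≤ p * M := by positivity
      linarith
    exact_mod_cast this
  obtain ⟨k, hk⟩ := Nat.exists_eq_add_of_le' hle
  have hcount := choose_le_card_splitSet (n := n) (a := a) (s := s) (k := k) han
  rw [← hk, ← hMdef] at hcount
  have hkr : (m : ℝ) = k + #(innerPairs n a s) := by exact_mod_cast hk
  have hlog := hn₁ n hnn₁ M k hM1 hM3 (by
    have : (k : ℝ) - p * M = (m : ℝ) - p * M - #(innerPairs n a s) := by rw [hkr]; ring
    rw [this]; exact hs2)
  have hpos : (0 : ℝ) < M.choose k := by
    have hkM : k ≤ M := by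
      have h1 : (k : ℝ) ≤ p * M + 2 * n := by
        rw [abs_le] at hs2
        linarith [hs2.2]
      have h2 : (k : ℝ) ≤ M := by
        have h3 : p * M ≤ 1 / 2 * M := by gcongr
        have h4 : 25 * (n : ℝ) ≤ n * (n - 1) := by nlinarith only [hnr]
        rw [hN] at hM1
        linarith
      exact_mod_cast h2
    exact_mod_cast Nat.choose_pos hkM
  refine le_trans ?_ (show ((M.choose k : ℕ) : ℝ) ≤ _ by exact_mod_cast hcount)
  rw [← Real.log_le_log_iff (by positivity) hpos, Real.log_rpow (by norm_num)]
  refine le_trans (le_of_eq ?_) hlog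
  rw [hfun_of_le_half hc1, binEnt_eq, ← hp]
  field_simp

lemma edgeCount_compl {n : ℕ} (G : SimpleGraph (Fin n)) :
    edgeCount Gᶜ + edgeCount G = n.choose 2 := by
  have h2 := card_edgeFinset_top_eq_card_choose_two (V := Fin n)
  rw [Fintype.card_fin, edgeFinset_card, ← Nat.card_eq_fintype_card, Nat.card_coe_set_eq] at h2
  rw [edgeCount, edgeCount, Nat.card_coe_set_eq, Nat.card_coe_set_eq,
    ← Set.ncard_union_eq (disjoint_edgeSet.2 isCompl_compl.symm.disjoint), ← edgeSet_sup,
    compl_sup_eq_top, h2]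

lemma card_splitSet_compl {n m : ℕ} (hm : m ≤ n.choose 2) :
    #(splitSet n (n.choose 2 - m)) ≤ #(splitSet n m) := by
  refine card_le_card_of_injOn compl ?_ (fun G _ H _ h => compl_injective h)
  intro G hG
  simp only [splitSet, coe_filter, mem_univ, true_and, Set.mem_ofPred_eq] at hG ⊢
  refine ⟨?_, ?_⟩
  · rcases hG.1 with h | h
    · right; rwa [compl_compl]
    · left; exact h
  · have := edgeCount_compl G
    omega

/-- For all `c, γ ∈ (0,1)` there is `n₀` such that for all `n ≥ n₀` we have
`|𝒮(n,c)| ≥ 2^{(h(c) − γ)·C(n,2)}`. -/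
theorem stmt5 (c γ : ℝ) (hc0 : 0 < c) (hc1 : c < 1) (hγ0 : 0 < γ) (hγ1 : γ < 1) :
    ∃ n₀ : ℕ, ∀ n ≥ n₀,
      (2 : ℝ) ^ ((hfun c - γ) * (n.choose 2 : ℝ)) ≤ ((Sset n c).card : ℝ) := by
  have hfl : ∀ n : ℕ, (⌊c * (n.choose 2 : ℝ)⌋₊ : ℝ) ≤ c * (n.choose 2 : ℝ) := fun n =>
    Nat.floor_le (by positivity)
  have hfl2 : ∀ n : ℕ, c * (n.choose 2 : ℝ) < (⌊c * (n.choose 2 : ℝ)⌋₊ : ℝ) + 1 := fun n =>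
    Nat.lt_floor_add_one _
  rcases le_total c (1 / 2) with h | h
  · obtain ⟨n₀, hn₀⟩ := card_splitSet_lower c γ hc0 h hγ0
    refine ⟨n₀, fun n hn => hn₀ n hn _ ?_⟩
    rw [abs_le]
    constructor <;> linarith [hfl n, hfl2 n]
  · obtain ⟨n₀, hn₀⟩ := card_splitSet_lower (1 - c) γ (by linarith) (by linarith) hγ0
    refine ⟨n₀, fun n hn => ?_⟩
    have hm : ⌊c * (n.choose 2 : ℝ)⌋₊ ≤ n.choose 2 := by
      have h1 : (⌊c * (n.choose 2 : ℝ)⌋₊ : ℝ) ≤ n.choose 2 :=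
        (hfl n).trans (mul_le_of_le_one_left (by positivity) hc1.le)
      exact_mod_cast h1
    have h2 := hn₀ n hn (n.choose 2 - ⌊c * (n.choose 2 : ℝ)⌋₊) (by
      rw [Nat.cast_sub hm, abs_le]
      constructor <;> linarith [hfl n, hfl2 n])
    rw [hfun_one_sub] at h2
    refine h2.trans ?_
    exact_mod_cast card_splitSet_compl hm
end

section
/- For all reals c, γ ∈ (0,1) there is an n₀ such that for all n ≥ n₀ we have |𝒞(n,c)| ≤ 2^{(h(c) + γ)·C(n,2)}, where C(n,2) = n(n−1)/2. -/
/-!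
Write `N = C(n,2)`, `m = ⌊cN⌋`, and view a graph as its edge set, a subset of the `N` pairs.

*From induced to monotone.* By Pajor's form of the Sauer–Shelah lemma, `|𝒞(n,c)|` is at most the
number of sets `s` of pairs shattered by `𝒞(n,c)`. A shattered set is contained in one member of the
family and disjoint from another, so `|s| ≤ min(m, N - m)`. Moreover the graph `s` contains no
complete tripartite graph with parts of size 8 (`not_hasTripartite_of_shatters`): shattering allows
an arbitrary pattern of edges between the three parts to be prescribed in some member of the family,
and one pattern forces an induced `C₅` whatever happens inside the parts
(`hasInducedC5_of_pattern`). It therefore suffices to count `K₃(8)`-free graphs with few edges.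

*Containers.* By Szemerédi's regularity lemma and the triangle counting lemma, a `K₃(t)`-free graph
on `n` vertices lies, up to `εn²` edges, in a blow-up of a cluster graph of bounded size, and this
blow-up is triangle-free (`exists_container`): a triangle of dense uniform pairs would give `δn³`
triangles, hence `K₃(t)` by two rounds of pigeonhole (`hasTripartite_of_many_triangles`). There are
`2^{O(n)}` blow-ups, and each has at most `n²/4` edges by Mantel's theorem.

*Entropy.* A `Q`-set has at most `(1-p)^{-Q} ((1-p)/p)^x` subsets of size at most `x`, for every
`p ≤ 1/2` (`card_small_subsets_le`). Taking `Q = n²/4` and `p = 2c`, `1/2` or `2(1-c)` according to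
the three ranges of `c` gives the exponent `h(c)N + O(n)`, and the `εn²` exceptional edges contribute
an arbitrarily small multiple of `N` (`card_Cset_le`).
-/

open Finset SimpleGraph
open scoped Classical

/-- `G` contains an induced cycle of length 5, i.e. an induced copy of `C₅`. -/
def HasInducedC5 {V : Type} (G : SimpleGraph V) : Prop :=
  Nonempty (SimpleGraph.cycleGraph 5 ↪g G)

/-- `𝒞(n,c)`: the graphs on vertex set `{1,…,n}` with exactly `⌊c·C(n,2)⌋` edges and no
induced cycle of length 5. -/
noncomputable def Cset (n : ℕ) (c : ℝ) : Finset (SimpleGraph (Fin n)) :=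
  univ.filter fun G => ¬ HasInducedC5 G ∧ edgeCount G = ⌊c * (n.choose 2 : ℝ)⌋₊

/-! ### Supersaturation of triangles -/

/-- A dense relation between a large `X` and `Y` has `t` elements of `X` with linearly many common
neighbours in `Y`. A bounded number of elements of `X` of large degree is fixed, and the vertices of
`Y` are classified by their neighbourhoods among these. -/
lemma exists_common_nbhd (t : ℕ) (δ : ℝ) (hδ : 0 < δ) :
    ∃ δ' : ℝ, 0 < δ' ∧ ∃ L : ℕ, ∀ (X Y : Type) [Fintype X] [Fintype Y] (r : X → Y → Prop),
      L ≤ Fintype.card X →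
      δ * Fintype.card X * Fintype.card Y ≤ #{q : X × Y | r q.1 q.2} →
      ∃ Z : Finset X, t ≤ #Z ∧ δ' * Fintype.card Y ≤ #{y : Y | ∀ x ∈ Z, r x y} := by
  -- `l + 1` is the number of high-degree vertices of `X` that are kept
  obtain ⟨l, hl⟩ := exists_nat_ge (4 * t / δ)
  rw [div_le_iff₀ hδ] at hl
  obtain ⟨L, hL⟩ := exists_nat_ge ((l + 1) * 2 / δ + t)
  refine ⟨δ / 4 / 2 ^ (l + 1), by positivity, L, ?_⟩
  intro X Y _ _ r hX hr
  have hX' : (L : ℝ) ≤ Fintype.card X := by exact_mod_cast hX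
  have htX : t ≤ Fintype.card X := by
    have : (t : ℝ) ≤ Fintype.card X := by
      have : 0 ≤ ((l : ℝ) + 1) * 2 / δ := by positivity
      linarith
    exact_mod_cast this
  rcases Nat.eq_zero_or_pos (Fintype.card Y) with hY | hY
  · exact ⟨univ, by simpa using htX, by simp [hY]⟩
  have hYr : (0 : ℝ) < Fintype.card Y := by exact_mod_cast hY
  have hsum : (#{q : X × Y | r q.1 q.2} : ℝ) = ∑ x : X, (#{y : Y | r x y} : ℝ) := by
    rw [card_filter, Fintype.sum_prod_type]
    push_cast
    refine sum_congr rfl fun x _ => ?_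
    rw [card_filter]; push_cast; rfl
  set X1 : Finset X := {x | δ / 2 * Fintype.card Y ≤ #{y : Y | r x y}} with hX1
  have h1 : ∑ x : X, (#{y : Y | r x y} : ℝ) ≤
      ∑ x : X, ((if x ∈ X1 then (Fintype.card Y : ℝ) else 0) + δ / 2 * Fintype.card Y) := by
    refine sum_le_sum fun x _ => ?_
    split_ifs with hx
    · have : (#{y : Y | r x y} : ℝ) ≤ Fintype.card Y := by exact_mod_cast card_le_univ _
      have : 0 ≤ δ / 2 * Fintype.card Y := by positivity
      linarith
    · simp only [hX1, mem_filter, mem_univ, true_and, not_le] at hx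
      linarith
  rw [sum_add_distrib, ← sum_filter, sum_const, sum_const, nsmul_eq_mul, nsmul_eq_mul,
    filter_mem_eq_inter, univ_inter, card_univ] at h1
  have h2 : δ / 2 * Fintype.card X ≤ #X1 := by
    have : (δ / 2 * Fintype.card X) * Fintype.card Y ≤ #X1 * Fintype.card Y := by
      rw [hsum] at hr; nlinarith
    exact le_of_mul_le_mul_right this hYr
  have h3 : l + 1 ≤ #X1 := by
    have : ((l : ℝ) + 1) ≤ #X1 := by
      refine le_trans ?_ h2
      have : ((l : ℝ) + 1) * 2 / δ ≤ Fintype.card X := by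
        have : (0 : ℝ) ≤ t := by positivity
        linarith
      rw [div_le_iff₀ hδ] at this
      linarith
    exact_mod_cast this
  obtain ⟨X0, hX01, hX0⟩ := exists_subset_card_eq h3
  have h4 : (l + 1 : ℝ) * (δ / 2 * Fintype.card Y) ≤ ∑ y : Y, (#{x ∈ X0 | r x y} : ℝ) := by
    have e : ∑ y : Y, (#{x ∈ X0 | r x y} : ℝ) = ∑ x ∈ X0, (#{y : Y | r x y} : ℝ) := by
      have := sum_card_bipartiteAbove_eq_sum_card_bipartiteBelow (s := X0) (t := (univ : Finset Y)) r
      exact_mod_cast this.symm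
    rw [e]
    have : ∑ x ∈ X0, (δ / 2 * Fintype.card Y) ≤ ∑ x ∈ X0, (#{y : Y | r x y} : ℝ) := by
      refine sum_le_sum fun x hx => ?_
      have := hX01 hx
      simpa [hX1] using this
    rw [sum_const, hX0, nsmul_eq_mul] at this
    push_cast at this
    exact this
  set Y1 : Finset Y := {y | t ≤ #{x ∈ X0 | r x y}} with hY1
  have h5 : ∑ y : Y, (#{x ∈ X0 | r x y} : ℝ) ≤
      ∑ y : Y, ((if y ∈ Y1 then (l + 1 : ℝ) else 0) + t) := by
    refine sum_le_sum fun y _ => ?_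
    split_ifs with hy
    · have : #{x ∈ X0 | r x y} ≤ l + 1 := hX0 ▸ card_filter_le _ _
      have : (#{x ∈ X0 | r x y} : ℝ) ≤ l + 1 := by exact_mod_cast this
      have : (0 : ℝ) ≤ t := by positivity
      linarith
    · simp only [hY1, mem_filter, mem_univ, true_and, not_le] at hy
      have : (#{x ∈ X0 | r x y} : ℝ) ≤ t := by exact_mod_cast hy.le
      linarith
  rw [sum_add_distrib, ← sum_filter, sum_const, sum_const, nsmul_eq_mul, nsmul_eq_mul,
    filter_mem_eq_inter, univ_inter, card_univ] at h5
  have h6 : δ / 4 * Fintype.card Y ≤ #Y1 := by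
    have h7 : (l + 1 : ℝ) * (δ / 4 * Fintype.card Y) ≤ (l + 1 : ℝ) * #Y1 := by
      have : (t : ℝ) ≤ (l + 1) * (δ / 4) := by nlinarith
      have := mul_le_mul_of_nonneg_right this hYr.le
      nlinarith
    exact le_of_mul_le_mul_left h7 (by positivity)
  obtain ⟨Z, hZ, hZc⟩ := exists_le_card_fiber_of_nsmul_le_card_of_maps_to
    (s := Y1) (t := X0.powerset.filter (fun Z => t ≤ #Z)) (f := fun y => X0.filter (fun x => r x y))
    (b := δ / 4 / 2 ^ (l + 1) * Fintype.card Y)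
    (by
      intro y hy
      simp only [hY1, mem_filter, mem_univ, true_and] at hy
      simp [hy])
    (by
      -- the family of candidate fibres is nonempty because `Y1` is
      have hpos : 0 < #Y1 := by
        have : (0 : ℝ) < #Y1 := lt_of_lt_of_le (by positivity) h6
        exact_mod_cast this
      obtain ⟨y, hy⟩ := card_pos.1 hpos
      simp only [hY1, mem_filter, mem_univ, true_and] at hy
      exact ⟨X0.filter (fun x => r x y), by simp [hy]⟩)
    (by
      rw [nsmul_eq_mul]
      refine le_trans ?_ h6
      have : #(X0.powerset.filter (fun Z => t ≤ #Z)) ≤ 2 ^ (l + 1) := by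
        refine (card_filter_le _ _).trans ?_
        rw [card_powerset, hX0]
      have : (#(X0.powerset.filter (fun Z => t ≤ #Z)) : ℝ) ≤ 2 ^ (l + 1) := by exact_mod_cast this
      calc _ ≤ (2 : ℝ) ^ (l + 1) * (δ / 4 / 2 ^ (l + 1) * Fintype.card Y) := by gcongr
        _ = _ := by field_simp)
  simp only [mem_filter, mem_powerset] at hZ
  refine ⟨Z, hZ.2, hZc.trans ?_⟩
  exact_mod_cast card_le_card (by
    intro y hy
    simp only [mem_filter, mem_univ, true_and] at hy ⊢
    intro x hx
    rw [← hy.2] at hx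
    exact (mem_filter.1 hx).2)

/-- `S` contains a complete tripartite graph with all three parts of size at least `t`, not necessarily
induced. The parts are disjoint since adjacency is irreflexive. -/
def HasTripartite {V : Type} (S : SimpleGraph V) (t : ℕ) : Prop :=
  ∃ A B C : Finset V, t ≤ #A ∧ t ≤ #B ∧ t ≤ #C ∧
    (∀ a ∈ A, ∀ b ∈ B, S.Adj a b) ∧ (∀ a ∈ A, ∀ c ∈ C, S.Adj a c) ∧ (∀ b ∈ B, ∀ c ∈ C, S.Adj b c)

/-- Supersaturation: a graph with `δn³` ordered triangles contains `K₃(t)`. -/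
lemma hasTripartite_of_many_triangles (t : ℕ) (δ : ℝ) (hδ : 0 < δ) :
    ∃ n₀ : ℕ, ∀ n ≥ n₀, ∀ S : SimpleGraph (Fin n),
      δ * (n : ℝ) ^ 3 ≤ #{q : Fin n × Fin n × Fin n |
        S.Adj q.1 q.2.1 ∧ S.Adj q.1 q.2.2 ∧ S.Adj q.2.1 q.2.2} → HasTripartite S t := by
  obtain ⟨δ₁, hδ₁, L₁, h₁⟩ := exists_common_nbhd t δ hδ
  obtain ⟨δ₂, hδ₂, L₂, h₂⟩ := exists_common_nbhd t δ₁ hδ₁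
  obtain ⟨L₃, hL₃⟩ := exists_nat_ge (t / δ₂)
  refine ⟨max L₁ (max L₂ L₃), fun n hn S hS => ?_⟩
  simp only [ge_iff_le, max_le_iff] at hn
  obtain ⟨hn1, hn2, hn3⟩ := hn
  obtain ⟨A, hA, hA'⟩ := h₁ (Fin n) (Fin n × Fin n)
    (fun a q => S.Adj a q.1 ∧ S.Adj a q.2 ∧ S.Adj q.1 q.2) (by simpa using hn1) (by
      refine le_trans (le_of_eq ?_) (hS.trans_eq (by congr!))
      simp only [Fintype.card_prod, Fintype.card_fin]; push_cast; ring)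
  obtain ⟨B, hB, hB'⟩ := h₂ (Fin n) (Fin n)
    (fun b c => ∀ a ∈ A, S.Adj a b ∧ S.Adj a c ∧ S.Adj b c) (by simpa using hn2) (by
      refine le_trans (le_of_eq ?_) (hA'.trans_eq (by congr!))
      simp only [Fintype.card_prod, Fintype.card_fin]; push_cast; ring)
  set C : Finset (Fin n) := {c | ∀ b ∈ B, ∀ a ∈ A, S.Adj a b ∧ S.Adj a c ∧ S.Adj b c} with hC
  have hCt : t ≤ #C := by
    have : (t : ℝ) ≤ #C := by
      refine le_trans ?_ (hB'.trans_eq (by rw [hC]; congr!))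
      rw [div_le_iff₀ hδ₂] at hL₃
      have : (L₃ : ℝ) ≤ n := by exact_mod_cast hn3
      simp only [Fintype.card_fin]
      nlinarith
    exact_mod_cast this
  have key : ∀ a ∈ A, ∀ b ∈ B, ∀ c ∈ C, S.Adj a b ∧ S.Adj a c ∧ S.Adj b c := by
    intro a ha b hb c hc
    exact (mem_filter.1 hc).2 b hb a ha
  rcases Nat.eq_zero_or_pos t with rfl | ht
  · exact ⟨∅, ∅, ∅, by simp⟩
  obtain ⟨a₀, ha₀⟩ := card_pos.1 (ht.trans_le hA)
  obtain ⟨b₀, hb₀⟩ := card_pos.1 (ht.trans_le hB)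
  obtain ⟨c₀, hc₀⟩ := card_pos.1 (ht.trans_le hCt)
  exact ⟨A, B, C, hA, hB, hCt, fun a ha b hb => (key a ha b hb c₀ hc₀).1,
    fun a ha c hc => (key a ha b₀ hb₀ c hc).2.1, fun b hb c hc => (key a₀ ha₀ b hb c hc).2.2⟩

/-! ### Entropy bound for small subsets -/

/-- Entropy bound: under the `p`-biased measure on subsets of `Q`, each set of size at most `x` has
mass at least `(1-p)^|Q| (p/(1-p))^x`. -/
lemma card_small_subsets_le {ι : Type} (Q : Finset ι) (x : ℕ) (p : ℝ) (hp : 0 < p)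
    (hp2 : p ≤ 1 / 2) :
    (#{T ∈ Q.powerset | #T ≤ x} : ℝ) ≤
      (2 : ℝ) ^ ((#Q : ℝ) * (-Real.logb 2 (1 - p)) + x * Real.logb 2 ((1 - p) / p)) := by
  have h1p : 0 < 1 - p := by linarith
  have hq : p / (1 - p) ≤ 1 := by rw [div_le_one h1p]; linarith
  have hrhs : (2 : ℝ) ^ ((#Q : ℝ) * (-Real.logb 2 (1 - p)) + x * Real.logb 2 ((1 - p) / p))
      = ((1 - p) ^ #Q * (p / (1 - p)) ^ x)⁻¹ := by
    have e : p / (1 - p) = ((1 - p) / p)⁻¹ := by rw [inv_div]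
    rw [Real.rpow_add two_pos, mul_comm (#Q : ℝ), mul_comm (x : ℝ), Real.rpow_mul two_pos.le,
      Real.rpow_mul two_pos.le, Real.rpow_neg two_pos.le, Real.rpow_logb two_pos (by norm_num) h1p,
      Real.rpow_logb two_pos (by norm_num) (by positivity), Real.rpow_natCast, Real.rpow_natCast,
      e, mul_inv, inv_pow, inv_pow, inv_inv]
  rw [hrhs, ← one_div, le_div_iff₀ (by positivity)]
  have h := sum_pow_mul_eq_add_pow p (1 - p) Q
  rw [add_sub_cancel, one_pow] at h
  rw [← nsmul_eq_mul, ← sum_const]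
  refine le_trans ?_ h.le
  calc _ ≤ ∑ T ∈ Q.powerset with #T ≤ x, p ^ #T * (1 - p) ^ (#Q - #T) := by
        refine sum_le_sum fun T hT => ?_
        simp only [mem_filter, mem_powerset] at hT
        have hc := card_le_card hT.1
        calc (1 - p) ^ #Q * (p / (1 - p)) ^ x ≤ (1 - p) ^ #Q * (p / (1 - p)) ^ #T := by
              gcongr ?_ * ?_
              exact pow_le_pow_of_le_one (by positivity) hq hT.2
          _ = p ^ #T * (1 - p) ^ (#Q - #T) := by
              rw [← Nat.sub_add_cancel hc, pow_add, div_pow]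
              field_simp
              simp
    _ ≤ _ := sum_le_sum_of_subset_of_nonneg (filter_subset _ _) fun T _ _ => by positivity

/-! ### Shattered sets and the induced five-cycle -/

lemma hasInducedC5_of_adj {V : Type} (G : SimpleGraph V) (x0 x1 x2 x3 x4 : V)
    (h01 : G.Adj x0 x1) (h12 : G.Adj x1 x2) (h23 : G.Adj x2 x3) (h34 : G.Adj x3 x4)
    (h40 : G.Adj x4 x0) (h02 : ¬ G.Adj x0 x2) (h13 : ¬ G.Adj x1 x3) (h24 : ¬ G.Adj x2 x4)
    (h30 : ¬ G.Adj x3 x0) (h41 : ¬ G.Adj x4 x1) : HasInducedC5 G := by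
  have key : ∀ i j : Fin 5, G.Adj (![x0, x1, x2, x3, x4] i) (![x0, x1, x2, x3, x4] j) ↔
      (cycleGraph 5).Adj i j := by
    intro i j
    rw [cycleGraph_adj]
    fin_cases i <;> fin_cases j <;>
      simp [h01, h12, h23, h34, h40, h02, h13, h24, h30, h41, h01.symm, h12.symm, h23.symm,
        h34.symm, h40.symm, G.adj_comm x2 x0, G.adj_comm x3 x1, G.adj_comm x4 x2,
        G.adj_comm x0 x3, G.adj_comm x1 x4] <;> decide
  refine ⟨⟨⟨![x0, x1, x2, x3, x4], ?_⟩, @fun i j => key i j⟩⟩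
  -- distinct vertices of `C₅` have distinct neighbourhoods
  intro i j hij
  have : ∀ k, (cycleGraph 5).Adj i k ↔ (cycleGraph 5).Adj j k := by
    intro k; rw [← key, ← key, hij]
  simp only [cycleGraph_adj] at this
  clear hij
  revert i j
  decide

/-- Vertices of the tripartite pattern: `A` consists of two pairs indexed by `i : Bool`, `B` of four
pairs indexed by `φ : Bool × Bool` (a function `Bool → Bool` given by its values at `false`, `true`),
and `C` of one vertex for each type `τ : Bool × Bool`. The last `Bool` of a vertex in `A` or `B` is
its position in its pair. -/
abbrev PatternVertex : Type := (Bool × Bool) ⊕ ((Bool × Bool) × Bool) ⊕ (Bool × Bool)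

/-- The type `(φ i, i)` of the `i`-th pair of `A` and the `φ`-th pair of `B`: the pattern between the
two pairs completes to `C₅` if the first component tells whether the pair in `A` is an edge and
the second whether the pair in `B` is. Whichever pairs are edges, some `i`, `φ` have the right type:
take `φ` to be the true edge indicator on `A`, and `i` that of the `φ`-th pair of `B`. -/
def patternType (i : Bool) (φ : Bool × Bool) : Bool × Bool := (cond i φ.2 φ.1, i)

/-- Adjacency between a pair of `A` and a pair of `B` of given type; together with the prescribed
edges inside the pairs it forms an induced path on four vertices. -/
def patternAB : Bool × Bool → Bool → Bool → Bool
  | (true, true), x, y => x && !y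
  | (false, false), x, y => x || !y
  | _, x, y => x == y

/-- Adjacency between a pair of `A` and the vertex of `C` of given type, which is joined exactly to
the two ends of the path on four vertices. -/
def patternAC : Bool × Bool → Bool → Bool
  | (true, false), _ => false
  | (false, true), _ => true
  | _, x => !x

/-- Adjacency between a pair of `B` and the vertex of `C` of given type. -/
def patternBC : Bool × Bool → Bool → Bool
  | (true, false), _ => true
  | (false, true), _ => false
  | _, y => y

/-- The edges of the pattern, oriented from `A` to `B` to `C`. -/
def patternRel : PatternVertex → PatternVertex → Prop
  | .inl (i, x), .inr (.inl (φ, y)) => patternAB (patternType i φ) x y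
  | .inl (_, x), .inr (.inr τ) => patternAC τ x
  | .inr (.inl (_, y)), .inr (.inr τ) => patternBC τ y
  | _, _ => False

/-- The part (`A`, `B` or `C`) of a vertex of the pattern. -/
def patternPart : PatternVertex → Fin 3
  | .inl _ => 0
  | .inr (.inl _) => 1
  | .inr (.inr _) => 2

set_option linter.unusedSimpArgs false in
/-- A graph that agrees with the pattern between different parts contains an induced `C₅`, whatever
its edges inside the parts. -/
lemma hasInducedC5_of_pattern {V : Type} (G : SimpleGraph V) (w : PatternVertex → V)
    (h : ∀ u v, patternPart u < patternPart v → (G.Adj (w u) (w v) ↔ patternRel u v)) :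
    HasInducedC5 G := by
  let a (i x : Bool) : V := w (.inl (i, x))
  let b (φ : Bool × Bool) (y : Bool) : V := w (.inr (.inl (φ, y)))
  let c (τ : Bool × Bool) : V := w (.inr (.inr τ))
  have hab : ∀ i x φ y, G.Adj (a i x) (b φ y) ↔ patternAB (patternType i φ) x y :=
    fun i x φ y => h (.inl (i, x)) (.inr (.inl (φ, y))) (by simp [patternPart])
  have hac : ∀ i x τ, G.Adj (a i x) (c τ) ↔ patternAC τ x :=
    fun i x τ => h (.inl (i, x)) (.inr (.inr τ)) (by simp [patternPart])
  have hbc : ∀ φ y τ, G.Adj (b φ y) (c τ) ↔ patternBC τ y :=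
    fun φ y τ => h (.inr (.inl (φ, y))) (.inr (.inr τ)) (by simp [patternPart])
  let f (i : Bool) : Bool := decide (G.Adj (a i false) (a i true))
  let φ : Bool × Bool := (f false, f true)
  let i : Bool := decide (G.Adj (b φ false) (b φ true))
  have hτ : patternType i φ = (f i, i) := by
    simp only [patternType, φ]; cases i <;> rfl
  have hf : G.Adj (a i false) (a i true) ↔ f i = true := by simp [f]
  have hi : G.Adj (b φ false) (b φ true) ↔ i = true := by simp [i]
  have hab := fun x y => hab i x φ y
  have hac := fun x => hac i x (f i, i)
  have hbc := fun y => hbc φ y (f i, i)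
  rw [hτ] at hab
  generalize c (f i, i) = z at *
  generalize a i = p at *
  generalize b φ = q at *
  generalize f i = e at *
  generalize i = i' at *
  have hba := fun x y => (G.adj_comm (q y) (p x)).trans (hab x y)
  have hca := fun x => (G.adj_comm z (p x)).trans (hac x)
  have hcb := fun y => (G.adj_comm z (q y)).trans (hbc y)
  have hf' := (G.adj_comm (p true) (p false)).trans hf
  have hi' := (G.adj_comm (q true) (q false)).trans hi
  cases e <;> cases i'
  · apply hasInducedC5_of_adj G z (p false) (q false) (p true) (q true) <;>
      simp [hab, hac, hbc, hba, hca, hcb, hf, hi, hf', hi', patternAB, patternAC, patternBC]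
  · apply hasInducedC5_of_adj G z (p false) (q false) (q true) (p true) <;>
      simp [hab, hac, hbc, hba, hca, hcb, hf, hi, hf', hi', patternAB, patternAC, patternBC]
  · apply hasInducedC5_of_adj G z (q false) (p false) (p true) (q true) <;>
      simp [hab, hac, hbc, hba, hca, hcb, hf, hi, hf', hi', patternAB, patternAC, patternBC]
  · apply hasInducedC5_of_adj G z (p false) (p true) (q false) (q true) <;>
      simp [hab, hac, hbc, hba, hca, hcb, hf, hi, hf', hi', patternAB, patternAC, patternBC]

/-- A set of pairs shattered by a family of induced-`C₅`-free graphs is a `K₃(8)`-free graph: otherwise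
a member of the family would realise the pattern on it. -/
lemma not_hasTripartite_of_shatters {V : Type} (𝒜 : Finset (Finset (Sym2 V)))
    (h𝒜 : ∀ s ∈ 𝒜, ∃ G : SimpleGraph V, ¬ HasInducedC5 G ∧ (s : Set (Sym2 V)) = G.edgeSet)
    (s : Finset (Sym2 V)) (hs : 𝒜.Shatters s) :
    ¬ HasTripartite (fromEdgeSet (s : Set (Sym2 V))) 8 := by
  rintro ⟨A, B, C, hA, hB, hC, hAB, hAC, hBC⟩
  have emb : ∀ (I : Type) [Fintype I] (A : Finset V), Fintype.card I ≤ #A →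
      ∃ a : I → V, Function.Injective a ∧ ∀ i, a i ∈ A := by
    intro I _ A h
    obtain ⟨g⟩ := Function.Embedding.nonempty_of_card_le (α := I) (β := A) (by simpa using h)
    exact ⟨fun i => g i, fun i j hij => g.injective (Subtype.ext hij), fun i => (g i).2⟩
  obtain ⟨a, ha, haA⟩ := emb (Bool × Bool) A (by simpa using le_trans (by norm_num) hA)
  obtain ⟨b, hb, hbB⟩ := emb ((Bool × Bool) × Bool) B (by simpa using hB)
  obtain ⟨c, hc, hcC⟩ := emb (Bool × Bool) C (by simpa using le_trans (by norm_num) hC)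
  let w : PatternVertex → V := Sum.elim a (Sum.elim b c)
  have hw : Function.Injective w := by
    refine ha.sumElim (hb.sumElim hc ?_) ?_
    · intro i j; exact (hBC _ (hbB i) _ (hcC j)).ne
    · rintro i (j | j)
      · exact (hAB _ (haA i) _ (hbB j)).ne
      · exact (hAC _ (haA i) _ (hcC j)).ne
  have hadj : ∀ u v, patternPart u < patternPart v → s(w u, w v) ∈ s := by
    intro u v huv
    have : (fromEdgeSet (s : Set (Sym2 V))).Adj (w u) (w v) := by
      rcases u with u | u | u <;> rcases v with v | v | v <;>
        first
        | exact hAB _ (haA u) _ (hbB v)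
        | exact hAC _ (haA u) _ (hcC v)
        | exact hBC _ (hbB u) _ (hcC v)
        | exact absurd huv (by simp [patternPart])
    simpa using ((fromEdgeSet_adj _).1 this).1
  obtain ⟨E, hE, hsE⟩ := hs (t := s.filter fun e => ∃ u v, patternPart u < patternPart v ∧
    patternRel u v ∧ e = s(w u, w v)) (filter_subset _ _)
  obtain ⟨G, hG, hEG⟩ := h𝒜 E hE
  refine hG (hasInducedC5_of_pattern G w fun u v huv => ?_)
  have h1 : G.Adj (w u) (w v) ↔ s(w u, w v) ∈ s ∩ E := by
    rw [mem_inter, ← mem_edgeSet, ← hEG, mem_coe]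
    simp [hadj u v huv]
  rw [h1, hsE, mem_filter]
  constructor
  · rintro ⟨-, u', v', h', hr, he⟩
    rw [Sym2.eq_iff] at he
    rcases he with ⟨e1, e2⟩ | ⟨e1, e2⟩
    · rw [hw e1, hw e2]; exact hr
    · rw [hw e1, hw e2] at huv
      exact absurd huv h'.not_gt
  · intro hr
    exact ⟨hadj u v huv, u, v, huv, hr, rfl⟩

/-! ### Triangle-free containers -/

/-- The blow-up of a relation `T` on `k` clusters along the assignment `f` of vertices to clusters. -/
def clusterGraph {n k : ℕ} (f : Fin n → Fin k) (T : Finset (Fin k × Fin k)) :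
    SimpleGraph (Fin n) :=
  SimpleGraph.fromRel fun x y => (f x, f y) ∈ T

lemma card_part_ge {n k : ℕ} (hk : 0 < k) {P : Finpartition (univ : Finset (Fin n))}
    (hP : P.IsEquipartition) (hPk : #P.parts ≤ k) {U : Finset (Fin n)} (hU : U ∈ P.parts) :
    (n : ℝ) / (2 * k) ≤ #U := by
  have hpos : 0 < #P.parts := card_pos.2 ⟨U, hU⟩
  have h1 := hP.average_le_card_part hU
  have h2 : 0 < #U := card_pos.2 (P.nonempty_of_mem_parts hU)
  simp only [card_univ, Fintype.card_fin] at h1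
  have h3 : n < #P.parts * (n / #P.parts + 1) := Nat.lt_mul_div_succ n hpos
  have h4 : n ≤ #U * (2 * k) := by
    calc n ≤ #P.parts * (n / #P.parts + 1) := h3.le
      _ ≤ k * (#U + #U) := Nat.mul_le_mul hPk (by omega)
      _ = _ := by ring
  rw [div_le_iff₀ (by positivity)]
  exact_mod_cast h4

/-- Every `K₃(t)`-free graph is contained, up to `εn²` edges, in a triangle-free blow-up of a graph on
boundedly many clusters. -/
lemma exists_container_s6 (t : ℕ) (ε : ℝ) (hε : 0 < ε) (hε1 : ε ≤ 1) :
    ∃ k n₀ : ℕ, ∀ n ≥ n₀, ∀ S : SimpleGraph (Fin n), ¬ HasTripartite S t →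
      ∃ (f : Fin n → Fin k) (T : Finset (Fin k × Fin k)), (clusterGraph f T).CliqueFree 3 ∧
        (#(S.edgeFinset \ (clusterGraph f T).edgeFinset) : ℝ) ≤ ε * (n : ℝ) ^ 2 := by
  set l : ℕ := ⌈4 / ε⌉₊ with hl
  set k : ℕ := SzemerediRegularity.bound (ε / 8) l with hk
  have hk0 : 0 < k := SzemerediRegularity.bound_pos _ _
  have hδ : 0 < (1 - 2 * (ε / 8)) * (ε / 8) ^ 3 * (1 / (2 * (k : ℝ))) ^ 3 := by
    have : 0 < 1 - 2 * (ε / 8) := by linarith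
    positivity
  obtain ⟨n₀, hn₀⟩ := hasTripartite_of_many_triangles t _ hδ
  refine ⟨k, max n₀ (max l 1), fun n hn S hS => ?_⟩
  simp only [ge_iff_le, max_le_iff] at hn
  obtain ⟨hn0, hnl, hn1⟩ := hn
  have : Nonempty (Fin n) := ⟨⟨0, hn1⟩⟩
  obtain ⟨P, hP1, hP2, hP3, hP4⟩ := szemeredi_regularity S (by positivity : 0 < ε / 8)
    (l := l) (by simpa using hnl)
  have hP5 : 4 / ε ≤ #P.parts := (Nat.le_ceil _).trans (by exact_mod_cast hP2)
  have hcard := regularityReduced_edges_card_aux hε hP1 hP4 hP5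
  obtain ⟨e⟩ := Function.Embedding.nonempty_of_card_le (α := P.parts) (β := Fin k)
    (by simpa using hP3)
  let f (x : Fin n) : Fin k := e ⟨P.part x, P.part_mem.2 (mem_univ x)⟩
  let good (U V : Finset (Fin n)) : Prop :=
    U ≠ V ∧ S.IsUniform (ε / 8) U V ∧ ε / 4 ≤ S.edgeDensity U V
  have good_symm : ∀ U V, good U V → good V U := by
    rintro U V ⟨h1, h2, h3⟩
    exact ⟨h1.symm, h2.symm, by rwa [edgeDensity_comm]⟩
  let T : Finset (Fin k × Fin k) :=
    {q | ∃ x y, f x = q.1 ∧ f y = q.2 ∧ good (P.part x) (P.part y)}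
  have hfpart : ∀ x y, f x = f y → P.part x = P.part y := by
    intro x y h
    have := e.injective h
    simpa using this
  have hT : ∀ x y, (f x, f y) ∈ T ↔ good (P.part x) (P.part y) := by
    intro x y
    simp only [T, mem_filter, mem_univ, true_and]
    constructor
    · rintro ⟨x', y', hx, hy, h⟩
      rwa [hfpart _ _ hx, hfpart _ _ hy] at h
    · intro h; exact ⟨x, y, rfl, rfl, h⟩
  have hK : ∀ x y, (clusterGraph f T).Adj x y ↔ good (P.part x) (P.part y) := by
    intro x y
    simp only [clusterGraph, fromRel_adj, hT]
    constructor
    · rintro ⟨-, h | h⟩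
      · exact h
      · exact good_symm _ _ h
    · intro h
      exact ⟨fun hxy => h.1 (by rw [hxy]), Or.inl h⟩
  refine ⟨f, T, ?_, ?_⟩
  · intro s hs
    obtain ⟨x, y, z, hxy, hxz, hyz, -⟩ := is3Clique_iff.1 hs
    rw [hK] at hxy hxz hyz
    -- a triangle of clusters yields many triangles, hence `K₃(t)`
    apply hS
    apply hn₀ n hn0
    have hc := triangle_counting' S (ε := ε / 8) (by linarith [hxy.2.2]) hxy.2.1
      (by linarith [hxz.2.2]) hxz.2.1 (by linarith [hyz.2.2]) hyz.2.1
    have hX := card_part_ge hk0 hP1 hP3 (P.part_mem.2 (mem_univ x))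
    have hY := card_part_ge hk0 hP1 hP3 (P.part_mem.2 (mem_univ y))
    have hZ := card_part_ge hk0 hP1 hP3 (P.part_mem.2 (mem_univ z))
    have h0 : 0 < 1 - 2 * (ε / 8) := by linarith
    calc _ = (1 - 2 * (ε / 8)) * (ε / 8) ^ 3 * ((n : ℝ) / (2 * k)) * ((n : ℝ) / (2 * k)) *
          ((n : ℝ) / (2 * k)) := by ring
      _ ≤ (1 - 2 * (ε / 8)) * (ε / 8) ^ 3 * #(P.part x) * #(P.part y) * #(P.part z) := by
          gcongr
      _ ≤ _ := hc
      _ ≤ _ := by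
          exact_mod_cast card_le_card (by
            intro q hq
            simp only [mem_filter, mem_univ, true_and] at hq ⊢
            exact hq.2)
  · set R := S.regularityReduced P (ε / 8) (ε / 4) with hR
    have hRK : R ≤ clusterGraph f T := by
      intro x y hxy
      obtain ⟨-, U, hU, V, hV, hx, hy, h⟩ := hxy
      rw [hK, P.part_eq_of_mem hU hx, P.part_eq_of_mem hV hy]
      exact h
    have h1 : #(S.edgeFinset \ (clusterGraph f T).edgeFinset) ≤
        #(S.edgeFinset \ R.edgeFinset) :=
      card_le_card (sdiff_subset_sdiff le_rfl (edgeFinset_subset_edgeFinset.2 hRK))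
    have hRS : R.edgeFinset ⊆ S.edgeFinset := edgeFinset_subset_edgeFinset.2 regularityReduced_le
    have h2 : (#(S.edgeFinset \ R.edgeFinset) : ℝ) = #S.edgeFinset - #R.edgeFinset := by
      rw [card_sdiff_of_subset hRS, Nat.cast_sub (card_le_card hRS)]
    have h3 : (#(S.edgeFinset \ (clusterGraph f T).edgeFinset) : ℝ) ≤
      #(S.edgeFinset \ R.edgeFinset) := by exact_mod_cast h1
    simp only [Fintype.card_fin] at hcard
    push_cast at hcard
    have h4 : 2 * ((#S.edgeFinset : ℝ) - #R.edgeFinset) < 2 * ε * (n : ℝ) ^ 2 := by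
      convert! hcard using 3
    linarith

/-! ### Counting -/

/-- Mantel's theorem. -/
lemma card_edgeFinset_le_of_triangleFree {n : ℕ} (K : SimpleGraph (Fin n))
    (hK : K.CliqueFree 3) : (#K.edgeFinset : ℝ) ≤ (n : ℝ) ^ 2 / 4 := by
  have h := hK.card_edgeFinset_le (r := 2)
  simp only [Fintype.card_fin] at h
  have h4 : 4 * #K.edgeFinset ≤ n ^ 2 := by
    have hc : (n % 2).choose 2 = 0 := Nat.choose_eq_zero_of_lt (Nat.mod_lt _ two_pos)
    rw [hc] at h
    have : (n ^ 2 - (n % 2) ^ 2) * (2 - 1) / (2 * 2) ≤ n ^ 2 / 4 := by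
      refine Nat.div_le_div_right ?_
      simp
    omega
  have : (4 : ℝ) * #K.edgeFinset ≤ (n : ℝ) ^ 2 := by exact_mod_cast h4
  linarith

/-- Counting `K₃(t)`-free graphs with at most `M` edges. The terms of the exponent count, in this
order, the containers, the edges inside the container, and the exceptional edges. -/
lemma card_tripartiteFree_le (t : ℕ) (ε p : ℝ) (hε : 0 < ε) (hε2 : ε ≤ 1 / 2) (hp : 0 < p)
    (hp2 : p ≤ 1 / 2) :
    ∃ D : ℝ, 0 ≤ D ∧ ∃ n₀ : ℕ, ∀ n ≥ n₀, ∀ (M : ℕ) (ℱ : Finset (Finset (Sym2 (Fin n)))),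
      (∀ s ∈ ℱ, s ⊆ (⊤ : SimpleGraph (Fin n)).edgeFinset ∧ #s ≤ M ∧
        ¬ HasTripartite (fromEdgeSet (s : Set (Sym2 (Fin n)))) t) →
      (#ℱ : ℝ) ≤ (2 : ℝ) ^ ((n + 1) * D +
        (((n : ℝ) ^ 2 / 4 * (-Real.logb 2 (1 - p)) + M * Real.logb 2 ((1 - p) / p)) +
        ((n.choose 2 : ℝ) * (-Real.logb 2 (1 - ε)) +
          ε * (n : ℝ) ^ 2 * Real.logb 2 ((1 - ε) / ε)))) := by
  obtain ⟨k, n₀, hn₀⟩ := exists_container_s6 t ε hε (by linarith)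
  refine ⟨k + k ^ 2, by positivity, n₀, fun n hn M ℱ hℱ => ?_⟩
  set E := (⊤ : SimpleGraph (Fin n)).edgeFinset with hE
  have hEc : #E = n.choose 2 := by
    rw [hE, card_edgeFinset_top_eq_card_choose_two, Fintype.card_fin]
  set m : ℕ := ⌊ε * (n : ℝ) ^ 2⌋₊ with hm
  let small (Q : Finset (Sym2 (Fin n))) (x : ℕ) : Finset (Finset (Sym2 (Fin n))) :=
    {T ∈ Q.powerset | #T ≤ x}
  let ind : Finset ((Fin n → Fin k) × Finset (Fin k × Fin k)) :=
    {q | (clusterGraph q.1 q.2).CliqueFree 3}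
  let K (q : (Fin n → Fin k) × Finset (Fin k × Fin k)) : Finset (Sym2 (Fin n)) :=
    (clusterGraph q.1 q.2).edgeFinset
  have hcover : ℱ ⊆ ind.biUnion fun q =>
      ((small (K q) M) ×ˢ (small E m)).image fun r => r.1 ∪ r.2 := by
    intro s hs
    obtain ⟨hsE, hsM, hst⟩ := hℱ s hs
    obtain ⟨f, T, hcf, hcard⟩ := hn₀ n hn _ hst
    have hse : (fromEdgeSet (s : Set (Sym2 (Fin n)))).edgeFinset = s := by
      ext e
      simp only [mem_edgeFinset, edgeSet_fromEdgeSet, Set.mem_sdiff, mem_coe, and_iff_left_iff_imp]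
      intro he
      have := hsE he
      simpa [hE] using this
    have hcard' : #(s \ K (f, T)) ≤ m := by
      refine Nat.le_floor ?_
      refine le_trans (le_of_eq ?_) hcard
      congr 2
      ext e
      have : e ∈ s ↔ e ∈ (fromEdgeSet (s : Set (Sym2 (Fin n)))).edgeFinset := by rw [hse]
      simp only [mem_sdiff, this, K, mem_edgeFinset]
    refine mem_biUnion.2 ⟨(f, T), by simpa [ind] using hcf, mem_image.2
      ⟨(s ∩ K (f, T), s \ K (f, T)), ?_, ?_⟩⟩
    · simp only [mem_product, small, mem_filter, mem_powerset]
      exact ⟨⟨inter_subset_right, (card_le_card inter_subset_left).trans hsM⟩,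
        sdiff_subset.trans hsE, hcard'⟩
    · ext e; simp only [mem_union, mem_inter, mem_sdiff]; tauto
  set a := -Real.logb 2 (1 - p) with ha
  set b := Real.logb 2 ((1 - p) / p) with hb
  set a' := -Real.logb 2 (1 - ε) with ha'
  set b' := Real.logb 2 ((1 - ε) / ε) with hb'
  have ha0 : 0 ≤ a := by
    have := Real.logb_nonpos (b := 2) (by norm_num) (by linarith : 0 ≤ 1 - p) (by linarith)
    linarith
  have hb0' : 0 ≤ b' := Real.logb_nonneg (by norm_num) (by rw [le_div_iff₀ hε]; linarith)
  have hB1 : ∀ q ∈ ind, (#(small (K q) M) : ℝ) ≤ (2 : ℝ) ^ ((n : ℝ) ^ 2 / 4 * a + M * b) := by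
    intro q hq
    refine (card_small_subsets_le (K q) M p hp hp2).trans ?_
    refine Real.rpow_le_rpow_of_exponent_le (by norm_num) ?_
    have : (#(K q) : ℝ) ≤ (n : ℝ) ^ 2 / 4 :=
      card_edgeFinset_le_of_triangleFree _ (by simpa [ind] using hq)
    gcongr
  have hB2 : (#(small E m) : ℝ) ≤
      (2 : ℝ) ^ ((n.choose 2 : ℝ) * a' + ε * (n : ℝ) ^ 2 * b') := by
    refine (card_small_subsets_le E m ε hε hε2).trans ?_
    refine Real.rpow_le_rpow_of_exponent_le (by norm_num) ?_
    rw [hEc]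
    have : (m : ℝ) ≤ ε * (n : ℝ) ^ 2 := Nat.floor_le (by positivity)
    gcongr
  have hB3 : (#ind : ℝ) ≤ (2 : ℝ) ^ (((n : ℝ) + 1) * (k + k ^ 2)) := by
    have h1 : #ind ≤ k ^ n * 2 ^ (k * k) := by
      refine (card_le_univ _).trans ?_
      simp
    have h2 : k ^ n * 2 ^ (k * k) ≤ 2 ^ ((n + 1) * (k + k ^ 2)) := by
      calc k ^ n * 2 ^ (k * k) ≤ (2 ^ k) ^ n * 2 ^ (k * k) := by
            gcongr; exact Nat.lt_two_pow_self.le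
        _ = 2 ^ (k * n + k * k) := by rw [← pow_mul, ← pow_add]
        _ ≤ _ := Nat.pow_le_pow_right two_pos (by nlinarith [Nat.zero_le (n * k ^ 2)])
    have h3 : (#ind : ℝ) ≤ (2 : ℝ) ^ ((n + 1) * (k + k ^ 2)) := by exact_mod_cast h1.trans h2
    refine h3.trans (le_of_eq ?_)
    rw [← Real.rpow_natCast]
    push_cast
    rfl
  rw [Real.rpow_add two_pos, Real.rpow_add two_pos]
  calc (#ℱ : ℝ) ≤ ∑ q ∈ ind, ((#(small (K q) M) : ℝ) * #(small E m)) := by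
        refine le_trans (Nat.cast_le.2 ((card_le_card hcover).trans card_biUnion_le)) ?_
        push_cast
        refine sum_le_sum fun q _ => ?_
        have := (card_image_le (s := (small (K q) M) ×ˢ (small E m)) (f := fun r => r.1 ∪ r.2))
        rw [card_product] at this
        exact_mod_cast this
    _ ≤ ∑ q ∈ ind, ((2 : ℝ) ^ ((n : ℝ) ^ 2 / 4 * a + M * b) *
          (2 : ℝ) ^ ((n.choose 2 : ℝ) * a' + ε * (n : ℝ) ^ 2 * b')) := by
        refine sum_le_sum fun q hq => ?_
        exact mul_le_mul (hB1 q hq) hB2 (by positivity) (by positivity)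
    _ = #ind * _ := by rw [sum_const, nsmul_eq_mul]
    _ ≤ _ := by gcongr

/-- The exceptional `εn² ≤ 4εN` edges contribute arbitrarily little to the exponent. -/
lemma exists_small_entropy (η : ℝ) (hη : 0 < η) :
    ∃ ε : ℝ, 0 < ε ∧ ε ≤ 1 / 2 ∧
      -Real.logb 2 (1 - ε) + 4 * ε * Real.logb 2 ((1 - ε) / ε) ≤ η := by
  let F : ℝ → ℝ := fun ε =>
    (-Real.log (1 - ε) + 4 * (ε * Real.log (1 - ε)) - 4 * (ε * Real.log ε)) / Real.log 2
  have hF : ContinuousAt F 0 := by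
    have h1 : ContinuousAt (fun ε : ℝ => Real.log (1 - ε)) 0 :=
      ContinuousAt.log (by fun_prop) (by norm_num)
    have h2 : ContinuousAt (fun ε : ℝ => ε * Real.log ε) 0 := Real.continuous_mul_log.continuousAt
    have h3 : ContinuousAt (fun ε : ℝ => ε) 0 := continuousAt_id
    exact ((h1.neg.add ((h3.mul h1).const_mul 4)).sub (h2.const_mul 4)).div_const _
  have hF0 : F 0 = 0 := by simp [F]
  have h1 : ∀ᶠ ε in nhds (0 : ℝ), F ε < η := hF.eventually_lt_const (by rw [hF0]; exact hη)
  have h2 : ∀ᶠ ε in nhds (0 : ℝ), ε < 1 / 2 := eventually_lt_nhds (by norm_num)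
  have h3 : ∀ᶠ ε in nhdsWithin (0 : ℝ) (Set.Ioi 0), F ε < η ∧ ε < 1 / 2 ∧ 0 < ε := by
    filter_upwards [nhdsWithin_le_nhds h1, nhdsWithin_le_nhds h2, self_mem_nhdsWithin]
      with ε a b c using ⟨a, b, c⟩
  obtain ⟨ε, hFε, hε2, hε⟩ := h3.exists
  refine ⟨ε, hε, hε2.le, le_trans (le_of_eq ?_) hFε.le⟩
  have : (1 : ℝ) - ε ≠ 0 := by linarith
  simp only [F, Real.logb, Real.log_div this hε.ne']
  ring

/-- The common form of the three ranges of `c`: `min(m, N - m) ≤ pN/2 + 1`, or else `p = 1/2` and the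
bound on the number of edges is not needed. -/
lemma card_Cset_le (c p γ : ℝ) (hc0 : 0 < c) (hc1 : c < 1) (hγ : 0 < γ) (hp : 0 < p) (hp2 : p ≤ 1 / 2)
    (hM : p = 1 / 2 ∨ c ≤ p / 2 ∨ 1 - c ≤ p / 2) :
    ∃ n₀ : ℕ, ∀ n ≥ n₀,
      ((Cset n c).card : ℝ) ≤ (2 : ℝ) ^ ((binEnt p / 2 + γ) * (n.choose 2 : ℝ)) := by
  obtain ⟨ε, hε, hε2, hεγ⟩ := exists_small_entropy (γ / 2) (by positivity)
  obtain ⟨D, hD, n₀, hn₀⟩ := card_tripartiteFree_le 8 ε p hε hε2 hp hp2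
  set a := -Real.logb 2 (1 - p) with ha
  set b := Real.logb 2 ((1 - p) / p) with hb
  set a' := -Real.logb 2 (1 - ε) with ha'
  set b' := Real.logb 2 ((1 - ε) / ε) with hb'
  have ha0 : 0 ≤ a := by
    have := Real.logb_nonpos (b := 2) (by norm_num) (by linarith : 0 ≤ 1 - p) (by linarith)
    linarith
  have hb0 : 0 ≤ b := Real.logb_nonneg (by norm_num) (by rw [le_div_iff₀ hp]; linarith)
  have hb0' : 0 ≤ b' := Real.logb_nonneg (by norm_num) (by rw [le_div_iff₀ hε]; linarith)
  have hent : binEnt p = a + p * b := by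
    rw [ha, hb, Real.logb_div (by linarith) hp.ne', binEnt]; ring
  obtain ⟨n₁, hn₁⟩ := exists_nat_ge (12 * (D + a / 4 + b) / γ)
  refine ⟨max n₀ (max n₁ 2), fun n hn => ?_⟩
  simp only [ge_iff_le, max_le_iff] at hn
  obtain ⟨hnn0, hnn1, hnn2⟩ := hn
  set N : ℝ := (n.choose 2 : ℝ) with hN
  have hNn : N = n * (n - 1) / 2 := Nat.cast_choose_two ℝ n
  set m : ℕ := ⌊c * N⌋₊ with hm
  set E := (⊤ : SimpleGraph (Fin n)).edgeFinset with hE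
  have hEc : #E = n.choose 2 := by
    rw [hE, card_edgeFinset_top_eq_card_choose_two, Fintype.card_fin]
  let 𝒜 : Finset (Finset (Sym2 (Fin n))) := (Cset n c).image fun G => G.edgeFinset
  have h𝒜c : #𝒜 = #(Cset n c) := card_image_of_injective _ fun G H h => by
    simpa using h
  have h𝒜 : ∀ s ∈ 𝒜, #s = m ∧ s ⊆ E ∧
      ∃ G : SimpleGraph (Fin n), ¬ HasInducedC5 G ∧ (s : Set (Sym2 (Fin n))) = G.edgeSet := by
    intro s hs
    obtain ⟨G, hG, rfl⟩ := mem_image.1 hs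
    simp only [Cset, mem_filter, mem_univ, true_and] at hG
    refine ⟨?_, ?_, G, hG.1, by simp⟩
    · rw [hm, hN, ← hG.2, edgeCount, Nat.card_eq_fintype_card, edgeFinset_card]
    · rw [hE]; exact edgeFinset_subset_edgeFinset.2 le_top
  have hsh := hn₀ n hnn0 (min m (n.choose 2 - m)) 𝒜.shatterer (by
    intro s hs
    rw [mem_shatterer] at hs
    obtain ⟨u, hu, hsu⟩ := hs.exists_superset
    obtain ⟨v, hv, hsv⟩ := hs (empty_subset s)
    have hsE : s ⊆ E := hsu.trans (h𝒜 u hu).2.1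
    refine ⟨hsE, le_min ((card_le_card hsu).trans (h𝒜 u hu).1.le) ?_, ?_⟩
    · -- `s` is disjoint from the `m`-element set `v`
      have h1 := card_union_of_disjoint (disjoint_iff_inter_eq_empty.2 hsv)
      have h2 := card_le_card (union_subset hsE (h𝒜 v hv).2.1)
      rw [h1, hEc, (h𝒜 v hv).1] at h2
      omega
    · exact not_hasTripartite_of_shatters 𝒜 (fun s hs => (h𝒜 s hs).2.2) s
        (by convert hs))
  set M := min m (n.choose 2 - m) with hMdef
  have hNpos : 0 ≤ N := by positivity
  have hMb : M * b ≤ (p / 2 * N + 1) * b := by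
    rcases hM with h | h | h
    · have : b = 0 := by rw [hb, h]; norm_num
      simp [this]
    · have h1 : (M : ℝ) ≤ c * N :=
        le_trans (Nat.cast_le.2 (min_le_left _ _)) (Nat.floor_le (by positivity))
      have h2 : c * N ≤ p / 2 * N := by gcongr
      gcongr
      linarith
    · have h1 : (M : ℝ) ≤ (1 - c) * N + 1 := by
        have h2 : c * N < m + 1 := Nat.lt_floor_add_one _
        rcases le_total m (n.choose 2) with h3 | h3
        · have h4 : (M : ℝ) ≤ ((n.choose 2 - m : ℕ) : ℝ) := Nat.cast_le.2 (min_le_right _ _)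
          rw [Nat.cast_sub h3] at h4
          linarith
        · have h4 : (M : ℝ) ≤ ((n.choose 2 - m : ℕ) : ℝ) := Nat.cast_le.2 (min_le_right _ _)
          rw [Nat.sub_eq_zero_of_le h3, Nat.cast_zero] at h4
          have : 0 ≤ (1 - c) * N := mul_nonneg (by linarith) hNpos
          linarith
      have h2 : (1 - c) * N ≤ p / 2 * N := by gcongr
      gcongr
      linarith
  have hn2 : (2 : ℝ) ≤ n := by exact_mod_cast hnn2
  rw [← h𝒜c]
  refine (Nat.cast_le.2 (card_le_card_shatterer 𝒜)).trans (hsh.trans ?_)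
  refine Real.rpow_le_rpow_of_exponent_le (by norm_num) ?_
  rw [hent]
  have hW : (n + 1 : ℝ) * D + n / 4 * a + b ≤ γ / 2 * N := by
    have h1 : 12 * (D + a / 4 + b) ≤ γ * n := by
      rw [div_le_iff₀ hγ] at hn₁
      have h3 : (n₁ : ℝ) ≤ n := by exact_mod_cast hnn1
      have h4 := mul_le_mul_of_nonneg_right h3 hγ.le
      linarith
    have h2 : (n + 1 : ℝ) * D + n / 4 * a + b ≤ 3 * (n - 1) * (D + a / 4 + b) := by
      have e1 := mul_nonneg (by linarith : (0 : ℝ) ≤ n - 2) hD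
      have e2 := mul_nonneg (by linarith : (0 : ℝ) ≤ n - 2) ha0
      have e3 := mul_nonneg (by linarith : (0 : ℝ) ≤ n - 2) hb0
      linarith
    have h3 := mul_le_mul_of_nonneg_left h1 (by linarith : (0 : ℝ) ≤ n - 1)
    rw [hNn]
    linarith
  have hεN : ε * (n : ℝ) ^ 2 * b' ≤ N * (4 * ε * b') := by
    have : (n : ℝ) ^ 2 ≤ 4 * N := by rw [hNn]; nlinarith
    have h2 := mul_le_mul_of_nonneg_right this (mul_nonneg hε.le hb0')
    linarith
  have hn4 : (n : ℝ) ^ 2 / 4 = N / 2 + n / 4 := by rw [hNn]; ring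
  have hγN := mul_le_mul_of_nonneg_left hεγ hNpos
  rw [hn4]
  linarith

/-- For all `c, γ ∈ (0,1)` there is `n₀` such that for all `n ≥ n₀` we have
`|𝒞(n,c)| ≤ 2^{(h(c) + γ)·C(n,2)}`. -/
theorem stmt6 (c γ : ℝ) (hc0 : 0 < c) (hc1 : c < 1) (hγ0 : 0 < γ) (hγ1 : γ < 1) :
    ∃ n₀ : ℕ, ∀ n ≥ n₀,
      ((Cset n c).card : ℝ) ≤ (2 : ℝ) ^ ((hfun c + γ) * (n.choose 2 : ℝ)) := by
  have hhalf : binEnt (1 / 2) = 1 := by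
    have h : Real.logb 2 (1 / 2) = -1 := by
      rw [one_div, Real.logb_inv, Real.logb_self_eq_one (by norm_num)]
    rw [binEnt, show (1 : ℝ) - 1 / 2 = 1 / 2 by norm_num, h]; norm_num
  have hsymm : binEnt (2 * c - 1) = binEnt (2 * (1 - c)) := by
    simp only [binEnt]
    rw [show (1 : ℝ) - (2 * c - 1) = 2 * (1 - c) by ring,
      show (1 : ℝ) - 2 * (1 - c) = 2 * c - 1 by ring]
    ring
  unfold hfun
  split_ifs with h1 h2
  · exact card_Cset_le c (2 * c) γ hc0 hc1 hγ0 (by linarith) (by linarith) (Or.inr (Or.inl (by linarith)))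
  · have := card_Cset_le c (1 / 2) γ hc0 hc1 hγ0 (by norm_num) le_rfl (Or.inl rfl)
    rwa [hhalf] at this
  · rw [hsymm]
    exact card_Cset_le c (2 * (1 - c)) γ hc0 hc1 hγ0 (by linarith) (by linarith)
      (Or.inr (Or.inr (by linarith)))
end

section
/- For every d > 0 and every integer k there exists ε > 0 such that for all f ≤ k the following holds. Let G be a graph and let V₁,…,V_f be pairwise disjoint vertex sets of G such that for all 1 ≤ i < j ≤ f the pair (Vᵢ,Vⱼ) is ε-regular. Let F be a graph on f vertices and let g : V(F) → {1,…,f} be an injective mapping such that for all 1 ≤ i < j ≤ f: d(Vᵢ,Vⱼ) ≥ d whenever {g⁻¹(i),g⁻¹(j)} is an edge of F, and d(Vᵢ,Vⱼ) ≤ 1−d whenever {g⁻¹(i),g⁻¹(j)} is not an edge of F. Then G contains an induced copy of F. -/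
/-!
The copy of `F` is embedded greedily, one vertex at a time. Every vertex `b` not yet embedded keeps
a set `C b ⊆ W b` of candidates which have the correct adjacencies to all vertices chosen so far.
By regularity, fewer than `ε |W a|` vertices `v` of `C a` are bad for a given `b`, i.e. leave `b`
fewer than `δ |C b|` candidates (`card_bad_lt`): otherwise the bad vertices and `C b` form a large
subpair whose density is too far from that of `(W a, W b)`. If `ε` is small, some `v ∈ C a` is bad
for no `b`; embedding `a` there shrinks each candidate set by a factor `δ` at worst, and the
process continues (`exists_partial_embedding`). With `δ = min (d / 2) (1 / 2)`, the choice
`ε = δ ^ (k + 1) / (k + 1)` allows `k` steps.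
-/

open Finset SimpleGraph
open scoped Classical

/-- Density of the pair `(A, B)` in `G`: `e(A,B)/(|A|·|B|)`. -/
noncomputable def dens {V : Type} (G : SimpleGraph V) (A B : Finset V) : ℝ :=
  (((A ×ˢ B).filter fun p => G.Adj p.1 p.2).card : ℝ) / ((A.card : ℝ) * (B.card : ℝ))

/-- The pair `(A, B)` is `ε`-regular in `G`: all sufficiently large subpairs have density within
`ε` of `d(A,B)`. -/
noncomputable def EpsRegular {V : Type} (G : SimpleGraph V) (ε : ℝ) (A B : Finset V) : Prop :=
  ∀ A' ⊆ A, ∀ B' ⊆ B, ε * (A.card : ℝ) ≤ (A'.card : ℝ) → ε * (B.card : ℝ) ≤ (B'.card : ℝ) →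
    |dens G A B - dens G A' B'| ≤ ε

theorem card_filter_product_eq_sum {V : Type} (G : SimpleGraph V) (A B : Finset V) :
    ((((A ×ˢ B).filter fun p => G.Adj p.1 p.2).card : ℕ) : ℝ) =
      ∑ v ∈ A, ((B.filter fun w => G.Adj v w).card : ℝ) := by
  simp only [Finset.card_filter, Finset.sum_product]
  push_cast
  rfl

theorem dens_lt_of_forall {V : Type} (G : SimpleGraph V) {A B : Finset V} (hA : A.Nonempty)
    (hB : B.Nonempty) {δ : ℝ}
    (h : ∀ v ∈ A, ((B.filter fun w => G.Adj v w).card : ℝ) < δ * B.card) :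
    dens G A B < δ := by
  have hA' : (0 : ℝ) < A.card := by exact_mod_cast hA.card_pos
  have hB' : (0 : ℝ) < B.card := by exact_mod_cast hB.card_pos
  unfold _root_.dens
  rw [div_lt_iff₀ (by positivity), card_filter_product_eq_sum]
  calc _ < ∑ v ∈ A, δ * (B.card : ℝ) := Finset.sum_lt_sum_of_nonempty hA h
    _ = δ * (A.card * B.card) := by rw [Finset.sum_const, nsmul_eq_mul]; ring

theorem lt_dens_of_forall {V : Type} (G : SimpleGraph V) {A B : Finset V} (hA : A.Nonempty)
    (hB : B.Nonempty) {δ : ℝ}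
    (h : ∀ v ∈ A, δ * B.card < ((B.filter fun w => G.Adj v w).card : ℝ)) :
    δ < dens G A B := by
  have hA' : (0 : ℝ) < A.card := by exact_mod_cast hA.card_pos
  have hB' : (0 : ℝ) < B.card := by exact_mod_cast hB.card_pos
  unfold _root_.dens
  rw [lt_div_iff₀ (by positivity), card_filter_product_eq_sum]
  calc δ * (A.card * B.card) = ∑ v ∈ A, δ * (B.card : ℝ) := by
        rw [Finset.sum_const, nsmul_eq_mul]; ring
    _ < _ := Finset.sum_lt_sum_of_nonempty hA h

/-- In a regular pair `(A, B)` of suitable density, few vertices of `A'` have fewer than `δ |B'|`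
neighbours (if `P` holds), respectively non-neighbours (if `P` fails), in a large `B' ⊆ B`.
The proposition `P` stands for the adjacency in `F` of the two vertices assigned to `A`, `B`. -/
theorem card_bad_lt {V : Type} (G : SimpleGraph V) {A B A' B' : Finset V} {d ε δ : ℝ} (P : Prop)
    (hA : A.Nonempty) (hB : B.Nonempty) (hε : 0 < ε) (hεδ : ε ≤ δ) (hδ : 2 * δ ≤ d)
    (hreg : EpsRegular G ε A B) (hP : P → d ≤ dens G A B) (hnP : ¬ P → dens G A B ≤ 1 - d)
    (hA' : A' ⊆ A) (hB' : B' ⊆ B) (hBc : ε * B.card ≤ B'.card) :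
    ((A'.filter fun v => ((B'.filter fun w => (P ↔ G.Adj v w)).card : ℝ) < δ * B'.card).card : ℝ)
      < ε * A.card := by
  by_contra! hcon
  have hApos : (0 : ℝ) < A.card := by exact_mod_cast hA.card_pos
  have hBpos : (0 : ℝ) < B.card := by exact_mod_cast hB.card_pos
  have hB'ne : B'.Nonempty := by
    rw [← Finset.card_pos]
    have : (0 : ℝ) < B'.card := lt_of_lt_of_le (by positivity) hBc
    exact_mod_cast this
  set X := A'.filter fun v => ((B'.filter fun w => (P ↔ G.Adj v w)).card : ℝ) < δ * B'.card
    with hX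
  have hXne : X.Nonempty := by
    rw [← Finset.card_pos]
    have : (0 : ℝ) < X.card := lt_of_lt_of_le (by positivity) hcon
    exact_mod_cast this
  have hr := abs_le.1 (hreg X ((Finset.filter_subset _ _).trans hA') B' hB' hcon hBc)
  by_cases p : P
  · have : dens G X B' < δ := by
      apply dens_lt_of_forall G hXne hB'ne
      intro v hv
      have := (Finset.mem_filter.1 hv).2
      simpa only [p, true_iff] using this
    linarith [hP p, hr.2]
  · have : 1 - δ < dens G X B' := by
      apply lt_dens_of_forall G hXne hB'ne
      intro v hv
      have h1 := (Finset.mem_filter.1 hv).2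
      simp only [p, false_iff] at h1
      have h2 : ((B'.filter fun w => G.Adj v w).card : ℝ) +
          ((B'.filter fun w => ¬ G.Adj v w).card : ℝ) = B'.card := by
        exact_mod_cast Finset.card_filter_add_card_filter_not (s := B') (fun w => G.Adj v w)
      linarith
    linarith [hnP p, hr.1]

/-- Greedy embedding of the vertices in `S`, given candidate sets `C b ⊆ W b` of relative size at
least `c`. The hypothesis `|S| ε < c δ ^ |S|` is preserved when a vertex is removed from `S` and
`c` is replaced by `c δ`. -/
theorem exists_partial_embedding_s7 {V β : Type} (G : SimpleGraph V) (F : SimpleGraph β)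
    (W : β → Finset V) {d ε δ : ℝ} (hε : 0 < ε) (hεδ : ε ≤ δ) (hδ : 2 * δ ≤ d) (hδ1 : δ ≤ 1)
    (hW : ∀ b, (W b).Nonempty)
    (hreg : ∀ a b, a ≠ b → EpsRegular G ε (W a) (W b))
    (hdens : ∀ a b : β, a ≠ b → (F.Adj a b → d ≤ dens G (W a) (W b)) ∧
      (¬ F.Adj a b → dens G (W a) (W b) ≤ 1 - d)) (S : Finset β) :
    ∀ (C : β → Finset V) (c : ℝ), 0 < c → (S.card : ℝ) * ε < c * δ ^ S.card →
      (∀ b ∈ S, C b ⊆ W b) → (∀ b ∈ S, c * (W b).card ≤ (C b).card) →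
      ∃ φ : β → V, (∀ b ∈ S, φ b ∈ C b) ∧
        ∀ a ∈ S, ∀ b ∈ S, a ≠ b → (F.Adj a b ↔ G.Adj (φ a) (φ b)) := by
  have hδ0 : 0 < δ := hε.trans_le hεδ
  induction S using Finset.induction_on with
  | empty =>
    intro C _ _ _ _ _
    exact ⟨fun b => (hW b).choose, by simp, by simp⟩
  | insert a S ha ih =>
    intro C c hc hcard hsub hsize
    have hWpos : ∀ b, (0 : ℝ) < (W b).card := fun b => by exact_mod_cast (hW b).card_pos
    rw [Finset.card_insert_of_notMem ha] at hcard
    push_cast at hcard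
    have hSε : 0 ≤ (S.card : ℝ) * ε := by positivity
    have hltc : (S.card : ℝ) * ε + ε < c := by
      have : c * δ ^ (S.card + 1) ≤ c * 1 :=
        mul_le_mul_of_nonneg_left (pow_le_one₀ hδ0.le hδ1) hc.le
      linarith
    let bad : β → Finset V := fun b => (C a).filter fun v =>
      (((C b).filter fun w => (F.Adj a b ↔ G.Adj v w)).card : ℝ) < δ * (C b).card
    have hbad : ∀ b ∈ S, ((bad b).card : ℝ) < ε * (W a).card := by
      intro b hb
      have hab : a ≠ b := fun h => ha (h ▸ hb)
      refine card_bad_lt G (F.Adj a b) (hW a) (hW b) hε hεδ hδ (hreg a b hab)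
        (hdens a b hab).1 (hdens a b hab).2 (hsub a (Finset.mem_insert_self a S))
        (hsub b (Finset.mem_insert_of_mem hb)) ?_
      refine le_trans ?_ (hsize b (Finset.mem_insert_of_mem hb))
      exact mul_le_mul_of_nonneg_right (by linarith) (hWpos b).le
    have hunion : ((S.biUnion bad).card : ℝ) < (C a).card := by
      calc ((S.biUnion bad).card : ℝ) ≤ ∑ b ∈ S, ((bad b).card : ℝ) := by
            exact_mod_cast Finset.card_biUnion_le
        _ ≤ ∑ b ∈ S, ε * (W a).card := Finset.sum_le_sum fun b hb => (hbad b hb).le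
        _ = (S.card : ℝ) * ε * (W a).card := by rw [Finset.sum_const, nsmul_eq_mul]; ring
        _ < c * (W a).card := mul_lt_mul_of_pos_right (by linarith) (hWpos a)
        _ ≤ _ := hsize a (Finset.mem_insert_self a S)
    obtain ⟨v, hvC, hv⟩ := Finset.exists_mem_notMem_of_card_lt_card (by exact_mod_cast hunion)
    have hgood : ∀ b ∈ S,
        δ * (C b).card ≤ (((C b).filter fun w => (F.Adj a b ↔ G.Adj v w)).card : ℝ) := by
      intro b hb
      by_contra! hlt
      exact hv (Finset.mem_biUnion.2 ⟨b, hb, Finset.mem_filter.2 ⟨hvC, hlt⟩⟩)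
    obtain ⟨φ, hφC, hφ⟩ := ih (fun b => (C b).filter fun w => (F.Adj a b ↔ G.Adj v w)) (c * δ)
      (by positivity) (by rw [pow_succ] at hcard; linarith)
      (fun b hb => (Finset.filter_subset _ _).trans (hsub b (Finset.mem_insert_of_mem hb)))
      (fun b hb => by
        refine le_trans ?_ (hgood b hb)
        have := mul_le_mul_of_nonneg_left (hsize b (Finset.mem_insert_of_mem hb)) hδ0.le
        linarith)
    have hne : ∀ b ∈ S, b ≠ a := fun b hb h => ha (h ▸ hb)
    refine ⟨Function.update φ a v, ?_, ?_⟩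
    · intro b hb
      rcases Finset.mem_insert.1 hb with rfl | hb
      · simpa using hvC
      · rw [Function.update_of_ne (hne b hb)]
        exact (Finset.mem_filter.1 (hφC b hb)).1
    · intro x hx y hy hxy
      rcases Finset.mem_insert.1 hx with rfl | hx' <;> rcases Finset.mem_insert.1 hy with rfl | hy'
      · exact absurd rfl hxy
      · rw [Function.update_self, Function.update_of_ne (hne y hy')]
        exact (Finset.mem_filter.1 (hφC y hy')).2
      · rw [Function.update_self, Function.update_of_ne (hne x hx'), F.adj_comm, G.adj_comm]
        exact (Finset.mem_filter.1 (hφC x hx')).2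
      · rw [Function.update_of_ne (hne x hx'), Function.update_of_ne (hne y hy')]
        exact hφ x hx' y hy' hxy

/-- Injective embedding lemma for induced subgraphs: for every `d > 0` and integer `k` there is
`ε > 0` such that for every `f ≤ k`, every family `V₁,…,V_f` of pairwise disjoint nonempty
pairwise `ε`-regular vertex sets of a graph `G`, every graph `F` on `f` vertices and every
injective assignment `g` of the vertices of `F` to the indices `1,…,f` such that edges of `F` go
to pairs of density at least `d` and non-edges to pairs of density at most `1 − d`, the graph `G`
contains an induced copy of `F`. -/
theorem stmt7 (d : ℝ) (hd : 0 < d) (k : ℕ) :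
    ∃ ε : ℝ, 0 < ε ∧ ∀ f : ℕ, f ≤ k →
      ∀ (V : Type) (G : SimpleGraph V) (W : Fin f → Finset V),
        (∀ i j, i ≠ j → Disjoint (W i) (W j)) →
        (∀ i, (W i).Nonempty) →
        (∀ i j, i ≠ j → EpsRegular G ε (W i) (W j)) →
      ∀ (β : Type) [Fintype β] (F : SimpleGraph β) (g : β ↪ Fin f),
        Fintype.card β = f →
        (∀ a b : β, a ≠ b →
          (F.Adj a b → d ≤ dens G (W (g a)) (W (g b))) ∧
          (¬ F.Adj a b → dens G (W (g a)) (W (g b)) ≤ 1 - d)) →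
        Nonempty (F ↪g G) := by
  set δ : ℝ := min (d / 2) (1 / 2) with hδdef
  have hδ0 : 0 < δ := lt_min (by linarith) (by norm_num)
  have hδd : 2 * δ ≤ d := by linarith [min_le_left (d / 2) (1 / 2 : ℝ)]
  have hδ1 : δ ≤ 1 := by linarith [min_le_right (d / 2) (1 / 2 : ℝ)]
  -- The extra factor `δ` ensures `ε ≤ δ` also for `k = 0`.
  refine ⟨δ ^ (k + 1) / (k + 1), by positivity, ?_⟩
  intro f hf V G W hdisj hne hreg β _ F g hcard hdens
  have hεδ : δ ^ (k + 1) / ((k : ℝ) + 1) ≤ δ := by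
    rw [div_le_iff₀ (by positivity), pow_succ]
    have h1 : δ ^ k ≤ 1 := pow_le_one₀ hδ0.le hδ1
    have h2 : (0 : ℝ) ≤ k := Nat.cast_nonneg k
    nlinarith [mul_nonneg hδ0.le h2]
  obtain ⟨φ, hφW, hφ⟩ := exists_partial_embedding_s7 G F (fun b => W (g b)) (by positivity) hεδ hδd
    hδ1 (fun b => hne _) (fun a b hab => hreg _ _ (g.injective.ne hab)) hdens Finset.univ
    (fun b => W (g b)) 1 one_pos (by
      rw [Finset.card_univ, hcard, one_mul, mul_div_assoc', div_lt_iff₀ (by positivity)]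
      have h1 : δ ^ (k + 1) ≤ δ ^ f := pow_le_pow_of_le_one hδ0.le hδ1 (by omega)
      have h2 : (f : ℝ) ≤ k := by exact_mod_cast hf
      have h3 : 0 < δ ^ f := by positivity
      calc (f : ℝ) * δ ^ (k + 1) ≤ f * δ ^ f := mul_le_mul_of_nonneg_left h1 (Nat.cast_nonneg f)
        _ < δ ^ f * (k + 1) := by nlinarith)
    (fun _ _ => Finset.Subset.refl _) (fun _ _ => by rw [one_mul])
  have hinj : Function.Injective φ := by
    intro a b hab
    by_contra hne'
    refine Finset.disjoint_left.1 (hdisj _ _ (g.injective.ne hne'))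
      (hφW a (Finset.mem_univ a)) ?_
    rw [hab]
    exact hφW b (Finset.mem_univ b)
  refine ⟨⟨⟨φ, hinj⟩, ?_⟩⟩
  intro a b
  by_cases hab : a = b
  · subst hab; simp
  · exact (hφ a (Finset.mem_univ a) b (Finset.mem_univ b) hab).symm
end

section
/- For every integer k and every ε > 0 there exists μ > 0 such that every graph G on n ≥ μ⁻¹ vertices either has a sparse (μ,ε,k)-subpartition or a dense (μ,ε,k)-subpartition. -/
/-!
Szemerédi's regularity lemma gives an equipartition with boundedly many parts `m`, at least
`4 * 4 ^ k` of them, in which at most a fraction `1 / (8 * 4 ^ k)` of the pairs of parts are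
irregular. By averaging, at least `m / 2` parts lie in at most `m / (4 * 4 ^ k)` irregular pairs
(`exists_half_small_degree`). The usual neighbourhood-halving proof of Ramsey's theorem, in which
the irregular partners of the chosen part are discarded at each step (`ramsey_few_bad`), then finds
`k` parts among these that are pairwise regular and have pairwise densities all below `1/2` or all
at least `1/2`. Boundedly many parts of an equipartition each contain a constant proportion of the
vertices, which provides `μ`.
-/


open Finset SimpleGraph
open scoped Classical

/-- `W` is a `(μ, ε, k)`-subpartition of `G`: pairwise disjoint vertex sets, each of size at
least `μ|V|`, forming pairwise `ε`-regular pairs. -/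
noncomputable def IsSubpartition {V : Type} [Fintype V] (G : SimpleGraph V) (μ ε : ℝ) (k : ℕ)
    (W : Fin k → Finset V) : Prop :=
  (∀ i j, i ≠ j → Disjoint (W i) (W j)) ∧
  (∀ i, μ * (Fintype.card V : ℝ) ≤ ((W i).card : ℝ)) ∧
  (∀ i j, i ≠ j → EpsRegular G ε (W i) (W j))

/-- `G` has a sparse `(μ, ε, k)`-subpartition (all pairs of density below `1/2`). -/
noncomputable def HasSparseSub {V : Type} [Fintype V] (G : SimpleGraph V) (μ ε : ℝ) (k : ℕ) :
    Prop :=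
  ∃ W : Fin k → Finset V, IsSubpartition G μ ε k W ∧
    ∀ i j, i ≠ j → dens G (W i) (W j) < 1/2

/-- `G` has a dense `(μ, ε, k)`-subpartition (all pairs of density at least `1/2`). -/
noncomputable def HasDenseSub {V : Type} [Fintype V] (G : SimpleGraph V) (μ ε : ℝ) (k : ℕ) :
    Prop :=
  ∃ W : Fin k → Finset V, IsSubpartition G μ ε k W ∧
    ∀ i j, i ≠ j → 1/2 ≤ dens G (W i) (W j)

/-- Ramsey's theorem for two colours (`red` and not `red`) with some `bad` uncoloured pairs, of
degree at most `D`. The size bound `(2 ^ (a + b) - 1) * (D + 1)` is self-reproducing: removing a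
vertex with its bad neighbours costs at most `D + 1`, and halving what is left gives exactly the
bound for `a + b - 1`. -/
lemma ramsey_few_bad {α : Type} (bad red : α → α → Prop)
    (hbad : ∀ x y, bad x y → bad y x) (hred : ∀ x y, red x y → red y x) (D : ℝ) (hD : 0 ≤ D)
    (n : ℕ) : ∀ (a b : ℕ), a + b = n → ∀ S : Finset α,
      (∀ v ∈ S, (#{w ∈ S | bad v w} : ℝ) ≤ D) →
      ((2 : ℝ) ^ (a + b) - 1) * (D + 1) ≤ #S →
      (∃ T ⊆ S, #T = a ∧ ∀ x ∈ T, ∀ y ∈ T, x ≠ y → ¬ bad x y ∧ red x y) ∨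
      (∃ T ⊆ S, #T = b ∧ ∀ x ∈ T, ∀ y ∈ T, x ≠ y → ¬ bad x y ∧ ¬ red x y) := by
  induction n with
  | zero =>
    intro a b hab S _ _
    exact Or.inl ⟨∅, by simp, by simp; omega, by simp⟩
  | succ n ih =>
    intro a b hab S hS hcard
    rcases a with _ | a
    · exact Or.inl ⟨∅, by simp, by simp, by simp⟩
    rcases b with _ | b
    · exact Or.inr ⟨∅, by simp, by simp, by simp⟩
    have hpow : (1 : ℝ) ≤ 2 ^ (a + b) := one_le_pow₀ (by norm_num)
    have hpos : 0 < #S := by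
      have : (0 : ℝ) < #S := by
        refine lt_of_lt_of_le ?_ hcard
        have : (2 : ℝ) ^ (a + 1 + (b + 1)) = 4 * 2 ^ (a + b) := by ring
        rw [this]
        exact mul_pos (by linarith) (by linarith)
      exact_mod_cast this
    obtain ⟨v, hv⟩ := card_pos.mp hpos
    set R := {w ∈ S | w ≠ v ∧ ¬ bad v w ∧ red v w} with hR
    set B := {w ∈ S | w ≠ v ∧ ¬ bad v w ∧ ¬ red v w} with hB
    have hcover : S ⊆ insert v ({w ∈ S | bad v w} ∪ (R ∪ B)) := by
      intro w hw
      simp only [hR, hB, mem_insert, mem_union, mem_filter]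
      tauto
    have hle : (#S : ℝ) ≤ #R + #B + D + 1 := by
      have h1 := (card_le_card hcover).trans (card_insert_le _ _)
      have h2 := card_union_le {w ∈ S | bad v w} (R ∪ B)
      have h3 := card_union_le R B
      have h4 : (#S : ℝ) ≤ #{w ∈ S | bad v w} + (#R + #B) + 1 := by
        exact_mod_cast (by omega : #S ≤ #{w ∈ S | bad v w} + (#R + #B) + 1)
      have := hS v hv
      linarith
    have hsub : ∀ U ⊆ S, ∀ v ∈ U, (#{w ∈ U | bad v w} : ℝ) ≤ D := fun U hU v hv =>
      le_trans (by exact_mod_cast card_le_card (filter_subset_filter _ hU)) (hS v (hU hv))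
    have hRS : R ⊆ S := filter_subset _ _
    have hBS : B ⊆ S := filter_subset _ _
    have hsplit : ((2 : ℝ) ^ (a + b + 1) - 1) * (D + 1) ≤ #R ∨
        ((2 : ℝ) ^ (a + b + 1) - 1) * (D + 1) ≤ #B := by
      by_contra! h
      have : (2 : ℝ) ^ (a + 1 + (b + 1)) = 2 * 2 ^ (a + b + 1) := by ring
      rw [this] at hcard
      linarith [h.1, h.2]
    rcases hsplit with h | h
    · rcases ih a (b + 1) (by omega) R (hsub R hRS) (by rwa [← add_assoc]) with
        ⟨T, hT, hTc, hTp⟩ | ⟨T, hT, hTc, hTp⟩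
      · left
        have hTv : ∀ w ∈ T, w ≠ v ∧ ¬ bad v w ∧ red v w := fun w hw =>
          (mem_filter.mp (hT hw)).2
        refine ⟨insert v T, insert_subset hv (hT.trans hRS), ?_, ?_⟩
        · rw [card_insert_of_notMem fun h => (hTv v h).1 rfl, hTc]
        · intro x hx y hy hxy
          rcases mem_insert.mp hx with rfl | hx' <;> rcases mem_insert.mp hy with rfl | hy'
          · exact absurd rfl hxy
          · exact (hTv y hy').2
          · exact ⟨fun h => (hTv x hx').2.1 (hbad _ _ h), hred _ _ (hTv x hx').2.2⟩
          · exact hTp x hx' y hy' hxy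
      · exact Or.inr ⟨T, hT.trans hRS, hTc, hTp⟩
    · rcases ih (a + 1) b (by omega) B (hsub B hBS) (by rwa [add_right_comm]) with
        ⟨T, hT, hTc, hTp⟩ | ⟨T, hT, hTc, hTp⟩
      · exact Or.inl ⟨T, hT.trans hBS, hTc, hTp⟩
      · right
        have hTv : ∀ w ∈ T, w ≠ v ∧ ¬ bad v w ∧ ¬ red v w := fun w hw =>
          (mem_filter.mp (hT hw)).2
        refine ⟨insert v T, insert_subset hv (hT.trans hBS), ?_, ?_⟩
        · rw [card_insert_of_notMem fun h => (hTv v h).1 rfl, hTc]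
        · intro x hx y hy hxy
          rcases mem_insert.mp hx with rfl | hx' <;> rcases mem_insert.mp hy with rfl | hy'
          · exact absurd rfl hxy
          · exact (hTv y hy').2
          · exact ⟨fun h => (hTv x hx').2.1 (hbad _ _ h), fun h => (hTv x hx').2.2 (hred _ _ h)⟩
          · exact hTp x hx' y hy' hxy

/-- Markov's inequality for degrees: at least half of the vertices have at most twice the average
degree. -/
lemma exists_half_small_degree {α : Type} (bad : α → α → Prop) (P : Finset α) (D : ℝ) (hD : 0 < D)
    (h : (#{p ∈ P ×ˢ P | bad p.1 p.2} : ℝ) ≤ #P * D / 2) :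
    ∃ S ⊆ P, (#P : ℝ) / 2 ≤ #S ∧ ∀ v ∈ S, (#{w ∈ S | bad v w} : ℝ) ≤ D := by
  refine ⟨{v ∈ P | (#{w ∈ P | bad v w} : ℝ) ≤ D}, filter_subset _ _, ?_, ?_⟩
  · have hsum : (#{p ∈ P ×ˢ P | bad p.1 p.2} : ℝ) = ∑ v ∈ P, (#{w ∈ P | bad v w} : ℝ) := by
      rw [card_filter, sum_product]
      push_cast [card_filter]
      rfl
    have hsplit := card_filter_add_card_filter_not (s := P)
      (fun v => (#{w ∈ P | bad v w} : ℝ) ≤ D)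
    have hlow : (#{v ∈ P | ¬ (#{w ∈ P | bad v w} : ℝ) ≤ D} : ℝ) * D ≤
        ∑ v ∈ P, (#{w ∈ P | bad v w} : ℝ) := by
      rw [← nsmul_eq_mul]
      refine (card_nsmul_le_sum _ (fun v => (#{w ∈ P | bad v w} : ℝ)) D ?_).trans
        (sum_le_sum_of_subset_of_nonneg (filter_subset _ _) fun _ _ _ => Nat.cast_nonneg _)
      intro v hv
      exact (not_le.mp (mem_filter.mp hv).2).le
    have hbig : (#{v ∈ P | ¬ (#{w ∈ P | bad v w} : ℝ) ≤ D} : ℝ) ≤ #P / 2 := by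
      refine le_of_mul_le_mul_right ?_ hD
      linarith
    have : (#{v ∈ P | (#{w ∈ P | bad v w} : ℝ) ≤ D} : ℝ) +
        #{v ∈ P | ¬ (#{w ∈ P | bad v w} : ℝ) ≤ D} = #P := by exact_mod_cast hsplit
    linarith
  · intro v hv
    refine le_trans ?_ (mem_filter.mp hv).2
    exact_mod_cast card_le_card (filter_subset_filter _ (filter_subset _ _))

lemma dens_eq_edgeDensity {V : Type} (G : SimpleGraph V) (A B : Finset V) :
    dens G A B = (G.edgeDensity A B : ℝ) := by
  rw [SimpleGraph.edgeDensity_def, SimpleGraph.interedges_def, _root_.dens]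
  push_cast
  rfl

lemma dens_symm {V : Type} (G : SimpleGraph V) (A B : Finset V) : dens G A B = dens G B A := by
  rw [dens_eq_edgeDensity, dens_eq_edgeDensity, SimpleGraph.edgeDensity_comm]

lemma epsRegular_of_isUniform {V : Type} (G : SimpleGraph V) {ε : ℝ} {A B : Finset V}
    (h : G.IsUniform ε A B) : EpsRegular G ε A B := by
  intro A' hA B' hB hA' hB'
  rw [dens_eq_edgeDensity, dens_eq_edgeDensity, abs_sub_comm]
  exact (h hA hB (by linarith) (by linarith)).le

lemma isSubpartition_of_parts {V : Type} [Fintype V] (G : SimpleGraph V) {μ ε η : ℝ} {k : ℕ}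
    (P : Finpartition (univ : Finset V)) (hη : η ≤ ε)
    (hμ : ∀ A ∈ P.parts, μ * (Fintype.card V : ℝ) ≤ #A)
    (W : Fin k → Finset V) (hinj : Function.Injective W) (hW : ∀ i, W i ∈ P.parts)
    (hu : ∀ i j, i ≠ j → G.IsUniform η (W i) (W j)) : IsSubpartition G μ ε k W :=
  ⟨fun i j hij => P.disjoint (hW i) (hW j) (hinj.ne hij), fun i => hμ _ (hW i),
    fun i j hij => epsRegular_of_isUniform G ((hu i j hij).mono hη)⟩

/-- For every integer `k` and every `ε > 0` there exists `μ > 0` such that every graph on at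
least `μ⁻¹` vertices has a sparse or a dense `(μ, ε, k)`-subpartition. -/
theorem stmt8 (k : ℕ) (ε : ℝ) (hε : 0 < ε) :
    ∃ μ : ℝ, 0 < μ ∧ ∀ (V : Type) [Fintype V] (G : SimpleGraph V),
      μ⁻¹ ≤ (Fintype.card V : ℝ) →
      HasSparseSub G μ ε k ∨ HasDenseSub G μ ε k := by
  set K : ℝ := 4 ^ k with hK
  have hK0 : 0 < K := by positivity
  set η : ℝ := min ε (1 / (8 * K)) with hη
  have hη0 : 0 < η := lt_min hε (by positivity)
  set l : ℕ := 4 * 4 ^ k with hl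
  have hl0 : 0 < l := by positivity
  set M : ℕ := SzemerediRegularity.bound η l with hM
  have hM0 : 0 < M := SzemerediRegularity.bound_pos η l
  have hM0' : (0 : ℝ) < M := by exact_mod_cast hM0
  refine ⟨1 / (2 * M), by positivity, ?_⟩
  intro V _ G hV
  have hV' : 2 * M ≤ Fintype.card V := by
    rw [one_div, inv_inv] at hV
    exact_mod_cast hV
  have hlM : l ≤ M := SzemerediRegularity.le_bound η l
  obtain ⟨P, hequi, hlP, hPM, hunif⟩ :=
    szemeredi_regularity G hη0 (show l ≤ Fintype.card V by omega)
  set m := #P.parts with hm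
  have hm0 : 0 < m := by omega
  have hm0' : (0 : ℝ) < m := by exact_mod_cast hm0
  have hlm : 4 * K ≤ m := by
    have : (l : ℝ) ≤ m := by exact_mod_cast hlP
    simpa [hl, hK] using this
  have hsize : ∀ A ∈ P.parts, 1 / (2 * (M : ℝ)) * (Fintype.card V : ℝ) ≤ #A := by
    intro A hA
    have h1 : Fintype.card V / m ≤ #A := by
      simpa using hequi.average_le_card_part hA
    have h2 : Fintype.card V < m * (#A + 1) := by
      have := Nat.lt_mul_div_succ (Fintype.card V) hm0
      exact this.trans_le (Nat.mul_le_mul_left _ (by omega))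
    have h3 : 1 ≤ #A := card_pos.mpr (P.nonempty_of_mem_parts hA)
    have h4 : Fintype.card V ≤ 2 * M * #A :=
      calc Fintype.card V ≤ m * (#A + 1) := h2.le
        _ ≤ M * (2 * #A) := Nat.mul_le_mul hPM (by omega)
        _ = 2 * M * #A := by ring
    rw [one_div_mul_eq_div, div_le_iff₀ (by positivity)]
    have : (Fintype.card V : ℝ) ≤ 2 * M * #A := by exact_mod_cast h4
    linarith
  let bad : Finset V → Finset V → Prop := fun A B => A ≠ B ∧ ¬ G.IsUniform η A B
  let red : Finset V → Finset V → Prop := fun A B => dens G A B < 1 / 2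
  have hcount : (#{p ∈ P.parts ×ˢ P.parts | bad p.1 p.2} : ℝ) ≤ m * (m / (4 * K)) / 2 := by
    have h1 : {p ∈ P.parts ×ˢ P.parts | bad p.1 p.2} ⊆ P.nonUniforms G η := by
      rintro ⟨A, B⟩ h
      simp only [mem_filter, mem_product] at h
      exact (Finpartition.mk_mem_nonUniforms P G).mpr ⟨h.1.1, h.1.2, h.2.1, h.2.2⟩
    have h2 : (#(P.nonUniforms G η) : ℝ) ≤ ((m * (m - 1) : ℕ) : ℝ) * η := hunif
    have h3 : ((m * (m - 1) : ℕ) : ℝ) ≤ m * m := by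
      exact_mod_cast Nat.mul_le_mul_left m (Nat.sub_le m 1)
    calc (#{p ∈ P.parts ×ˢ P.parts | bad p.1 p.2} : ℝ)
        ≤ #(P.nonUniforms G η) := by exact_mod_cast card_le_card h1
      _ ≤ ((m * (m - 1) : ℕ) : ℝ) * η := h2
      _ ≤ (m * m) * (1 / (8 * K)) :=
          mul_le_mul h3 (min_le_right _ _) hη0.le (by positivity)
      _ = m * (m / (4 * K)) / 2 := by field_simp; norm_num
  obtain ⟨S, hSP, hSc, hSd⟩ :=
    exists_half_small_degree bad P.parts (m / (4 * K)) (by positivity) (by convert hcount)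
  have hbig : ((2 : ℝ) ^ (k + k) - 1) * (m / (4 * K) + 1) ≤ #S := by
    have h1 : (2 : ℝ) ^ (k + k) = K := by
      rw [hK, ← two_mul, pow_mul]; norm_num
    rw [h1]
    have h2 : K * (m / (4 * K)) = m / 4 := by field_simp
    have h3 : 0 ≤ (m : ℝ) / (4 * K) := by positivity
    linarith
  have hram := ramsey_few_bad bad red
    (fun A B h => ⟨h.1.symm, fun hu => h.2 hu.symm⟩)
    (fun A B h => by simpa only [red, dens_symm G B A] using h)
    (m / (4 * K)) (by positivity) (k + k) k k rfl S hSd hbig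
  have hnot : ∀ A B, A ≠ B → ¬ bad A B → G.IsUniform η A B := fun A B hne h => by
    by_contra hu
    exact h ⟨hne, hu⟩
  rcases hram with ⟨T, hT, hTc, hTp⟩ | ⟨T, hT, hTc, hTp⟩
  · left
    let e := T.equivFinOfCardEq hTc
    have hinj : Function.Injective fun i => (e.symm i : Finset V) :=
      Subtype.val_injective.comp e.symm.injective
    have hp := fun i j (hij : i ≠ j) =>
      hTp _ (e.symm i).2 _ (e.symm j).2 (hinj.ne hij)
    exact ⟨fun i => e.symm i, isSubpartition_of_parts G P (min_le_left _ _) hsize _ hinj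
      (fun i => hSP (hT (e.symm i).2)) (fun i j hij => hnot _ _ (hinj.ne hij) (hp i j hij).1),
      fun i j hij => (hp i j hij).2⟩
  · right
    let e := T.equivFinOfCardEq hTc
    have hinj : Function.Injective fun i => (e.symm i : Finset V) :=
      Subtype.val_injective.comp e.symm.injective
    have hp := fun i j (hij : i ≠ j) =>
      hTp _ (e.symm i).2 _ (e.symm j).2 (hinj.ne hij)
    exact ⟨fun i => e.symm i, isSubpartition_of_parts G P (min_le_left _ _) hsize _ hinj
      (fun i => hSP (hT (e.symm i).2)) (fun i j hij => hnot _ _ (hinj.ne hij) (hp i j hij).1),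
      fun i j hij => not_lt.mp (hp i j hij).2⟩
end

section
/- For every integer k′ ≥ 5 and every d > 0 there exist ε₀, ε′₀ > 0 such that for every 0 < ε ≤ ε₀ and every 0 < ε′ ≤ ε′₀ the following is true: if G is a graph that has an (ε,ε′,d,k′)-type R containing three grey edges forming a triangle, then G contains an induced cycle of length 5. -/
/-!
Three clusters `X`, `Y`, `Z` of equal size that are pairwise `ε`-regular with densities
in `[d, 1 - d]` span an induced five-cycle whatever the edges inside the clusters are. This is
shown by counting tuples
`(x₀, x₁, y₀, y₁, z) ∈ X² × Y² × Z`.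

Among pairs of distinct vertices of `X`, at least half are adjacent or at least half are
non-adjacent; likewise for `Y`. In each of the four resulting cases the vertices of the five-cycle
can be split into two pairs of the prescribed kinds and a single vertex (`exists_layout`):
consecutive vertices form an adjacent pair, and vertices at distance two a non-adjacent one. It
remains to impose the eight adjacency conditions between different clusters. For a single such
condition, fix the other three entries of the tuple: the conditions imposed so far restrict the
two entries concerned to a product set, in which by regularity at least a proportion `d` of the
pairs is as desired, up to an error of `ε` times the number of all pairs (`tupleCount_cons`). With
`m` tuples in all, at least `(d ^ 8 / 8 - 8 * ε) * m > 0` survive.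

Distinctness inside a cluster is treated by the same counting step, since a grey pair forces the
clusters to have at least `1 / ε` vertices (`EpsRegular.one_le_mul_card`).
-/

open Finset SimpleGraph
open scoped Classical

/-- `μ` is a valid constant for `(ε', k')`: every graph on at least `μ⁻¹` vertices has a sparse
or a dense `(μ, ε', k')`-subpartition. -/
noncomputable def GoodMu (μ ε' : ℝ) (k' : ℕ) : Prop :=
  0 < μ ∧ ∀ (V : Type) [Fintype V] (G : SimpleGraph V), μ⁻¹ ≤ (Fintype.card V : ℝ) →
    HasSparseSub G μ ε' k' ∨ HasDenseSub G μ ε' k'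

/-- A coloured graph: a graph on `Fin k` together with a colouring of the vertices by `{0, 1}`
and of the edges by `{0, 1/2, 1}` (white, grey, black). -/
structure ColouredGraph (k : ℕ) where
  graph : SimpleGraph (Fin k)
  vcol : Fin k → ℝ
  ecol : Fin k → Fin k → ℝ
  vcol_mem : ∀ i, vcol i = 0 ∨ vcol i = 1
  ecol_symm : ∀ i j, ecol i j = ecol j i
  ecol_mem : ∀ i j, graph.Adj i j → ecol i j = 0 ∨ ecol i j = 1/2 ∨ ecol i j = 1

/-- The number of non-edges of the underlying graph of a coloured graph. -/
noncomputable def ColouredGraph.nonEdges {k : ℕ} (R : ColouredGraph k) : ℕ :=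
  ((univ : Finset (Fin k × Fin k)).filter fun p => p.1 < p.2 ∧ ¬ R.graph.Adj p.1 p.2).card

/-- `R` contains a triangle all three of whose edges are grey. -/
def ColouredGraph.HasGreyTriangle {k : ℕ} (R : ColouredGraph k) : Prop :=
  ∃ i j l : Fin k, R.graph.Adj i j ∧ R.graph.Adj j l ∧ R.graph.Adj i l ∧
    R.ecol i j = 1/2 ∧ R.ecol j l = 1/2 ∧ R.ecol i l = 1/2

/-- `G` has `(ε, ε', d, k')`-type `R`: there is a partition `V(G) = V₀ ∪ V₁ ∪ … ∪ V_k` with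
`|V₀| ≤ ε|V(G)|`, `|V₁| = … = |V_k|`, such that `{i,j}` is an edge of `R` exactly when
`(Vᵢ,Vⱼ)` is `ε`-regular, at most `ε·C(k,2)` pairs are not `ε`-regular, edges of `R` are
coloured `0`/`1`/`1/2` according to whether the density of the corresponding pair is `< d`,
`> 1 − d`, or in between, and a vertex `i` is coloured `0` (resp. `1`) only if `G[Vᵢ]` has a
sparse (resp. dense) `(μ, ε', k')`-subpartition, where `μ = μ(ε',k')` is a valid constant. -/
noncomputable def HasType {n : ℕ} (G : SimpleGraph (Fin n)) (ε ε' d : ℝ) (k' : ℕ) {k : ℕ}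
    (R : ColouredGraph k) : Prop :=
  ∃ μ : ℝ, GoodMu μ ε' k' ∧
  ∃ (V0 : Finset (Fin n)) (W : Fin k → Finset (Fin n)),
    (∀ i j, i ≠ j → Disjoint (W i) (W j)) ∧
    (∀ i, Disjoint V0 (W i)) ∧
    (V0 ∪ univ.biUnion W = univ) ∧
    ((V0.card : ℝ) ≤ ε * n) ∧
    (∀ i j, (W i).card = (W j).card) ∧
    (∀ i j, i ≠ j → (R.graph.Adj i j ↔ EpsRegular G ε (W i) (W j))) ∧
    ((((univ : Finset (Fin k × Fin k)).filter fun p =>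
        p.1 < p.2 ∧ ¬ EpsRegular G ε (W p.1) (W p.2)).card : ℝ) ≤ ε * (k.choose 2 : ℝ)) ∧
    (∀ i j, R.graph.Adj i j →
      (dens G (W i) (W j) < d → R.ecol i j = 0) ∧
      (1 - d < dens G (W i) (W j) → R.ecol i j = 1) ∧
      (d ≤ dens G (W i) (W j) → dens G (W i) (W j) ≤ 1 - d → R.ecol i j = 1/2)) ∧
    (∀ i, (R.vcol i = 0 → HasSparseSub (G.induce ↑(W i)) μ ε' k') ∧
          (R.vcol i = 1 → HasDenseSub (G.induce ↑(W i)) μ ε' k'))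

/-! ### Counting tuples subject to binary constraints -/

/-- A binary constraint on 5-tuples of vertices: the entries at two given positions satisfy a
given relation. -/
abbrev Constraint (V : Type) := Fin 5 × Fin 5 × (V → V → Prop)

/-- The tuple `t` satisfies every constraint of the list. -/
def Sat {V : Type} (L : List (Constraint V)) (t : Fin 5 → V) : Prop :=
  ∀ c ∈ L, c.2.2 (t c.1) (t c.2.1)

/-- The number of tuples in `∏ i, A i` satisfying all constraints of `L`. -/
noncomputable def tupleCount {V : Type} (A : Fin 5 → Finset V) (L : List (Constraint V)) : ℕ :=
  #{t ∈ Fintype.piFinset A | Sat L t}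

/-- One-sided regularity of a relation, with an additive error measured against `|A||B|`: every
subpair, however small, contains at least `q|A'||B'| - ε|A||B|` related pairs. -/
def LowerRegular {V : Type} (q ε : ℝ) (A B : Finset V) (M : V → V → Prop) : Prop :=
  ∀ A' ⊆ A, ∀ B' ⊆ B, q * (#A' * #B') - ε * (#A * #B) ≤ (#{p ∈ A' ×ˢ B' | M p.1 p.2} : ℝ)

/-- Resampling one coordinate of a uniformly chosen tuple does not change an expectation. The map
`(t, x) ↦ (t with i-th entry x, t i)` is an involution. -/
lemma sum_update {V : Type} (A : Fin 5 → Finset V) (i : Fin 5) (f : (Fin 5 → V) → ℝ) :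
    ∑ t ∈ Fintype.piFinset A, ∑ x ∈ A i, f (Function.update t i x)
      = #(A i) * ∑ t ∈ Fintype.piFinset A, f t := by
  have h : ∑ t ∈ Fintype.piFinset A, ∑ x ∈ A i, f (Function.update t i x)
      = ∑ t ∈ Fintype.piFinset A, ∑ x ∈ A i, f t := by
    rw [← Finset.sum_product', ← Finset.sum_product']
    have hmem : ∀ p ∈ Fintype.piFinset A ×ˢ A i,
        (Function.update p.1 i p.2, p.1 i) ∈ Fintype.piFinset A ×ˢ A i := by
      rintro ⟨t, x⟩ hp
      simp only [Finset.mem_product, Fintype.mem_piFinset] at hp ⊢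
      refine ⟨fun j => ?_, hp.1 i⟩
      by_cases hj : j = i
      · subst hj; simpa using hp.2
      · simpa [hj] using hp.1 j
    refine Finset.sum_nbij' (fun p => (Function.update p.1 i p.2, p.1 i))
      (fun p => (Function.update p.1 i p.2, p.1 i)) hmem hmem ?_ ?_ ?_
    · rintro ⟨t, x⟩ _; simp
    · rintro ⟨t, x⟩ _; simp
    · rintro ⟨t, x⟩ _; simp
  rw [h]
  simp [Finset.mul_sum]

/-- Resampling two coordinates at once, for counts. -/
lemma sum_update_two {V : Type} (A : Fin 5 → Finset V) (i j : Fin 5)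
    (P : (Fin 5 → V) → Prop) :
    ∑ t ∈ Fintype.piFinset A,
        (#{p ∈ A i ×ˢ A j | P (Function.update (Function.update t i p.1) j p.2)} : ℝ)
      = #(A i) * (#(A j) * (#{t ∈ Fintype.piFinset A | P t} : ℝ)) := by
  have h1 : (#{t ∈ Fintype.piFinset A | P t} : ℝ)
      = ∑ t ∈ Fintype.piFinset A, if P t then (1 : ℝ) else 0 := by
    simp
  rw [h1, ← sum_update A j, ← sum_update A i]
  refine Finset.sum_congr rfl fun t _ => ?_
  rw [← Finset.sum_product' (A i) (A j)
    (fun x y => if P (Function.update (Function.update t i x) j y) then (1 : ℝ) else 0)]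
  simp

/-- The counting step. If no constraint of `L` involves both positions `i` and `j`, then for fixed
remaining entries the admissible pairs `(t i, t j)` form a product set, so imposing a further
lower-regular relation on them costs at most a factor `q` and an additive error. -/
lemma tupleCount_cons {V : Type} {A : Fin 5 → Finset V} (hA : ∀ i, (A i).Nonempty)
    {L : List (Constraint V)} {i j : Fin 5} (hij : i ≠ j) {q ε : ℝ} {M : V → V → Prop}
    (hM : LowerRegular q ε (A i) (A j) M)
    (hL : ∀ c ∈ L, (c.1 ≠ i ∧ c.2.1 ≠ i) ∨ (c.1 ≠ j ∧ c.2.1 ≠ j)) :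
    q * tupleCount A L - ε * #(Fintype.piFinset A) ≤ tupleCount A ((i, j, M) :: L) := by
  have hi : (0 : ℝ) < #(A i) := by exact_mod_cast (hA i).card_pos
  have hj : (0 : ℝ) < #(A j) := by exact_mod_cast (hA j).card_pos
  have key : ∀ t : Fin 5 → V,
      q * (#{p ∈ A i ×ˢ A j | Sat L (Function.update (Function.update t i p.1) j p.2)} : ℝ)
        - ε * (#(A i) * #(A j)) ≤
      (#{p ∈ A i ×ˢ A j |
        Sat ((i, j, M) :: L) (Function.update (Function.update t i p.1) j p.2)} : ℝ) := by
    intro t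
    -- `A'` collects the constraints avoiding `j`, and `B'` those avoiding `i`.
    set A' := {x ∈ A i | ∀ c ∈ L, c.1 ≠ j ∧ c.2.1 ≠ j →
      c.2.2 (Function.update t i x c.1) (Function.update t i x c.2.1)} with hA'
    set B' := {y ∈ A j | ∀ c ∈ L, c.1 ≠ i ∧ c.2.1 ≠ i →
      c.2.2 (Function.update t j y c.1) (Function.update t j y c.2.1)} with hB'
    have hprod : {p ∈ A i ×ˢ A j | Sat L (Function.update (Function.update t i p.1) j p.2)}
        = A' ×ˢ B' := by
      ext ⟨x, y⟩
      simp only [hA', hB', Finset.mem_filter, Finset.mem_product]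
      unfold Sat
      constructor
      · rintro ⟨⟨hx, hy⟩, h⟩
        refine ⟨⟨hx, fun c hc hcj => ?_⟩, ⟨hy, fun c hc hci => ?_⟩⟩
        · have := h c hc
          rwa [Function.update_of_ne hcj.1, Function.update_of_ne hcj.2] at this
        · have := h c hc
          rw [Function.update_comm hij] at this
          rwa [Function.update_of_ne hci.1, Function.update_of_ne hci.2] at this
      · rintro ⟨⟨hx, h1⟩, ⟨hy, h2⟩⟩
        refine ⟨⟨hx, hy⟩, fun c hc => ?_⟩
        rcases hL c hc with hci | hcj
        · rw [Function.update_comm hij,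
            Function.update_of_ne hci.1, Function.update_of_ne hci.2]
          exact h2 c hc hci
        · rw [Function.update_of_ne hcj.1, Function.update_of_ne hcj.2]
          exact h1 c hc hcj
    have hprod' : {p ∈ A i ×ˢ A j |
        Sat ((i, j, M) :: L) (Function.update (Function.update t i p.1) j p.2)}
        = {p ∈ A' ×ˢ B' | M p.1 p.2} := by
      rw [← hprod]
      ext ⟨x, y⟩
      simp only [Finset.mem_filter]
      simp only [Sat, List.forall_mem_cons, Function.update_self, Function.update_of_ne hij]
      tauto
    rw [hprod, hprod', Finset.card_product]
    push_cast
    exact hM A' (Finset.filter_subset _ _) B' (Finset.filter_subset _ _)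
  have hsum := Finset.sum_le_sum (s := Fintype.piFinset A) fun t _ => key t
  rw [Finset.sum_sub_distrib, ← Finset.mul_sum, sum_update_two A i j (Sat L),
    sum_update_two A i j (Sat ((i, j, M) :: L)), Finset.sum_const, nsmul_eq_mul] at hsum
  have hpos : (0 : ℝ) < #(A i) * #(A j) := mul_pos hi hj
  refine le_of_mul_le_mul_left ?_ hpos
  unfold tupleCount
  linarith

/-- Pigeonhole: pairs of distinct entries are adjacent or non-adjacent, so one of the two
refinements retains at least half of the tuples. The relation produced records the outcome `b`. -/
lemma exists_half {V : Type} (G : SimpleGraph V) (A : Fin 5 → Finset V)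
    (L : List (Constraint V)) (i j : Fin 5) :
    ∃ b : Prop, (tupleCount A ((i, j, fun x y => x ≠ y) :: L) : ℝ) ≤
      2 * tupleCount A ((i, j, fun x y => x ≠ y ∧ (G.Adj x y ↔ b)) :: L) := by
  have h : tupleCount A ((i, j, fun x y => x ≠ y) :: L) ≤
      tupleCount A ((i, j, fun x y => x ≠ y ∧ (G.Adj x y ↔ True)) :: L) +
      tupleCount A ((i, j, fun x y => x ≠ y ∧ (G.Adj x y ↔ False)) :: L) := by
    unfold tupleCount
    refine le_trans (Finset.card_le_card ?_) (Finset.card_union_le _ _)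
    intro t ht
    simp only [Finset.mem_filter, Finset.mem_union, Sat, List.forall_mem_cons] at ht ⊢
    tauto
  have h' : (tupleCount A ((i, j, fun x y => x ≠ y) :: L) : ℝ) ≤
      tupleCount A ((i, j, fun x y => x ≠ y ∧ (G.Adj x y ↔ True)) :: L) +
      tupleCount A ((i, j, fun x y => x ≠ y ∧ (G.Adj x y ↔ False)) :: L) := by
    exact_mod_cast h
  by_contra! hcon
  linarith [hcon True, hcon False]

/-! ### Regular pairs give lower-regular relations -/

lemma lowerRegular_ne {V : Type} {A : Finset V} {ε : ℝ} (h : 1 ≤ ε * #A) :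
    LowerRegular 1 ε A A fun x y => x ≠ y := by
  intro A' hA' B' _
  have hsplit := Finset.card_filter_add_card_filter_not (s := A' ×ˢ B') (fun p => p.1 ≠ p.2)
  have hle : #{p ∈ A' ×ˢ B' | ¬ p.1 ≠ p.2} ≤ #A := by
    refine Finset.card_le_card_of_injOn Prod.fst ?_ ?_
    · rintro ⟨x, y⟩ hp
      simp only [Finset.coe_filter, Finset.mem_product, Set.mem_ofPred_eq] at hp
      exact hA' hp.1.1
    · rintro ⟨x, y⟩ hp ⟨x', y'⟩ hp' hx
      simp only [Finset.coe_filter, Finset.mem_product, Set.mem_ofPred_eq, not_not] at hp hp' hx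
      rw [Prod.mk.injEq]
      exact ⟨hx, by rw [← hp.2, ← hp'.2, hx]⟩
  rw [Finset.card_product] at hsplit
  have h1 : (#{p ∈ A' ×ˢ B' | p.1 ≠ p.2} : ℝ) + #{p ∈ A' ×ˢ B' | ¬ p.1 ≠ p.2}
      = #A' * #B' := by exact_mod_cast hsplit
  have h2 : (#{p ∈ A' ×ˢ B' | ¬ p.1 ≠ p.2} : ℝ) ≤ #A := by exact_mod_cast hle
  have h3 : (#A : ℝ) ≤ ε * (#A * #A) := by nlinarith [Nat.cast_nonneg (α := ℝ) #A]
  calc 1 * ((#A' : ℝ) * #B') - ε * (#A * #A)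
      ≤ (#{p ∈ A' ×ˢ B' | p.1 ≠ p.2} : ℝ) := by linarith
    _ = _ := by congr

lemma dens_nonneg {V : Type} (G : SimpleGraph V) (A B : Finset V) : 0 ≤ dens G A B := by
  unfold _root_.dens; positivity

lemma dens_mul {V : Type} (G : SimpleGraph V) (A B : Finset V) :
    dens G A B * (#A * #B) = (#{p ∈ A ×ˢ B | G.Adj p.1 p.2} : ℝ) := by
  unfold _root_.dens
  rcases eq_or_ne ((#A : ℝ) * #B) 0 with h | h
  · rw [h, mul_zero]
    have h0 : #(A ×ˢ B) = 0 := by rw [Finset.card_product]; exact_mod_cast h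
    have : #{p ∈ A ×ˢ B | G.Adj p.1 p.2} = 0 :=
      Nat.le_zero.mp (h0 ▸ Finset.card_filter_le _ _)
    simp [this]
  · exact div_mul_cancel₀ _ h

/-- In a regular pair edge counts are accurate for all subpairs, the small ones included, when the
error is measured against the whole pair. -/
lemma EpsRegular.abs_sub_le {V : Type} {G : SimpleGraph V} {ε : ℝ} {A B : Finset V}
    (hε : 0 < ε) (h : EpsRegular G ε A B) (h1 : dens G A B ≤ 1)
    {A' B' : Finset V} (hA : A' ⊆ A) (hB : B' ⊆ B) :
    |dens G A B * (#A' * #B') - (#{p ∈ A' ×ˢ B' | G.Adj p.1 p.2} : ℝ)| ≤ ε * (#A * #B) := by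
  have hA' : (#A' : ℝ) ≤ #A := by exact_mod_cast Finset.card_le_card hA
  have hB' : (#B' : ℝ) ≤ #B := by exact_mod_cast Finset.card_le_card hB
  have a0 : (0 : ℝ) ≤ #A' := Nat.cast_nonneg _
  have b0 : (0 : ℝ) ≤ #B' := Nat.cast_nonneg _
  by_cases hlarge : ε * #A ≤ #A' ∧ ε * #B ≤ #B'
  · have := h A' hA B' hB hlarge.1 hlarge.2
    rw [← dens_mul, ← sub_mul, abs_mul, abs_of_nonneg (mul_nonneg a0 b0)]
    exact mul_le_mul this (mul_le_mul hA' hB' b0 (a0.trans hA')) (by positivity) hε.le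
  · have hsmall : (#A' * #B' : ℝ) ≤ ε * (#A * #B) := by
      rw [not_and_or] at hlarge
      rcases hlarge with hl | hl
      · nlinarith
      · nlinarith
    have hcard : (#{p ∈ A' ×ˢ B' | G.Adj p.1 p.2} : ℝ) ≤ #A' * #B' := by
      have := Finset.card_filter_le (A' ×ˢ B') (fun p => G.Adj p.1 p.2)
      rw [Finset.card_product] at this
      exact_mod_cast this
    have h0 : (0 : ℝ) ≤ #{p ∈ A' ×ˢ B' | G.Adj p.1 p.2} := Nat.cast_nonneg _
    have hd := dens_nonneg G A B
    have hab : (0 : ℝ) ≤ #A' * #B' := mul_nonneg a0 b0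
    rw [abs_le]
    constructor <;> nlinarith

/-- In a grey regular pair both adjacency and non-adjacency are lower-regular with density `d`. -/
lemma EpsRegular.lowerRegular {V : Type} {G : SimpleGraph V} {ε d : ℝ} {A B : Finset V}
    (hε : 0 < ε) (hd : 0 < d) (h : EpsRegular G ε A B) (h1 : d ≤ dens G A B)
    (h2 : dens G A B ≤ 1 - d) (b : Prop) :
    LowerRegular d ε A B fun x y => (G.Adj x y ↔ b) := by
  intro A' hA B' hB
  have habs := abs_le.mp (h.abs_sub_le hε (by linarith) hA hB)
  have hab : (0 : ℝ) ≤ #A' * #B' := by positivity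
  by_cases hb : b
  · simp only [hb, iff_true]
    nlinarith
  · simp only [hb, iff_false]
    have hsplit := Finset.card_filter_add_card_filter_not (s := A' ×ˢ B')
      (fun p => G.Adj p.1 p.2)
    rw [Finset.card_product] at hsplit
    have h3 : (#{p ∈ A' ×ˢ B' | G.Adj p.1 p.2} : ℝ) + #{p ∈ A' ×ˢ B' | ¬ G.Adj p.1 p.2}
        = #A' * #B' := by exact_mod_cast hsplit
    nlinarith

/-- Clusters forming a grey regular pair are large: otherwise single vertices would be subsets
large enough to be tested, and the density would be close to `0` or `1`. -/
lemma EpsRegular.one_le_mul_card {V : Type} {G : SimpleGraph V} {ε d : ℝ} {A B : Finset V}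
    (hεd : ε < d) (h : EpsRegular G ε A B) (h1 : d ≤ dens G A B)
    (h2 : dens G A B ≤ 1 - d) (hA : A.Nonempty) (hcard : #A = #B) : 1 ≤ ε * #A := by
  by_contra! hlt
  have hB : B.Nonempty := Finset.card_pos.mp (hcard ▸ hA.card_pos)
  obtain ⟨x, hx⟩ := hA
  obtain ⟨y, hy⟩ := hB
  have hxy := abs_le.mp (h {x} (by simpa using hx) {y} (by simpa using hy)
    (by simpa using hlt.le) (by rw [← hcard]; simpa using hlt.le))
  have h01 : dens G {x} {y} = 0 ∨ dens G {x} {y} = 1 := by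
    unfold _root_.dens
    by_cases hadj : G.Adj x y
    · right; simp [Finset.filter_singleton, hadj]
    · left; simp [Finset.filter_singleton, hadj]
  rcases h01 with h0 | h0 <;> rw [h0] at hxy <;> linarith

/-! ### Finding the five-cycle -/

/-- Whatever adjacencies are prescribed inside the pairs at positions `{0, 1}` and `{2, 3}`, the
five-cycle can be laid out on the positions accordingly. -/
lemma exists_layout (b c : Prop) : ∃ π : Equiv.Perm (Fin 5),
    ((cycleGraph 5).Adj (π 0) (π 1) ↔ b) ∧ ((cycleGraph 5).Adj (π 2) (π 3) ↔ c) := by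
  have key : ∀ b c : Bool, ∃ π : Equiv.Perm (Fin 5),
      (decide (π 0 - π 1 = 1 ∨ π 1 - π 0 = 1) = b) ∧
      (decide (π 2 - π 3 = 1 ∨ π 3 - π 2 = 1) = c) := by
    decide
  obtain ⟨π, h1, h2⟩ := key (decide b) (decide c)
  refine ⟨π, ?_, ?_⟩
  · rw [cycleGraph_adj]; exact decide_eq_decide.mp h1
  · rw [cycleGraph_adj]; exact decide_eq_decide.mp h2

/-- The arithmetic of one counting step: a factor `d` and a loss of `e`. -/
lemma count_step {d m e : ℝ} (hd : 0 < d) (hd2 : d ≤ 1 / 2) (he : 0 ≤ e) (s : ℕ) {a a' : ℝ}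
    (h : d ^ s * (m / 8) - s * e ≤ a) (h' : d * a - e ≤ a') :
    d ^ (s + 1) * (m / 8) - (s + 1 : ℕ) * e ≤ a' := by
  have h1 := mul_le_mul_of_nonneg_left h hd.le
  have h2 : d * (s * e) ≤ 1 * (s * e) :=
    mul_le_mul_of_nonneg_right (by linarith) (by positivity)
  push_cast
  rw [pow_succ]
  linarith

/-- Three grey regular pairs of clusters of equal size span an induced five-cycle, irrespective of
the edges inside the clusters. -/
lemma hasInducedC5_of_grey {V : Type} {G : SimpleGraph V} {ε d : ℝ} (hε : 0 < ε) (hd : 0 < d)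
    (hεd : ε ≤ d ^ 8 / 100) {X Y Z : Finset V} (hX : X.Nonempty)
    (hcXY : #X = #Y) (hcYZ : #Y = #Z)
    (dXY : Disjoint X Y) (dYZ : Disjoint Y Z) (dXZ : Disjoint X Z)
    (rXY : EpsRegular G ε X Y) (rYZ : EpsRegular G ε Y Z) (rXZ : EpsRegular G ε X Z)
    (gXY : d ≤ dens G X Y ∧ dens G X Y ≤ 1 - d) (gYZ : d ≤ dens G Y Z ∧ dens G Y Z ≤ 1 - d)
    (gXZ : d ≤ dens G X Z ∧ dens G X Z ≤ 1 - d) : HasInducedC5 G := by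
  have hd2 : d ≤ 1 / 2 := by linarith [gXY.1, gXY.2]
  have hd7 : d ^ 7 ≤ 1 := pow_le_one₀ hd.le (by linarith)
  have hd8 : d ^ 8 ≤ d := by
    calc d ^ 8 = d ^ 7 * d := by ring
      _ ≤ d := by nlinarith
  have hY : Y.Nonempty := Finset.card_pos.mp (hcXY ▸ hX.card_pos)
  have hZ : Z.Nonempty := Finset.card_pos.mp (hcYZ ▸ hY.card_pos)
  have sX : 1 ≤ ε * #X := rXY.one_le_mul_card (by linarith) gXY.1 gXY.2 hX hcXY
  have sY : 1 ≤ ε * #Y := hcXY ▸ sX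
  set A : Fin 5 → Finset V := ![X, X, Y, Y, Z] with hAdef
  have hA : ∀ i, (A i).Nonempty := by
    intro i; fin_cases i <;> simpa [hAdef]
  set m : ℝ := (#(Fintype.piFinset A) : ℝ) with hm
  have hmpos : 0 < m := by
    have : (Fintype.piFinset A).Nonempty := Fintype.piFinset_nonempty.mpr hA
    exact Nat.cast_pos.mpr this.card_pos
  have n0 : (tupleCount A [] : ℝ) = m := by simp [tupleCount, Sat, hm]
  -- The two pairs inside `X` and `Y`: distinctness, then the more frequent adjacency.
  have n1 := tupleCount_cons (L := []) hA (i := 0) (j := 1) (by decide)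
    (lowerRegular_ne (A := X) sX) (by simp)
  obtain ⟨b, hb⟩ := exists_half G A [] 0 1
  set M1 : V → V → Prop := fun x y => x ≠ y ∧ (G.Adj x y ↔ b) with hM1
  have n2 := tupleCount_cons (L := [(0, 1, M1)]) hA (i := 2) (j := 3) (by decide)
    (lowerRegular_ne (A := Y) sY) (by simp)
  obtain ⟨c, hc⟩ := exists_half G A [(0, 1, M1)] 2 3
  set M2 : V → V → Prop := fun x y => x ≠ y ∧ (G.Adj x y ↔ c) with hM2
  obtain ⟨π, hπ1, hπ2⟩ := exists_layout b c
  -- The eight pairs of positions in different clusters.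
  set M : Fin 5 → Fin 5 → V → V → Prop :=
    fun i j x y => (G.Adj x y ↔ (cycleGraph 5).Adj (π i) (π j)) with hM
  set L0 : List (Constraint V) := [(2, 3, M2), (0, 1, M1)] with hL0
  have rXY' := fun e => rXY.lowerRegular hε hd gXY.1 gXY.2 e
  have rYZ' := fun e => rYZ.lowerRegular hε hd gYZ.1 gYZ.2 e
  have rXZ' := fun e => rXZ.lowerRegular hε hd gXZ.1 gXZ.2 e
  have k1 := tupleCount_cons (L := L0) hA (i := 0) (j := 2) (M := M 0 2) (by decide)
    (rXY' _) (by simp [hL0])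
  set L1 := (0, 2, M 0 2) :: L0 with hL1
  have k2 := tupleCount_cons (L := L1) hA (i := 0) (j := 3) (M := M 0 3) (by decide)
    (rXY' _) (by simp [hL0, hL1])
  set L2 := (0, 3, M 0 3) :: L1 with hL2
  have k3 := tupleCount_cons (L := L2) hA (i := 1) (j := 2) (M := M 1 2) (by decide)
    (rXY' _) (by simp [hL0, hL1, hL2])
  set L3 := (1, 2, M 1 2) :: L2 with hL3
  have k4 := tupleCount_cons (L := L3) hA (i := 1) (j := 3) (M := M 1 3) (by decide)
    (rXY' _) (by simp [hL0, hL1, hL2, hL3])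
  set L4 := (1, 3, M 1 3) :: L3 with hL4
  have k5 := tupleCount_cons (L := L4) hA (i := 0) (j := 4) (M := M 0 4) (by decide)
    (rXZ' _) (by simp [hL0, hL1, hL2, hL3, hL4])
  set L5 := (0, 4, M 0 4) :: L4 with hL5
  have k6 := tupleCount_cons (L := L5) hA (i := 1) (j := 4) (M := M 1 4) (by decide)
    (rXZ' _) (by simp [hL0, hL1, hL2, hL3, hL4, hL5])
  set L6 := (1, 4, M 1 4) :: L5 with hL6
  have k7 := tupleCount_cons (L := L6) hA (i := 2) (j := 4) (M := M 2 4) (by decide)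
    (rYZ' _) (by simp [hL0, hL1, hL2, hL3, hL4, hL5, hL6])
  set L7 := (2, 4, M 2 4) :: L6 with hL7
  have k8 := tupleCount_cons (L := L7) hA (i := 3) (j := 4) (M := M 3 4) (by decide)
    (rYZ' _) (by simp [hL0, hL1, hL2, hL3, hL4, hL5, hL6, hL7])
  set L8 := (3, 4, M 3 4) :: L7 with hL8
  rw [← hm] at n1 n2 k1 k2 k3 k4 k5 k6 k7 k8
  have hem : 0 < ε * m := mul_pos hε hmpos
  have hem' : ε * m ≤ d ^ 8 * m / 100 := by
    calc ε * m ≤ d ^ 8 / 100 * m := mul_le_mul_of_nonneg_right hεd hmpos.le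
      _ = d ^ 8 * m / 100 := by ring
  have hdm : d ^ 8 * m ≤ 1 * m := mul_le_mul_of_nonneg_right (by linarith) hmpos.le
  have base : m / 8 ≤ tupleCount A L0 := by linarith
  have f1 := count_step hd hd2 hem.le 0 (by simpa using base) k1
  have f2 := count_step hd hd2 hem.le 1 f1 k2
  have f3 := count_step hd hd2 hem.le 2 f2 k3
  have f4 := count_step hd hd2 hem.le 3 f3 k4
  have f5 := count_step hd hd2 hem.le 4 f4 k5
  have f6 := count_step hd hd2 hem.le 5 f5 k6
  have f7 := count_step hd hd2 hem.le 6 f6 k7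
  have f8 := count_step hd hd2 hem.le 7 f7 k8
  have hpos : (0 : ℝ) < tupleCount A L8 := by
    refine lt_of_lt_of_le ?_ f8
    have h8 : 0 < d ^ 8 * m := by positivity
    norm_num
    linarith
  have hpos' : 0 < #{t ∈ Fintype.piFinset A | Sat L8 t} := by exact_mod_cast hpos
  obtain ⟨t, ht⟩ := Finset.card_pos.mp hpos'
  rw [Finset.mem_filter, Fintype.mem_piFinset] at ht
  obtain ⟨htA, hsat⟩ := ht
  simp only [Sat, hL8, hL7, hL6, hL5, hL4, hL3, hL2, hL1, hL0, List.forall_mem_cons, hM, hM1,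
    hM2, ← hπ1, ← hπ2] at hsat
  obtain ⟨s34, s24, s14, s04, s13, s12, s03, s02, ⟨ne23, s23⟩, ⟨ne01, s01⟩, -⟩ := hsat
  have m0 : t 0 ∈ X := htA 0
  have m1 : t 1 ∈ X := htA 1
  have m2 : t 2 ∈ Y := htA 2
  have m3 : t 3 ∈ Y := htA 3
  have m4 : t 4 ∈ Z := htA 4
  have hlt : ∀ i j : Fin 5, i < j →
      t i ≠ t j ∧ (G.Adj (t i) (t j) ↔ (cycleGraph 5).Adj (π i) (π j)) := by
    have eXY := fun {x y} (hx : x ∈ X) (hy : y ∈ Y) => Finset.disjoint_iff_ne.mp dXY x hx y hy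
    have eYZ := fun {x y} (hx : x ∈ Y) (hy : y ∈ Z) => Finset.disjoint_iff_ne.mp dYZ x hx y hy
    have eXZ := fun {x y} (hx : x ∈ X) (hy : y ∈ Z) => Finset.disjoint_iff_ne.mp dXZ x hx y hy
    intro i j hij
    fin_cases i <;> fin_cases j <;> first
      | exact absurd hij (by decide)
      | exact ⟨ne01, s01⟩
      | exact ⟨ne23, s23⟩
      | exact ⟨eXY m0 m2, s02⟩
      | exact ⟨eXY m0 m3, s03⟩
      | exact ⟨eXY m1 m2, s12⟩
      | exact ⟨eXY m1 m3, s13⟩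
      | exact ⟨eXZ m0 m4, s04⟩
      | exact ⟨eXZ m1 m4, s14⟩
      | exact ⟨eYZ m2 m4, s24⟩
      | exact ⟨eYZ m3 m4, s34⟩
  have hinj : Function.Injective t := by
    intro i j hij
    rcases lt_trichotomy i j with h | h | h
    · exact absurd hij (hlt i j h).1
    · exact h
    · exact absurd hij.symm (hlt j i h).1
  have hadj : ∀ i j, G.Adj (t i) (t j) ↔ (cycleGraph 5).Adj (π i) (π j) := by
    intro i j
    rcases lt_trichotomy i j with h | h | h
    · exact (hlt i j h).2
    · subst h; simp
    · rw [G.adj_comm, (cycleGraph 5).adj_comm]; exact (hlt j i h).2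
  exact ⟨⟨⟨fun v => t (π.symm v), hinj.comp π.symm.injective⟩, by
    intro u v
    simpa using hadj (π.symm u) (π.symm v)⟩⟩

/-- For every integer `k' ≥ 5` and every `d > 0` there exist `ε₀, ε'₀ > 0` such that for all
`0 < ε ≤ ε₀` and `0 < ε' ≤ ε'₀`: if a graph `G` has an `(ε,ε',d,k')`-type `R` containing three
grey edges forming a triangle, then `G` contains an induced cycle of length 5. -/
theorem stmt11 (k' : ℕ) (hk' : 5 ≤ k') (d : ℝ) (hd : 0 < d) :
    ∃ ε₀ ε'₀ : ℝ, 0 < ε₀ ∧ 0 < ε'₀ ∧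
      ∀ ε ε' : ℝ, 0 < ε → ε ≤ ε₀ → 0 < ε' → ε' ≤ ε'₀ →
      ∀ (n : ℕ) (G : SimpleGraph (Fin n)) (k : ℕ) (R : ColouredGraph k),
        HasType G ε ε' d k' R → R.HasGreyTriangle → HasInducedC5 G := by
  refine ⟨d ^ 8 / 100, 1, by positivity, one_pos, ?_⟩
  rintro ε ε' hε hεd - - n G k R ⟨μ, -, V0, W, hdisj, -, -, -, hcard, hreg, -, hcol, -⟩
    ⟨i, j, l, aij, ajl, ail, cij, cjl, cil⟩
  have grey : ∀ {a b}, R.graph.Adj a b → R.ecol a b = 1 / 2 →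
      d ≤ dens G (W a) (W b) ∧ dens G (W a) (W b) ≤ 1 - d := by
    intro a b hab hc
    obtain ⟨h0, h1, -⟩ := hcol a b hab
    constructor
    · by_contra! h
      have := h0 h
      norm_num [hc] at this
    · by_contra! h
      have := h1 h
      norm_num [hc] at this
  have hne : (W i).Nonempty := by
    rw [Finset.nonempty_iff_ne_empty]
    intro he
    have := (grey aij cij).1
    -- The density of an empty pair is `0 / 0 = 0`, which is below `d`.
    simp only [_root_.dens, he, Finset.card_empty, Nat.cast_zero, zero_mul, div_zero] at this
    linarith
  exact hasInducedC5_of_grey hε hd hεd hne (hcard i j) (hcard j l)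
    (hdisj i j aij.ne) (hdisj j l ajl.ne) (hdisj i l ail.ne)
    ((hreg i j aij.ne).mp aij) ((hreg j l ajl.ne).mp ajl) ((hreg i l ail.ne).mp ail)
    (grey aij cij) (grey ajl cjl) (grey ail cil)
end
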